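/- Let q be a prime power, let G = SL(2, 𝔽_q) be the special linear group of degree 2 over the field with q elements, let p be any prime, and let P be a Sylow p-subgroup of G. Then for every irreducible complex character χ of G, the restriction χ_P is a sum of characters of the form λ^P induced from irreducible characters λ of subgroups Q ≤ P with χ(1)_p = |P : Q|. -/

import Mathlib

open scoped Classical

/-- The induced character (as a class function formula): for `f` a function on a
subgroup `H` of a finite group `G`, `inducedChar H f g = (1/|H|) ∑_{x ∈ G, xgx⁻¹ ∈ H} f (xgx⁻¹)`. -/
noncomputable def inducedChar {G : Type*} [Group G] [Fintype G] (H : Subgroup G)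
    (f : H → ℂ) : G → ℂ :=
  fun g => (Fintype.card H : ℂ)⁻¹ *
    ∑ x : G, if h : x * g * x⁻¹ ∈ H then f ⟨x * g * x⁻¹, h⟩ else 0

/-- `χ` is the character of an irreducible complex representation of `G`. -/
def IsIrreducibleCharacter {G : Type} [Group G] (χ : G → ℂ) : Prop :=
  ∃ V : FDRep ℂ G, CategoryTheory.Simple V ∧ χ = FDRep.character V

/-- The restriction of `χ` (a character of degree `d` of the ambient group `G`) to the
subgroup `P` is a sum of characters `λ^P` induced from irreducible characters `λ` of
subgroups `Q ≤ P` satisfying `d_p = |P : Q|` (the `p`-part of the degree equals the index). -/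
def SumInducedProperty (p : ℕ) {G : Type} [Group G] [Fintype G] (P : Subgroup G)
    (χ : G → ℂ) (d : ℕ) : Prop :=
  ∃ (n : ℕ) (Q : Fin n → Subgroup ↥P) (lam : (i : Fin n) → ↥(Q i) → ℂ),
    (∀ i, IsIrreducibleCharacter (lam i)) ∧
    (∀ i, p ^ (d.factorization p) = (Q i).index) ∧
    (∀ x : ↥P, χ ↑x = ∑ i, inducedChar (Q i) (lam i) x)



/-- every representation of a finite group decomposes: characters are sums of irreducible ones -/
theorem rep_char_decomp {H : Type} [Group H] [Finite H] :
    ∀ (n : ℕ) (V : Type) [AddCommGroup V] [Module ℂ V] [FiniteDimensional ℂ V]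
      (ρ : Representation ℂ H V), Module.finrank ℂ V = n →
      ∃ l : List (H → ℂ), (∀ f ∈ l, IsIrreducibleCharacter f) ∧
        ∀ h, ρ.character h = (l.map (fun f => f h)).sum := by
  intro n
  induction n using Nat.strong_induction_on with
  | _ n ih =>
    intro V _ _ _ ρ hn
    have := Fintype.ofFinite H
    by_cases h0 : Subsingleton V
    · refine ⟨[], by simp, fun h => ?_⟩
      have : ρ h = 0 := Subsingleton.elim _ _
      simp [Representation.character, this]
    have hnt : Nontrivial V := not_subsingleton_iff_nontrivial.1 h0
    by_cases hirr : ρ.IsIrreducible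
    · refine ⟨[ρ.character], ?_, by simp⟩
      intro f hf
      rw [List.mem_singleton] at hf
      subst hf
      refine ⟨FDRep.of ρ, ?_, rfl⟩
      rw [FDRep.simple_iff_char_is_norm_one]
      have hne : (Nat.card H : ℂ) ≠ 0 := Nat.cast_ne_zero.2 Nat.card_pos.ne'
      have := invertibleOfNonzero hne
      have h1 := Representation.char_orthonormal ρ ρ
      rw [if_pos ⟨Representation.Equiv.refl ρ⟩, inv_mul_eq_iff_eq_mul₀ hne] at h1
      rw [mul_one] at h1
      rw [← h1]
      rfl
    · obtain ⟨W, hW0, hW1⟩ : ∃ W : Subrepresentation ρ, W ≠ ⊥ ∧ W ≠ ⊤ := by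
        by_contra hcon
        push Not at hcon
        apply hirr
        have : Nontrivial (Subrepresentation ρ) := by
          refine ⟨⊥, ⊤, fun h => ?_⟩
          have := congrArg Subrepresentation.toSubmodule h
          exact bot_ne_top (α := Submodule ℂ V) this
        refine { eq_bot_or_eq_top := fun W => ?_ }
        by_cases h : W = ⊥
        · exact Or.inl h
        · exact Or.inr (hcon W h)
      have hne : NeZero (Nat.card H : ℂ) := ⟨Nat.cast_ne_zero.2 Nat.card_pos.ne'⟩
      obtain ⟨W', hc⟩ := exists_isCompl W
      have hc' : IsCompl W.toSubmodule W'.toSubmodule := by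
        constructor
        · rw [disjoint_iff]
          exact congrArg Subrepresentation.toSubmodule (disjoint_iff.1 hc.1)
        · rw [codisjoint_iff]
          exact congrArg Subrepresentation.toSubmodule (codisjoint_iff.1 hc.2)
      have hfin := Submodule.finrank_add_eq_of_isCompl hc'
      have hWb : W.toSubmodule ≠ ⊥ := fun h => hW0 (Subrepresentation.toSubmodule_injective h)
      have hWt : W.toSubmodule ≠ ⊤ := fun h => hW1 (Subrepresentation.toSubmodule_injective h)
      have hlt := Submodule.finrank_lt hWt
      have hpos : 0 < Module.finrank ℂ W.toSubmodule := by
        rw [Module.finrank_pos_iff]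
        exact Submodule.nontrivial_iff_ne_bot.2 hWb
      obtain ⟨l1, h1, h1'⟩ := ih _ (by omega) W.toSubmodule W.toRepresentation rfl
      obtain ⟨l2, h2, h2'⟩ := ih _ (by omega) W'.toSubmodule W'.toRepresentation rfl
      refine ⟨l1 ++ l2, ?_, fun h => ?_⟩
      · intro f hf
        rcases List.mem_append.1 hf with hf | hf
        · exact h1 f hf
        · exact h2 f hf
      · rw [List.map_append, List.sum_append, ← h1', ← h2']
        have hint : DirectSum.IsInternal (fun b : Bool => bif b then W.toSubmodule else W'.toSubmodule) := by
          rw [DirectSum.isInternal_submodule_iff_isCompl (i := true) (j := false)]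
          · exact hc'
          · simp
          · ext b; cases b <;> simp
        have hm : ∀ b : Bool, Set.MapsTo (ρ h) (bif b then W.toSubmodule else W'.toSubmodule : Submodule ℂ V) (bif b then W.toSubmodule else W'.toSubmodule : Submodule ℂ V) := by
          intro b; cases b
          · exact fun v hv => W'.apply_mem_toSubmodule h hv
          · exact fun v hv => W.apply_mem_toSubmodule h hv
        have := LinearMap.trace_eq_sum_trace_restrict hint hm
        rw [Fintype.sum_bool] at this
        exact this

theorem linear_isIrreducibleCharacter {H : Type} [Group H] [Finite H] (l : H →* ℂ) :
    IsIrreducibleCharacter (fun h => l h) := by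
  have := Fintype.ofFinite H
  let ρ : Representation ℂ H ℂ := 
    ((Algebra.lmul ℂ ℂ : ℂ →ₐ[ℂ] Module.End ℂ ℂ) : ℂ →* Module.End ℂ ℂ).comp l
  have hchar : ∀ h, (FDRep.of ρ).character h = l h := by
    intro h
    change LinearMap.trace ℂ ℂ (LinearMap.mulLeft ℂ (l h)) = _
    have : LinearMap.mulLeft ℂ (l h) = (l h) • LinearMap.id := by ext; simp
    rw [this, map_smul, LinearMap.trace_id]; simp
  refine ⟨FDRep.of ρ, ?_, funext fun h => (hchar h).symm⟩
  rw [FDRep.simple_iff_char_is_norm_one]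
  simp_rw [hchar, ← map_mul, mul_inv_cancel, map_one]
  simp

theorem schur_scalar {G : Type} [Group G] (V : FDRep ℂ G) (hV : CategoryTheory.Simple V)
    (A : Module.End ℂ V) (hA : ∀ g, V.ρ g * A = A * V.ρ g) : ∃ c : ℂ, A = c • 1 := by
  let f : V ⟶ V := ⟨CategoryTheory.InducedCategory.homMk (ModuleCat.ofHom A), fun g => by
    ext v
    exact (LinearMap.congr_fun (hA g) v).symm⟩
  have h1 := CategoryTheory.finrank_endomorphism_simple_eq_one ℂ V
  obtain ⟨c, hc⟩ := (finrank_eq_one_iff_of_nonzero' (CategoryTheory.CategoryStruct.id V)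
    (CategoryTheory.id_nonzero V)).1 h1 f
  refine ⟨c, ?_⟩
  have h2 := congrArg (fun f : V ⟶ V => f.hom.hom.hom) hc
  exact h2.symm

/-- invariant submodules of a simple FDRep -/
theorem simple_invariant {G : Type} [Group G] [Finite G] (V : FDRep ℂ G) (hV : CategoryTheory.Simple V)
    (W : Submodule ℂ V) (hW : ∀ g, ∀ v ∈ W, V.ρ g v ∈ W) (hne : W ≠ ⊥) : W = ⊤ := by
  have := Fintype.ofFinite G
  have hne' : NeZero (Nat.card G : ℂ) := ⟨Nat.cast_ne_zero.2 Nat.card_pos.ne'⟩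
  let W1 : Subrepresentation (V.ρ : Representation ℂ G V) := ⟨W, fun g v hv => hW g v hv⟩
  obtain ⟨W', hc⟩ := exists_isCompl W1
  have hc' : IsCompl W W'.toSubmodule := by
    constructor
    · rw [disjoint_iff]
      exact congrArg Subrepresentation.toSubmodule (disjoint_iff.1 hc.1)
    · rw [codisjoint_iff]
      exact congrArg Subrepresentation.toSubmodule (codisjoint_iff.1 hc.2)
  obtain ⟨c, hc⟩ := schur_scalar V hV (W.projection _ hc') (by
    intro g
    ext v
    obtain ⟨a, b, ha, hb, rfl⟩ : ∃ a b, a ∈ W ∧ b ∈ W'.toSubmodule ∧ a + b = v := by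
      have : v ∈ W ⊔ W'.toSubmodule := by rw [hc'.sup_eq_top]; trivial
      obtain ⟨a, ha, b, hb, h⟩ := Submodule.mem_sup.1 this
      exact ⟨a, b, ha, hb, h⟩
    have h1 := W'.apply_mem_toSubmodule g hb
    have h2 := hW g a ha
    have e1 : W.projection _ hc' a = a := Submodule.projection_apply_left hc' ⟨a, ha⟩
    have e2 : W.projection _ hc' (V.ρ g a) = V.ρ g a := Submodule.projection_apply_left hc' ⟨_, h2⟩
    have e3 : W.projection _ hc' b = 0 := (Submodule.projection_apply_eq_zero_iff hc').2 hb
    have e4 : W.projection _ hc' (V.ρ g b) = 0 := (Submodule.projection_apply_eq_zero_iff hc').2 h1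
    simp only [Module.End.mul_apply, map_add, e1, e2, e3, e4, map_zero])
  obtain ⟨v, hv, hv0⟩ := Submodule.exists_mem_ne_zero_of_ne_bot hne
  have e1 : W.projection _ hc' v = v := Submodule.projection_apply_left hc' ⟨v, hv⟩
  have hc0 : c ≠ 0 := by
    rintro rfl
    rw [hc] at e1
    simp at e1
    exact hv0 e1.symm
  rw [eq_top_iff]
  intro x _
  have h3 : W.projection _ hc' (c⁻¹ • x) ∈ W := Submodule.projection_apply_mem hc' _
  rw [hc] at h3
  simpa [hc0] using h3

/-- averaging projection onto the isotypic component of a linear character -/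
noncomputable def projOp {H : Type} [Group H] [Fintype H] {V : Type} [AddCommGroup V] [Module ℂ V]
    (ρ : H →* Module.End ℂ V) (l : H →* ℂ) : Module.End ℂ V :=
  (Fintype.card H : ℂ)⁻¹ • ∑ h, l h⁻¹ • ρ h

section
variable {H : Type} [Group H] [Fintype H] {V : Type} [AddCommGroup V] [Module ℂ V]
    (ρ : H →* Module.End ℂ V) (l : H →* ℂ)

theorem proj_left (h : H) : ρ h * projOp ρ l = l h • projOp ρ l := by
  unfold projOp
  rw [mul_smul_comm, smul_comm]
  congr 1
  rw [Finset.mul_sum, Finset.smul_sum]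
  refine Fintype.sum_equiv (Equiv.mulLeft h) _ _ fun x => ?_
  simp only [Equiv.coe_mulLeft, mul_inv_rev, map_mul, mul_smul_comm, smul_smul]
  rw [mul_comm (l x⁻¹), ← mul_assoc, ← map_mul l h h⁻¹]
  simp

theorem proj_right (h : H) : projOp ρ l * ρ h = l h • projOp ρ l := by
  unfold projOp
  rw [smul_mul_assoc, smul_comm]
  congr 1
  rw [Finset.sum_mul, Finset.smul_sum]
  refine Fintype.sum_equiv (Equiv.mulRight h) _ _ fun x => ?_
  simp only [Equiv.coe_mulRight, mul_inv_rev, map_mul, smul_mul_assoc, smul_smul]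
  rw [← mul_assoc, ← map_mul l h h⁻¹]
  simp

theorem proj_idem : projOp ρ l * projOp ρ l = projOp ρ l := by
  conv_lhs => enter [1]; rw [projOp]
  rw [smul_mul_assoc, Finset.sum_mul]
  simp only [smul_mul_assoc, proj_left, smul_smul, ← map_mul]
  simp [← Nat.cast_smul_eq_nsmul ℂ, smul_smul]

theorem proj_trace [FiniteDimensional ℂ V] :
    LinearMap.trace ℂ V (projOp ρ l) = (Module.finrank ℂ (LinearMap.range (projOp ρ l)) : ℂ) :=
  (LinearMap.IsIdempotentElem.isProj_range (projOp ρ l) (proj_idem ρ l)).trace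

theorem proj_trace' : LinearMap.trace ℂ V (projOp ρ l) =
    (Fintype.card H : ℂ)⁻¹ * ∑ h, l h⁻¹ * LinearMap.trace ℂ V (ρ h) := by
  simp [projOp, map_sum]
end

/-- Multiplicity of a linear character is a natural number. -/
theorem mult_nat {G : Type} [Group G] (V : FDRep ℂ G) {H : Type} [Group H] [Fintype H]
    (φ : H →* G) (l : H →* ℂ) :
    ∃ n : ℕ, (Fintype.card H : ℂ)⁻¹ * ∑ h, l h⁻¹ * V.character (φ h) = n :=
  ⟨_, (proj_trace' (V.ρ.comp φ) l).symm.trans (proj_trace _ _)⟩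


section FA
variable {A : Type} [AddCommGroup A] [Fintype A]

theorem conj_addChar (ψ : AddChar A ℂ) (a : A) : (starRingEnd ℂ) (ψ a) = ψ (-a) :=
  (AddChar.map_neg_eq_conj ψ a).symm

theorem fourier_inv (h : A → ℂ) (a : A) :
    h a = ∑ ψ : AddChar A ℂ, ((Fintype.card A : ℂ)⁻¹ * ∑ b, ψ (-b) * h b) * ψ a := by
  have hA : (Fintype.card A : ℂ) ≠ 0 := Nat.cast_ne_zero.2 Fintype.card_ne_zero
  have h1 : ∀ ψ : AddChar A ℂ, ((Fintype.card A : ℂ)⁻¹ * ∑ b, ψ (-b) * h b) * ψ a =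
      ∑ b, (Fintype.card A : ℂ)⁻¹ * h b * ψ (a - b) := by
    intro ψ
    rw [Finset.mul_sum, Finset.sum_mul]
    refine Finset.sum_congr rfl fun b _ => ?_
    rw [sub_eq_add_neg, AddChar.map_add_eq_mul]; ring
  simp_rw [h1]
  rw [Finset.sum_comm]
  simp_rw [← Finset.mul_sum, AddChar.sum_apply_eq_ite, sub_eq_zero]
  simp
  field_simp

theorem fourier_parseval (n : AddChar A ℂ → ℂ) (h : A → ℂ) (hh : ∀ a, h a = ∑ ψ, n ψ * ψ a) :
    ∑ a, Complex.normSq (h a) = Fintype.card A * ∑ ψ, Complex.normSq (n ψ) := by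
  apply Complex.ofReal_injective
  push_cast
  simp_rw [Complex.normSq_eq_conj_mul_self]
  have h1 : ∀ a, (starRingEnd ℂ) (h a) * h a =
      ∑ ψ, ∑ ψ', (starRingEnd ℂ) (n ψ) * n ψ' * (ψ' - ψ) a := by
    intro a
    rw [hh, map_sum, Finset.sum_mul]
    refine Finset.sum_congr rfl fun ψ _ => ?_
    rw [Finset.mul_sum]
    refine Finset.sum_congr rfl fun ψ' _ => ?_
    rw [map_mul, conj_addChar, AddChar.sub_apply, AddChar.map_neg_eq_inv]; ring
  simp_rw [h1]
  rw [Finset.sum_comm, Finset.mul_sum]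
  refine Finset.sum_congr rfl fun ψ _ => ?_
  rw [Finset.sum_comm]
  simp_rw [← Finset.mul_sum, AddChar.sum_eq_ite, sub_eq_zero]
  simp
  ring

variable {G : Type} [Group G] (V : FDRep ℂ G)

/-- decomposition of a character along an abelian subgroup -/
theorem fa_char (φ : Multiplicative A →* G) :
    ∃ n : AddChar A ℂ → ℕ,
      (∀ ψ, (Fintype.card A : ℂ)⁻¹ * ∑ b, ψ (-b) * V.character (φ (Multiplicative.ofAdd b)) = n ψ) ∧
      (∀ a, V.character (φ (Multiplicative.ofAdd a)) = ∑ ψ, (n ψ : ℂ) * ψ a) ∧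
      (∑ a, Complex.normSq (V.character (φ (Multiplicative.ofAdd a))) =
        Fintype.card A * ∑ ψ, (n ψ : ℝ) ^ 2) := by
  have h1 : ∀ ψ : AddChar A ℂ, ∃ n : ℕ,
      (Fintype.card A : ℂ)⁻¹ * ∑ b, ψ (-b) * V.character (φ (Multiplicative.ofAdd b)) = n :=
    fun ψ => by
      obtain ⟨n, hn⟩ := mult_nat V φ (AddChar.toMonoidHomEquiv ψ)
      refine ⟨n, ?_⟩
      rw [← hn, Fintype.card_multiplicative]
      congr 1
      exact Fintype.sum_equiv Multiplicative.ofAdd _ _ (fun _ => rfl)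
  choose n hn using h1
  have h2 : ∀ a, V.character (φ (Multiplicative.ofAdd a)) = ∑ ψ, (n ψ : ℂ) * ψ a := by
    intro a
    simp_rw [← hn]
    exact fourier_inv (fun a => V.character (φ (Multiplicative.ofAdd a))) a
  refine ⟨n, hn, h2, ?_⟩
  rw [fourier_parseval (fun ψ => (n ψ : ℂ)) _ h2]
  simp [pow_two]

theorem char_inv_conj_aux {H : Type} [CommGroup H] [Fintype H] (φ : H →* G) (h : H) :
    V.character (φ h)⁻¹ = (starRingEnd ℂ) (V.character (φ h)) := by
  obtain ⟨n, -, hn, -⟩ := fa_char (A := Additive H) V φ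
  have e1 : V.character (φ h) = ∑ ψ, (n ψ : ℂ) * ψ (Additive.ofMul h) := hn (Additive.ofMul h)
  have e2 : V.character (φ h⁻¹) = ∑ ψ, (n ψ : ℂ) * ψ (-(Additive.ofMul h)) := hn (-(Additive.ofMul h))
  rw [← map_inv, e1, e2, map_sum]
  refine Finset.sum_congr rfl fun ψ _ => ?_
  rw [map_mul, conj_addChar, map_natCast]

theorem char_inv_conj [Finite G] (g : G) : V.character g⁻¹ = (starRingEnd ℂ) (V.character g) := by
  have := Fintype.ofFinite G
  let _ : CommGroup (Subgroup.zpowers g) := 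
    { (inferInstance : Group (Subgroup.zpowers g)) with
      mul_comm := fun a b => (IsCyclic.isMulCommutative (α := Subgroup.zpowers g)).is_comm.comm a b }
  exact char_inv_conj_aux V (Subgroup.zpowers g).subtype ⟨g, Subgroup.mem_zpowers g⟩

theorem sum_normSq [Fintype G] (hV : CategoryTheory.Simple V) :
    ∑ g : G, Complex.normSq (V.character g) = Fintype.card G := by
  have h := FDRep.simple_iff_char_is_norm_one V |>.1 hV
  apply Complex.ofReal_injective
  push_cast
  simp_rw [Complex.normSq_eq_conj_mul_self, ← char_inv_conj]
  rw [← Nat.card_eq_fintype_card, ← h]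
  exact Finset.sum_congr (by ext; simp) fun g _ => mul_comm _ _

end FA

section SI
variable {P : Type} [Group P] [Fintype P]

/-- `f` is a sum of characters induced from irreducible characters of index `m` subgroups -/
def SI (m : ℕ) (f : P → ℂ) : Prop :=
  ∃ l : List (Σ Q : Subgroup P, Q → ℂ), (∀ t ∈ l, IsIrreducibleCharacter t.2 ∧ m = t.1.index) ∧
    ∀ x, f x = (l.map fun t => inducedChar t.1 t.2 x).sum

theorem SI.zero (m : ℕ) : SI m (fun _ : P => 0) := ⟨[], by simp, by simp⟩

theorem SI.add {m : ℕ} {f g : P → ℂ} (hf : SI m f) (hg : SI m g) : SI m (fun x => f x + g x) := by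
  obtain ⟨l, h1, h2⟩ := hf
  obtain ⟨l', h1', h2'⟩ := hg
  refine ⟨l ++ l', ?_, fun x => by simp [h2, h2']⟩
  intro t ht
  rcases List.mem_append.1 ht with ht | ht
  · exact h1 t ht
  · exact h1' t ht

theorem SI.congr {m : ℕ} {f g : P → ℂ} (hf : SI m f) (h : ∀ x, g x = f x) : SI m g := by
  rwa [funext h]

theorem SI.nsmul {m : ℕ} {f : P → ℂ} (hf : SI m f) (k : ℕ) : SI m (fun x => (k : ℂ) * f x) := by
  induction k with
  | zero => exact (SI.zero m).congr (by simp)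
  | succ k ih => exact (ih.add hf).congr (by intro x; push_cast; ring)

theorem SI.sum {m : ℕ} {ι : Type*} (s : Finset ι) (f : ι → P → ℂ) (hf : ∀ i ∈ s, SI m (f i)) :
    SI m (fun x => ∑ i ∈ s, f i x) := by
  induction s using Finset.induction_on with
  | empty => exact (SI.zero m).congr (by simp)
  | insert a s ha ih =>
    refine ((hf a (by simp)).add (ih fun i hi => hf i (by simp [hi]))).congr ?_
    intro x
    rw [Finset.sum_insert ha]

theorem SI.ind {m : ℕ} (Q : Subgroup P) (l : Q → ℂ) (hl : IsIrreducibleCharacter l)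
    (hm : Q.index = m) : SI m (inducedChar Q l) :=
  ⟨[⟨Q, l⟩], by simp [hl, hm], by simp⟩

theorem SI.toProp {p : ℕ} {G : Type} [Group G] [Fintype G] {P : Subgroup G} {χ : G → ℂ} {d : ℕ}
    (h : SI (p ^ (d.factorization p)) (fun x : P => χ x)) : SumInducedProperty p P χ d := by
  obtain ⟨l, h1, h2⟩ := h
  refine ⟨l.length, fun i => (l.get i).1, fun i => (l.get i).2, fun i => ?_, fun i => ?_, fun x => ?_⟩
  · exact (h1 _ (List.get_mem l i)).1
  · exact (h1 _ (List.get_mem l i)).2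
  · refine (h2 x).trans ?_
    rw [← List.sum_ofFn]
    congr 1
    apply List.ext_get
    · simp
    · intro n h1 h2; simp

theorem inducedChar_top (f : (⊤ : Subgroup P) → ℂ) (hf : ∀ x y : (⊤ : Subgroup P), f (x * y * x⁻¹) = f y)
    (x : P) : inducedChar ⊤ f x = f ⟨x, Subgroup.mem_top x⟩ := by
  unfold inducedChar
  have : ∀ y : P, (if h : y * x * y⁻¹ ∈ (⊤ : Subgroup P) then f ⟨y * x * y⁻¹, h⟩ else 0) = f ⟨x, Subgroup.mem_top x⟩ := by
    intro y
    rw [dif_pos (Subgroup.mem_top _)]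
    exact hf ⟨y, Subgroup.mem_top y⟩ ⟨x, Subgroup.mem_top x⟩
  simp_rw [this]
  have hA : (Fintype.card P : ℂ) ≠ 0 := Nat.cast_ne_zero.2 Fintype.card_ne_zero
  have h2 : Fintype.card (⊤ : Subgroup P) = Fintype.card P := by
    simp only [Fintype.card_eq_nat_card]; simp
  rw [h2]
  simp

/-- trivial case: index one -/
theorem SI.one_of_rep {G : Type} [Group G] (V : FDRep ℂ G) (φ : P →* G) :
    SI 1 (fun x => V.character (φ x)) := by
  obtain ⟨l, h1, h2⟩ := rep_char_decomp _ V (V.ρ.comp (φ.comp (⊤ : Subgroup P).subtype)) rfl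
  refine ⟨l.map (fun f => ⟨⊤, f⟩), ?_, ?_⟩
  · intro t ht
    obtain ⟨f, hf, rfl⟩ := List.mem_map.1 ht
    exact ⟨h1 f hf, by simp⟩
  · intro x
    rw [List.map_map]
    have := h2 ⟨x, Subgroup.mem_top x⟩
    change V.character (φ x) = _ at this
    refine this.trans ?_
    congr 1
    apply List.map_congr_left
    intro f hf
    obtain ⟨W, _, rfl⟩ := h1 f hf
    exact (inducedChar_top _ (fun x y => FDRep.char_conj W y x) x).symm

theorem card_mul_index' (Q : Subgroup P) : Fintype.card Q * Q.index = Fintype.card P := by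
  rw [Fintype.card_eq_nat_card, Fintype.card_eq_nat_card]
  exact Q.card_mul_index

/-- linear characters -/
theorem SI.lin {m : ℕ} (Q : Subgroup P) (l : Q →* ℂ) (hm : Q.index = m) :
    SI m (inducedChar Q (fun h => l h)) :=
  SI.ind Q _ (linear_isIrreducibleCharacter l) hm

/-- values of `inducedChar` at elements all of whose conjugates lie in `Q` and have equal values -/
theorem inducedChar_const (Q : Subgroup P) (l : Q → ℂ) (g : P) (hg : g ∈ Q)
    (hc : ∀ x : P, x * g * x⁻¹ = g) : inducedChar Q l g = Q.index * l ⟨g, hg⟩ := by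
  unfold inducedChar
  have : ∀ y : P, (if h : y * g * y⁻¹ ∈ Q then l ⟨y * g * y⁻¹, h⟩ else 0) = l ⟨g, hg⟩ := by
    intro y
    simp only [hc, hg, dif_pos]
  simp_rw [this]
  have hA : (Fintype.card Q : ℂ) ≠ 0 := Nat.cast_ne_zero.2 Fintype.card_ne_zero
  rw [Finset.sum_const, Finset.card_univ, ← card_mul_index' Q, nsmul_eq_mul]
  push_cast
  field_simp

theorem SI.vanish_one {f : P → ℂ} {r : ℕ} (h1 : f 1 = r * Fintype.card P) (h : ∀ x, x ≠ 1 → f x = 0) :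
    SI (Fintype.card P) f := by
  refine ((SI.lin (⊥ : Subgroup P) 1 ?_).nsmul r).congr ?_
  · rw [Subgroup.index_bot, Nat.card_eq_fintype_card]
  · intro x
    by_cases hx : x = 1
    · subst hx
      rw [h1, inducedChar_const _ _ _ (one_mem _) (by simp), Subgroup.index_bot, Nat.card_eq_fintype_card]
      simp
    · rw [h x hx]
      have : ∀ y : P, y * x * y⁻¹ ≠ 1 := by
        intro y hy
        exact hx (by simpa [conj_eq_one_iff] using hy)
      simp [inducedChar, Subgroup.mem_bot, this]
end SI

set_option linter.unusedSectionVars false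

abbrev SL2 (F : Type) [Field F] := Matrix.SpecialLinearGroup (Fin 2) F

section mats
variable {F : Type} [Field F]

def sl (a b c d : F) (h : a * d - b * c = 1) : SL2 F := ⟨!![a, b; c, d], by
  rw [Matrix.det_fin_two_of, h]⟩

@[simp] theorem sl00 (a b c d : F) (h) : (sl a b c d h).1 0 0 = a := rfl
@[simp] theorem sl01 (a b c d : F) (h) : (sl a b c d h).1 0 1 = b := rfl
@[simp] theorem sl10 (a b c d : F) (h) : (sl a b c d h).1 1 0 = c := rfl
@[simp] theorem sl11 (a b c d : F) (h) : (sl a b c d h).1 1 1 = d := rfl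

theorem sl_ext {g h : SL2 F} (h0 : g.1 0 0 = h.1 0 0) (h1 : g.1 0 1 = h.1 0 1)
    (h2 : g.1 1 0 = h.1 1 0) (h3 : g.1 1 1 = h.1 1 1) : g = h := by
  apply Subtype.ext
  ext i j
  fin_cases i <;> fin_cases j <;> assumption

@[simp] theorem mul00 (g h : SL2 F) : (g * h).1 0 0 = g.1 0 0 * h.1 0 0 + g.1 0 1 * h.1 1 0 := by
  change (g.1 * h.1) 0 0 = _; rw [Matrix.mul_apply, Fin.sum_univ_two]
@[simp] theorem mul01 (g h : SL2 F) : (g * h).1 0 1 = g.1 0 0 * h.1 0 1 + g.1 0 1 * h.1 1 1 := by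
  change (g.1 * h.1) 0 1 = _; rw [Matrix.mul_apply, Fin.sum_univ_two]
@[simp] theorem mul10 (g h : SL2 F) : (g * h).1 1 0 = g.1 1 0 * h.1 0 0 + g.1 1 1 * h.1 1 0 := by
  change (g.1 * h.1) 1 0 = _; rw [Matrix.mul_apply, Fin.sum_univ_two]
@[simp] theorem mul11 (g h : SL2 F) : (g * h).1 1 1 = g.1 1 0 * h.1 0 1 + g.1 1 1 * h.1 1 1 := by
  change (g.1 * h.1) 1 1 = _; rw [Matrix.mul_apply, Fin.sum_univ_two]
@[simp] theorem inv00 (g : SL2 F) : (g⁻¹).1 0 0 = g.1 1 1 := by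
  rw [Matrix.SpecialLinearGroup.SL2_inv_expl]; rfl
@[simp] theorem inv01 (g : SL2 F) : (g⁻¹).1 0 1 = - g.1 0 1 := by
  rw [Matrix.SpecialLinearGroup.SL2_inv_expl]; rfl
@[simp] theorem inv10 (g : SL2 F) : (g⁻¹).1 1 0 = - g.1 1 0 := by
  rw [Matrix.SpecialLinearGroup.SL2_inv_expl]; rfl
@[simp] theorem inv11 (g : SL2 F) : (g⁻¹).1 1 1 = g.1 0 0 := by
  rw [Matrix.SpecialLinearGroup.SL2_inv_expl]; rfl
@[simp] theorem one00 : (1 : SL2 F).1 0 0 = 1 := rfl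
@[simp] theorem one01 : (1 : SL2 F).1 0 1 = 0 := rfl
@[simp] theorem one10 : (1 : SL2 F).1 1 0 = 0 := rfl
@[simp] theorem one11 : (1 : SL2 F).1 1 1 = 1 := rfl

theorem det1 (g : SL2 F) : g.1 0 0 * g.1 1 1 - g.1 0 1 * g.1 1 0 = 1 := by
  rw [← Matrix.det_fin_two]; exact g.2

/-- minus one -/
def mz : SL2 F := sl (-1) 0 0 (-1) (by ring)
/-- unipotents -/
def uu (x : F) : SL2 F := sl 1 x 0 1 (by ring)
/-- diagonal elements -/
def tt (a : Fˣ) : SL2 F := sl a 0 0 (a⁻¹ : Fˣ) (by simp)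

@[simp] theorem mz00 : (mz : SL2 F).1 0 0 = -1 := rfl
@[simp] theorem mz01 : (mz : SL2 F).1 0 1 = 0 := rfl
@[simp] theorem mz10 : (mz : SL2 F).1 1 0 = 0 := rfl
@[simp] theorem mz11 : (mz : SL2 F).1 1 1 = -1 := rfl
@[simp] theorem uu00 (x : F) : (uu x).1 0 0 = 1 := rfl
@[simp] theorem uu01 (x : F) : (uu x).1 0 1 = x := rfl
@[simp] theorem uu10 (x : F) : (uu x).1 1 0 = 0 := rfl
@[simp] theorem uu11 (x : F) : (uu x).1 1 1 = 1 := rfl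
@[simp] theorem tt00 (a : Fˣ) : (tt a).1 0 0 = a := rfl
@[simp] theorem tt01 (a : Fˣ) : (tt a).1 0 1 = 0 := rfl
@[simp] theorem tt10 (a : Fˣ) : (tt a).1 1 0 = 0 := rfl
@[simp] theorem tt11 (a : Fˣ) : (tt a).1 1 1 = (a : F)⁻¹ := by simp [tt]

theorem mz_mul_mz : (mz : SL2 F) * mz = 1 := by apply sl_ext <;> simp
theorem mz_comm (g : SL2 F) : mz * g = g * mz := by apply sl_ext <;> simp

def uuHom : Multiplicative F →* SL2 F where
  toFun x := uu x.toAdd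
  map_one' := by apply sl_ext <;> simp
  map_mul' x y := by apply sl_ext <;> simp [add_comm]

def ttHom : Fˣ →* SL2 F where
  toFun a := tt a
  map_one' := by apply sl_ext <;> simp
  map_mul' x y := by apply sl_ext <;> simp [mul_comm]

theorem uu_add (x y : F) : uu (x + y) = uu x * uu y := by apply sl_ext <;> simp [add_comm]

theorem tt_one : tt (1 : Fˣ) = 1 := by apply sl_ext <;> simp
theorem tt_neg_one : tt (-1 : Fˣ) = mz := by apply sl_ext <;> simp
end mats

/-! Gelfand--Graev multiplicity one -/
section GG
variable {F : Type} [Field F] [Fintype F] (V : FDRep ℂ (SL2 F))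
  (ψ : AddChar F ℂ)

noncomputable def EE : Module.End ℂ V :=
  projOp (V.ρ.comp uuHom) (AddChar.toMonoidHomEquiv ψ)

theorem EE_left (x : F) : V.ρ (uu x) * EE V ψ = ψ x • EE V ψ :=
  proj_left (V.ρ.comp uuHom) (AddChar.toMonoidHomEquiv ψ) (Multiplicative.ofAdd x)
theorem EE_right (x : F) : EE V ψ * V.ρ (uu x) = ψ x • EE V ψ :=
  proj_right (V.ρ.comp uuHom) (AddChar.toMonoidHomEquiv ψ) (Multiplicative.ofAdd x)
theorem EE_idem : EE V ψ * EE V ψ = EE V ψ :=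
  proj_idem (V.ρ.comp uuHom) (AddChar.toMonoidHomEquiv ψ)
theorem EE_def : EE V ψ = (Fintype.card F : ℂ)⁻¹ • ∑ x : F, ψ (-x) • V.ρ (uu x) := by
  unfold EE projOp
  rw [Fintype.card_multiplicative]
  congr 1
  exact Fintype.sum_equiv Multiplicative.toAdd _ _ (fun _ => rfl)
theorem EE_trace : LinearMap.trace ℂ V (EE V ψ) =
    (Module.finrank ℂ (LinearMap.range (EE V ψ)) : ℂ) :=
  proj_trace _ _

/-- anti-automorphism -/
def sig (g : SL2 F) : SL2 F := sl (g.1 1 1) (g.1 0 1) (g.1 1 0) (g.1 0 0) (by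
  have := det1 g; linear_combination this)

@[simp] theorem sig00 (g : SL2 F) : (sig g).1 0 0 = g.1 1 1 := rfl
@[simp] theorem sig01 (g : SL2 F) : (sig g).1 0 1 = g.1 0 1 := rfl
@[simp] theorem sig10 (g : SL2 F) : (sig g).1 1 0 = g.1 1 0 := rfl
@[simp] theorem sig11 (g : SL2 F) : (sig g).1 1 1 = g.1 0 0 := rfl

theorem sig_mul (g h : SL2 F) : sig (g * h) = sig h * sig g := by
  apply sl_ext <;> simp <;> ring
theorem sig_uu (x : F) : sig (uu x) = uu x := by apply sl_ext <;> simp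

theorem EE_bi (x y : F) (g : SL2 F) :
    EE V ψ * V.ρ (uu x * g * uu y) * EE V ψ = (ψ x * ψ y) • (EE V ψ * V.ρ g * EE V ψ) := by
  have : EE V ψ * V.ρ (uu x * g * uu y) * EE V ψ =
      (EE V ψ * V.ρ (uu x)) * V.ρ g * (V.ρ (uu y) * EE V ψ) := by
    rw [map_mul, map_mul]; simp only [mul_assoc]
  rw [this, EE_right, EE_left]
  simp only [smul_mul_assoc, mul_smul_comm, smul_smul, mul_comm (ψ y)]

theorem EE_sig (hψ : ψ ≠ 0) (g : SL2 F) :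
    EE V ψ * V.ρ g * EE V ψ = EE V ψ * V.ρ (sig g) * EE V ψ := by
  have hd := det1 g
  by_cases hc : g.1 1 0 = 0
  · by_cases had : g.1 0 0 = g.1 1 1
    · have : sig g = g := by
        apply sl_ext <;> simp [had]
      rw [this]
    · have key : ∀ g : SL2 F, g.1 1 0 = 0 → g.1 0 0 ≠ g.1 1 1 → EE V ψ * V.ρ g * EE V ψ = 0 := by
        intro g hc had
        have hd := det1 g
        rw [hc] at hd
        have ha : g.1 0 0 ≠ 0 := by rintro h; simp [h] at hd
        have hd' : g.1 1 1 ≠ 0 := by rintro h; simp [h] at hd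
        obtain ⟨w, hw⟩ : ∃ w, ψ w ≠ 1 := by
          by_contra hcon
          push Not at hcon
          exact hψ (DFunLike.ext _ _ (by simpa using hcon))
        -- g * u(y) = u(x) * g with x * d = a * y
        set a := g.1 0 0
        set d := g.1 1 1
        have hne : a - d ≠ 0 := sub_ne_zero.2 had
        let y : F := w * d * (a - d)⁻¹
        let x : F := a * w * (a - d)⁻¹
        have e : uu x * g * uu (-y) = g := by
          apply sl_ext
          · simp [hc]
          · simp [x, y, hc]
            field_simp
            ring
          · simp [hc]
          · simp [hc]
        have h1 := EE_bi V ψ x (-y) g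
        rw [e, ← AddChar.map_add_eq_mul] at h1
        have h2 : x + -y = w := by
          simp only [x, y]; field_simp; ring
        rw [h2] at h1
        have h3 : (ψ w - 1) • (EE V ψ * V.ρ g * EE V ψ) = 0 := by
          rw [sub_smul, ← h1, one_smul, sub_self]
        exact (smul_eq_zero.1 h3).resolve_left (sub_ne_zero.2 hw)
      rw [key g hc had, key (sig g) (by simpa using hc) (by simpa using fun h => had h.symm)]
  · let w : SL2 F := sl 0 (-(g.1 1 0)⁻¹) (g.1 1 0) 0 (by field_simp; ring)
    have e1 : g = uu (g.1 0 0 / g.1 1 0) * w * uu (g.1 1 1 / g.1 1 0) := by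
      apply sl_ext <;> simp [w] <;> field_simp <;> linear_combination (-1) * hd
    have e2 : sig g = uu (g.1 1 1 / g.1 1 0) * w * uu (g.1 0 0 / g.1 1 0) := by
      conv_lhs => rw [e1]
      rw [sig_mul, sig_mul, sig_uu, sig_uu, ← mul_assoc]
      congr 2
    rw [e2]
    conv_lhs => rw [e1]
    rw [EE_bi, EE_bi, mul_comm (ψ _)]

theorem EE_commute (hψ : ψ ≠ 0) (g h : SL2 F) :
    (EE V ψ * V.ρ g * EE V ψ) * (EE V ψ * V.ρ h * EE V ψ) =
    (EE V ψ * V.ρ h * EE V ψ) * (EE V ψ * V.ρ g * EE V ψ) := by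
  have key : ∀ g h : SL2 F, (EE V ψ * V.ρ g * EE V ψ) * (EE V ψ * V.ρ h * EE V ψ) =
      (Fintype.card F : ℂ)⁻¹ • ∑ x : F, ψ (-x) • (EE V ψ * V.ρ (g * uu x * h) * EE V ψ) := by
    intro g h
    have : (EE V ψ * V.ρ g * EE V ψ) * (EE V ψ * V.ρ h * EE V ψ) =
      (EE V ψ * V.ρ g) * (EE V ψ * EE V ψ) * (V.ρ h * EE V ψ) := by simp only [mul_assoc]
    rw [this, EE_idem]
    have : (EE V ψ * V.ρ g) * (EE V ψ) * (V.ρ h * EE V ψ) = (EE V ψ * V.ρ g) *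
      ((Fintype.card F : ℂ)⁻¹ • ∑ x : F, ψ (-x) • V.ρ (uu x)) * (V.ρ h * EE V ψ) := by
      rw [← EE_def]
    rw [this, mul_smul_comm, smul_mul_assoc, Finset.mul_sum, Finset.sum_mul]
    congr 1
    refine Finset.sum_congr rfl fun x _ => ?_
    rw [mul_smul_comm, smul_mul_assoc, map_mul, map_mul]
    simp only [mul_assoc]
  have hs : ∀ g : SL2 F, sig (sig g) = g := fun g => by apply sl_ext <;> simp
  rw [key g h]
  have h2 : ∀ x : F, EE V ψ * V.ρ (g * uu x * h) * EE V ψ =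
      EE V ψ * V.ρ (sig h * uu x * sig g) * EE V ψ := by
    intro x
    rw [EE_sig V ψ hψ, sig_mul, sig_mul, sig_uu, ← mul_assoc]
  simp_rw [h2]
  rw [← key (sig h) (sig g), ← EE_sig V ψ hψ, ← EE_sig V ψ hψ]

theorem EE_gen (hV : CategoryTheory.Simple V) (K : Submodule ℂ V) (hK : K ≠ ⊥) (hKR : ∀ v ∈ K, EE V ψ v = v)
    (hst : ∀ g, ∀ v ∈ K, (EE V ψ * V.ρ g * EE V ψ) v ∈ K) : LinearMap.range (EE V ψ) ≤ K := by
  let W : Submodule ℂ V := ⨅ h : SL2 F, K.comap (EE V ψ * V.ρ h)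
  have hW : ∀ w, w ∈ W ↔ ∀ h, EE V ψ (V.ρ h w) ∈ K := by
    intro w; simp [W, Submodule.mem_iInf]
  have := simple_invariant V hV W (by
      intro g v hv
      rw [hW] at hv ⊢
      intro h
      have := hv (h * g)
      rwa [map_mul] at this) (by
      obtain ⟨v, hv, hv0⟩ := Submodule.exists_mem_ne_zero_of_ne_bot hK
      intro h
      apply hv0
      have : v ∈ W := by
        rw [hW]
        intro h
        have := hst h v hv
        simp only [Module.End.mul_apply, hKR v hv] at this
        exact this
      rw [h] at this
      simpa using this)
  rintro r ⟨s, rfl⟩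
  have h1 : s ∈ W := by rw [this]; trivial
  have h2 := (hW _).1 h1 1
  rwa [map_one] at h2

theorem EE_mult_one (hV : CategoryTheory.Simple V) (hψ : ψ ≠ 0) : Module.finrank ℂ (LinearMap.range (EE V ψ)) ≤ 1 := by
  by_cases hb : LinearMap.range (EE V ψ) = ⊥
  · rw [hb]; simp
  have hE : ∀ v ∈ LinearMap.range (EE V ψ), EE V ψ v = v := by
    rintro _ ⟨v, rfl⟩
    exact LinearMap.congr_fun (EE_idem V ψ) v
  have hsc : ∀ g, ∃ c : ℂ, ∀ v ∈ LinearMap.range (EE V ψ), (EE V ψ * V.ρ g * EE V ψ) v = c • v := by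
    intro g
    set A := EE V ψ * V.ρ g * EE V ψ with hA
    have hm : ∀ v ∈ LinearMap.range (EE V ψ), A v ∈ LinearMap.range (EE V ψ) := 
      fun v _ => ⟨_, rfl⟩
    have : Nontrivial (LinearMap.range (EE V ψ)) := Submodule.nontrivial_iff_ne_bot.2 hb
    obtain ⟨c, hc⟩ := Module.End.exists_eigenvalue (A.restrict hm)
    obtain ⟨v, hv⟩ := hc.exists_hasEigenvector
    refine ⟨c, ?_⟩
    let K : Submodule ℂ V := LinearMap.range (EE V ψ) ⊓ LinearMap.ker (A - c • 1)
    have hKm : ∀ w, w ∈ K ↔ w ∈ LinearMap.range (EE V ψ) ∧ A w = c • w := by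
      intro w
      simp only [K, Submodule.mem_inf, LinearMap.mem_ker, LinearMap.sub_apply, sub_eq_zero]
      rfl
    have hle := EE_gen V ψ hV K (by
      intro h
      apply hv.2
      have h1 : (v : V) ∈ K := by
        rw [hKm]
        exact ⟨v.2, congrArg Subtype.val hv.apply_eq_smul⟩
      rw [h] at h1
      exact Subtype.ext (by simpa using h1)) (fun v hv => hE v ((hKm v).1 hv).1) (by
      intro h v hv
      rw [hKm] at hv ⊢
      refine ⟨⟨_, rfl⟩, ?_⟩
      have hcm := LinearMap.congr_fun (EE_commute V ψ hψ g h) v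
      refine Eq.trans hcm ?_
      refine (congrArg (EE V ψ * V.ρ h * EE V ψ) hv.2).trans ?_
      rw [map_smul])
    intro v hv
    exact ((hKm v).1 (hle hv)).2
  obtain ⟨v, hv, hv0⟩ := Submodule.exists_mem_ne_zero_of_ne_bot hb
  have hle := EE_gen V ψ hV (ℂ ∙ v) (by simpa using hv0) (by
      intro w hw
      obtain ⟨c, rfl⟩ := Submodule.mem_span_singleton.1 hw
      rw [map_smul, hE v hv]) (by
      intro g w hw
      obtain ⟨c, rfl⟩ := Submodule.mem_span_singleton.1 hw
      obtain ⟨k, hk⟩ := hsc g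
      rw [map_smul, hk v hv]
      exact Submodule.smul_mem _ _ (Submodule.smul_mem _ _ (Submodule.mem_span_singleton_self v)))
  calc _ ≤ Module.finrank ℂ (ℂ ∙ v) := Submodule.finrank_mono hle
    _ ≤ 1 := by rw [finrank_span_singleton hv0]

end GG


theorem sq_count {F : Type} [Field F] [Fintype F] (μ : F → ℕ) (h1 : ∀ s, s ≠ 0 → μ s ≤ 1)
    (h2 : ∀ s a, a ≠ 0 → μ (s * a ^ 2) = μ s) (N : ℕ) (hN : N = ∑ s ∈ Finset.univ.erase 0, μ s) :
    (ringChar F ≠ 2 → N = 0 ∨ 2 * N = Fintype.card F - 1 ∨ N = Fintype.card F - 1) ∧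
    (ringChar F = 2 → N = 0 ∨ N = Fintype.card F - 1) := by
  have hc : (Finset.univ.erase (0 : F)).card = Fintype.card F - 1 := by
    rw [Finset.card_erase_of_mem (Finset.mem_univ _), Finset.card_univ]
  have hsq : ∀ s : F, s ≠ 0 → IsSquare s → μ s = μ 1 := by
    rintro s hs ⟨a, rfl⟩
    have : a ≠ 0 := by rintro rfl; simp at hs
    rw [← h2 1 a this]; congr 1; ring
  constructor
  · intro hF
    obtain ⟨ε, hε⟩ := FiniteField.exists_nonsquare hF
    have hε0 : ε ≠ 0 := by rintro rfl; exact hε (IsSquare.zero)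
    have hns : ∀ s : F, s ≠ 0 → ¬ IsSquare s → μ s = μ ε := by
      intro s hs hn
      have e1 := quadraticChar_neg_one_iff_not_isSquare.2 hn
      have e2 := quadraticChar_neg_one_iff_not_isSquare.2 hε
      have : IsSquare (s * ε) := by
        rw [← quadraticChar_one_iff_isSquare (mul_ne_zero hs hε0), map_mul, e1, e2]; norm_num
      obtain ⟨a, ha⟩ := this
      have ha0 : a ≠ 0 := by
        rintro rfl
        exact mul_ne_zero hs hε0 (by simpa using ha)
      rw [← h2 ε (a / ε) (div_ne_zero ha0 hε0)]
      congr 1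
      field_simp
      linear_combination ha
    have key : ∀ s ∈ Finset.univ.erase (0 : F), (2 * μ s : ℤ) = 
        (μ 1 + μ ε) + quadraticChar F s * (μ 1 - μ ε) := by
      intro s hs
      have hs0 := Finset.ne_of_mem_erase hs
      by_cases h : IsSquare s
      · rw [hsq s hs0 h, (quadraticChar_one_iff_isSquare hs0).2 h]; ring
      · rw [hns s hs0 h, quadraticChar_neg_one_iff_not_isSquare.2 h]; ring
    have hs0 : ∑ s ∈ Finset.univ.erase (0 : F), quadraticChar F s = 0 := by
      have := quadraticChar_sum_zero hF
      rw [← Finset.add_sum_erase _ _ (Finset.mem_univ (0 : F))] at this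
      simpa using this
    have h3 := Finset.sum_congr rfl key
    rw [Finset.sum_add_distrib, ← Finset.sum_mul, hs0, zero_mul, add_zero, ← Finset.mul_sum,
      Finset.sum_const, hc, nsmul_eq_mul] at h3
    have h4 : 2 * N = (Fintype.card F - 1) * (μ 1 + μ ε) := by
      rw [hN]; exact_mod_cast h3
    have a1 := h1 1 one_ne_zero
    have a2 := h1 ε hε0
    interval_cases μ 1 <;> interval_cases μ ε <;> omega
  · intro hF
    have h4 : N = (Fintype.card F - 1) * μ 1 := by
      rw [hN, Finset.sum_congr rfl (fun s hs => hsq s (Finset.ne_of_mem_erase hs) 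
        (FiniteField.isSquare_of_char_two hF s)), Finset.sum_const, hc, smul_eq_mul]
    have a1 := h1 1 one_ne_zero
    interval_cases μ 1 <;> omega

theorem gg_data {F : Type} [Field F] [Fintype F] (V : FDRep ℂ (SL2 F))
    (hV : CategoryTheory.Simple V) : ∃ ℓ N : ℕ,
    Module.finrank ℂ V = ℓ + N ∧
    ∑ x : F, V.character (uu x) = Fintype.card F * ℓ ∧
    ∑ x : F, Complex.normSq (V.character (uu x)) = Fintype.card F * ((ℓ : ℝ) ^ 2 + N) ∧
    (N = Fintype.card F - 1 → ∀ x : F, x ≠ 0 → V.character (uu x) = ℓ - 1) ∧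
    (ringChar F ≠ 2 → N = 0 ∨ 2 * N = Fintype.card F - 1 ∨ N = Fintype.card F - 1) ∧
    (ringChar F = 2 → N = 0 ∨ N = Fintype.card F - 1) := by
  obtain ⟨m, hm, hχ, hp⟩ := fa_char V (uuHom (F := F))
  have hq : (Fintype.card F : ℂ) ≠ 0 := Nat.cast_ne_zero.2 Fintype.card_ne_zero
  have hm1 : ∀ ψ, ψ ≠ 0 → m ψ ≤ 1 := by
    intro ψ hψ
    have h1 := EE_trace V ψ
    conv_lhs at h1 => rw [EE_def, map_smul, map_sum]
    simp_rw [map_smul, smul_eq_mul] at h1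
    have h2 := (hm ψ).symm.trans h1
    rw [Nat.cast_inj] at h2
    rw [h2]
    exact EE_mult_one V ψ hV hψ
  obtain ⟨ψ0, hψ0⟩ : ∃ ψ : AddChar F ℂ, ψ ≠ 1 := by
    have : Nontrivial (AddChar F ℂ) := by
      rw [← Fintype.one_lt_card_iff_nontrivial, AddChar.card_eq]
      exact Fintype.one_lt_card
    exact exists_ne 1
  have hinj := AddChar.to_mulShift_inj_of_isPrimitive (AddChar.IsPrimitive.of_ne_one hψ0)
  have hbij : Function.Bijective ψ0.mulShift := by
    rw [Fintype.bijective_iff_injective_and_card]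
    exact ⟨hinj, (AddChar.card_eq).symm⟩
  have hz : ψ0.mulShift 0 = 0 := by ext x; simp
  set N := ∑ ψ ∈ Finset.univ.erase 0, m ψ with hN
  have hN' : N = ∑ s ∈ Finset.univ.erase 0, m (ψ0.mulShift s) := by
    have e1 : ∑ s, m (ψ0.mulShift s) = ∑ ψ, m ψ := hbij.sum_comp m
    rw [← Finset.add_sum_erase _ _ (Finset.mem_univ (0 : F)),
      ← Finset.add_sum_erase _ m (Finset.mem_univ (0 : AddChar F ℂ)), hz] at e1
    omega
  have hshift : ∀ s a : F, a ≠ 0 → m (ψ0.mulShift (s * a ^ 2)) = m (ψ0.mulShift s) := by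
    intro s a ha
    rw [← Nat.cast_inj (R := ℂ), ← hm, ← hm]
    congr 1
    refine Fintype.sum_equiv (Equiv.mulRight₀ (a ^ 2) (pow_ne_zero 2 ha)) _ _ fun x => ?_
    rw [Equiv.mulRight₀_apply, AddChar.mulShift_apply, AddChar.mulShift_apply]
    congr 1
    · congr 1; ring
    · have : uu (x * a ^ 2) = tt (Units.mk0 a ha) * uu x * (tt (Units.mk0 a ha))⁻¹ := by
        apply sl_ext <;> simp [ha]
        ring
      have h2 := FDRep.char_conj V (uu x) (tt (Units.mk0 a ha))
      rw [← this] at h2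
      exact h2.symm
  obtain ⟨c1, c2⟩ := sq_count (fun s => m (ψ0.mulShift s)) (fun s hs => hm1 _ (by
    rw [← hz]; exact fun h => hs (hinj h))) hshift N hN'
  refine ⟨m 0, N, ?_, ?_, ?_, ?_, c1, c2⟩
  · have h0 := hχ 0
    have h1 : uuHom (Multiplicative.ofAdd (0 : F)) = 1 := map_one _
    rw [h1, FDRep.char_one] at h0
    simp only [AddChar.map_zero_eq_one, mul_one] at h0
    rw [← Finset.add_sum_erase _ _ (Finset.mem_univ (0 : AddChar F ℂ))] at h0
    exact_mod_cast h0
  · have := hm 0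
    rw [inv_mul_eq_iff_eq_mul₀ hq] at this
    rw [← this]
    refine Finset.sum_congr rfl fun x _ => ?_
    simp; rfl
  · refine hp.trans ?_
    congr 1
    rw [← Finset.add_sum_erase _ _ (Finset.mem_univ (0 : AddChar F ℂ)), hN]
    congr 1
    push_cast
    refine Finset.sum_congr rfl fun ψ hψ => ?_
    have := hm1 ψ (Finset.ne_of_mem_erase hψ)
    interval_cases m ψ <;> simp
  · intro hNq x hx
    have hall : ∀ ψ ∈ Finset.univ.erase (0 : AddChar F ℂ), m ψ = 1 := by
      have hs : ∑ ψ ∈ Finset.univ.erase (0 : AddChar F ℂ), m ψ = ∑ ψ ∈ Finset.univ.erase (0 : AddChar F ℂ), 1 := by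
        rw [← hN, hNq, Finset.sum_const, Finset.card_erase_of_mem (Finset.mem_univ _), Finset.card_univ,
          AddChar.card_eq, smul_eq_mul, mul_one]
      exact (Finset.sum_eq_sum_iff_of_le (fun ψ hψ => hm1 ψ (Finset.ne_of_mem_erase hψ))).1 hs
    have h0 : V.character (uu x) = ∑ ψ, (m ψ : ℂ) * ψ x := hχ x
    have h1 := AddChar.sum_apply_eq_ite x
    rw [if_neg hx] at h1
    rw [← Finset.add_sum_erase _ _ (Finset.mem_univ (0 : AddChar F ℂ))] at h0 h1
    rw [Finset.sum_congr rfl (g := fun ψ : AddChar F ℂ => ψ x) (fun ψ hψ => by rw [hall ψ hψ]; simp)] at h0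
    rw [AddChar.zero_apply] at h0 h1
    rw [h0]
    linear_combination h1

set_option linter.unusedSimpArgs false

section cnt
variable {F : Type} [Field F]

def fixp (g : SL2 F) : Option F → Prop
  | none => g.1 1 0 = 0
  | some x => g.1 0 0 * x + g.1 0 1 = x * (g.1 1 0 * x + g.1 1 1)

def kap : Option F → SL2 F
  | none => 1
  | some x => sl x (-1) 1 0 (by ring)

theorem fixp_iff (g : SL2 F) (x : Option F) : fixp g x ↔ ((kap x)⁻¹ * g * kap x).1 1 0 = 0 := by
  cases x with
  | none => simp [fixp, kap]
  | some x =>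
    simp only [fixp, kap, mul10, mul11, mul00, mul01, inv10, inv11, inv00, inv01, sl00, sl01, sl10, sl11]
    constructor <;> intro h <;> linear_combination (-1) * h

theorem exists_kap2 (x y : Option F) (hxy : x ≠ y) : ∃ k : SL2 F, ∀ g : SL2 F,
    (fixp g x ∧ fixp g y) ↔ ((k⁻¹ * g * k).1 1 0 = 0 ∧ (k⁻¹ * g * k).1 0 1 = 0) := by
  cases x with
  | none =>
    cases y with
    | none => exact absurd rfl hxy
    | some y =>
      refine ⟨uu y, fun g => ?_⟩
      simp only [fixp, mul10, mul11, mul00, mul01, inv10, inv11, inv00, inv01, uu00, uu01, uu10, uu11]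
      constructor
      · rintro ⟨h1, h2⟩
        constructor
        · linear_combination h1
        · linear_combination h2
      · rintro ⟨h1, h2⟩
        constructor
        · linear_combination h1
        · linear_combination h2
  | some x =>
    cases y with
    | none =>
      refine ⟨sl x (-1) 1 0 (by ring), fun g => ?_⟩
      simp only [fixp, mul10, mul11, mul00, mul01, inv10, inv11, inv00, inv01, sl00, sl01, sl10, sl11]
      constructor
      · rintro ⟨h1, h2⟩
        constructor
        · linear_combination -h1
        · linear_combination -h2
      · rintro ⟨h1, h2⟩
        constructor
        · linear_combination -h1
        · linear_combination -h2
    | some y =>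
      have hne : x - y ≠ 0 := by
        intro h; exact hxy (by rw [sub_eq_zero.1 h])
      refine ⟨sl x (y / (x - y)) 1 (1 / (x - y)) (by field_simp), fun g => ?_⟩
      simp only [fixp, mul10, mul11, mul00, mul01, inv10, inv11, inv00, inv01, sl00, sl01, sl10, sl11]
      field_simp
      constructor
      · rintro ⟨h1, h2⟩
        constructor
        · linear_combination -h1
        · linear_combination h2
      · rintro ⟨h1, h2⟩
        constructor
        · linear_combination -h1
        · linear_combination h2

variable [Fintype F]

noncomputable def ff (g : SL2 F) : ℕ := (Finset.univ.filter (fixp g)).card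

theorem ff_real (g : SL2 F) : (ff g : ℝ) = ∑ x : Option F, if fixp g x then 1 else 0 := by
  simp [ff]

theorem sum_if_conj (n : SL2 F → ℝ) (hn : ∀ g k, n (k * g * k⁻¹) = n g) (k : SL2 F)
    (R : SL2 F → Prop) : ∑ g, (if R (k⁻¹ * g * k) then n g else 0) = ∑ g, if R g then n g else 0 := by
  refine Fintype.sum_equiv (MulAut.conj k⁻¹).toEquiv _ _ fun g => ?_
  have : (MulAut.conj k⁻¹).toEquiv g = k⁻¹ * g * k := by simp [MulAut.conj_apply]
  rw [this]
  have h2 : n (k⁻¹ * g * k) = n g := by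
    have := hn g k⁻¹
    rwa [inv_inv] at this
  rw [h2]

noncomputable def SB (n : SL2 F → ℝ) : ℝ := ∑ g, if g.1 1 0 = 0 then n g else 0
noncomputable def STT (n : SL2 F → ℝ) : ℝ := ∑ g, if g.1 1 0 = 0 ∧ g.1 0 1 = 0 then n g else 0

theorem sum_ff (n : SL2 F → ℝ) (hn : ∀ g k, n (k * g * k⁻¹) = n g) :
    ∑ g, n g * ff g = (Fintype.card F + 1) * SB n := by
  have h1 : ∀ g, n g * ff g = ∑ x : Option F, if ((kap x)⁻¹ * g * kap x).1 1 0 = 0 then n g else 0 := by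
    intro g
    rw [ff_real, Finset.mul_sum]
    refine Finset.sum_congr rfl fun x _ => ?_
    simp only [fixp_iff, mul_ite, mul_one, mul_zero]
  simp_rw [h1]
  rw [Finset.sum_comm]
  simp_rw [fun x : Option F => sum_if_conj n hn (kap x) (fun g => g.1 1 0 = 0)]
  simp [SB]

theorem sum_ff2 (n : SL2 F → ℝ) (hn : ∀ g k, n (k * g * k⁻¹) = n g) :
    ∑ g, n g * (ff g * (ff g - 1)) = Fintype.card F * (Fintype.card F + 1) * STT n := by
  have h1 : ∀ g : SL2 F, (ff g * (ff g - 1) : ℝ) = ∑ x : Option F, ∑ y ∈ Finset.univ.erase x,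
      if fixp g x ∧ fixp g y then 1 else 0 := by
    intro g
    have : ∀ x : Option F, ∑ y ∈ Finset.univ.erase x, (if fixp g x ∧ fixp g y then (1 : ℝ) else 0) =
        (if fixp g x then (1 : ℝ) else 0) * (ff g - 1) := by
      intro x
      by_cases hx : fixp g x
      · rw [ff_real, ← Finset.add_sum_erase _ _ (Finset.mem_univ x)]
        simp [hx]
      · simp [hx]
    simp_rw [this]
    rw [← Finset.sum_mul, ← ff_real]
  simp_rw [h1, Finset.mul_sum]
  rw [Finset.sum_comm]
  have h2 : ∀ x : Option F, ∑ g, ∑ y ∈ Finset.univ.erase x, n g * (if fixp g x ∧ fixp g y then (1 : ℝ) else 0)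
      = Fintype.card F * STT n := by
    intro x
    rw [Finset.sum_comm]
    rw [Finset.sum_congr rfl (g := fun _ => STT n)]
    · rw [Finset.sum_const, Finset.card_erase_of_mem (Finset.mem_univ _), Finset.card_univ]
      simp
    · intro y hy
      obtain ⟨k, hk⟩ := exists_kap2 x y (Finset.ne_of_mem_erase hy).symm
      simp only [hk, mul_ite, mul_one, mul_zero]
      have h3 := sum_if_conj n hn k (fun g => g.1 1 0 = 0 ∧ g.1 0 1 = 0)
      unfold STT
      refine Eq.trans (Finset.sum_congr rfl fun g _ => ?_) (h3.trans (Finset.sum_congr rfl fun g _ => ?_))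
      · congr
      · congr
  simp_rw [h2]
  simp
  ring

theorem ff_central (g : SL2 F) (hg : g = 1 ∨ g = mz) : ff g = Fintype.card F + 1 := by
  unfold ff
  rw [Finset.filter_true_of_mem]
  · simp
  · rintro x -
    rcases hg with rfl | rfl <;> cases x <;> simp [fixp]

theorem count_ineq (n : SL2 F → ℝ) (hn : ∀ g k, n (k * g * k⁻¹) = n g) (hn0 : ∀ g, 0 ≤ n g) :
    2 * ∑ g, (if ff g = 0 then n g else 0) +
      (Fintype.card F : ℝ) * (Fintype.card F - 1) * ∑ g ∈ ({1, mz} : Finset (SL2 F)), n g ≤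
    (Fintype.card F : ℝ) * (Fintype.card F + 1) * STT n - 2 * (Fintype.card F + 1) * SB n + 2 * ∑ g, n g := by
  have e : (Fintype.card F : ℝ) * (Fintype.card F + 1) * STT n - 2 * (Fintype.card F + 1) * SB n + 2 * ∑ g, n g
      = ∑ g, n g * ((ff g - 1) * (ff g - 2)) := by
    have : ∀ g, n g * ((ff g - 1) * (ff g - 2) : ℝ) = n g * (ff g * (ff g - 1)) - 2 * (n g * ff g) + 2 * n g := by
      intro g; ring
    simp_rw [this]
    rw [Finset.sum_add_distrib, Finset.sum_sub_distrib, ← Finset.mul_sum, ← Finset.mul_sum, sum_ff n hn,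
      sum_ff2 n hn]
    ring
  have hc : ∑ g ∈ ({1, mz} : Finset (SL2 F)), n g = ∑ g, if g ∈ ({1, mz} : Finset (SL2 F)) then n g else 0 := by
    rw [Finset.sum_ite_mem, Finset.univ_inter]
  rw [e, hc, Finset.mul_sum, Finset.mul_sum, ← Finset.sum_add_distrib]
  refine Finset.sum_le_sum fun g _ => ?_
  by_cases hg : g ∈ ({1, mz} : Finset (SL2 F))
  · have h1 := ff_central g (by simpa using hg)
    rw [if_pos hg, if_neg (by omega), h1]
    push_cast
    apply le_of_eq; ring
  · rw [if_neg hg, mul_zero, add_zero]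
    by_cases h0 : ff g = 0
    · rw [if_pos h0, h0]
      push_cast
      apply le_of_eq; ring
    · rw [if_neg h0, mul_zero]
      apply mul_nonneg (hn0 g)
      by_cases h1 : ff g = 1
      · rw [h1]; norm_num
      · have : (2 : ℝ) ≤ ff g := by exact_mod_cast (by omega : 2 ≤ ff g)
        apply mul_nonneg <;> linarith

/-- The Borel subgroup -/
def Bor : Subgroup (SL2 F) where
  carrier := {g | g.1 1 0 = 0}
  one_mem' := by simp
  mul_mem' := by
    intro a b ha hb
    simp only [Set.mem_ofPred_eq] at *
    simp [ha, hb]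
  inv_mem' := by
    intro a ha
    simp only [Set.mem_ofPred_eq] at *
    simp [ha]

theorem mem_Bor (g : SL2 F) : g ∈ (Bor : Subgroup (SL2 F)) ↔ g.1 1 0 = 0 := Iff.rfl

def Bdiag : (Bor : Subgroup (SL2 F)) →* Fˣ where
  toFun g := ⟨g.1.1 0 0, g.1.1 1 1, by
    have := det1 g.1; rw [(mem_Bor _).1 g.2] at this; linear_combination this, by
    have := det1 g.1; rw [(mem_Bor _).1 g.2] at this; linear_combination this⟩
  map_one' := by ext; simp
  map_mul' a b := by
    ext
    have := (mem_Bor _).1 b.2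
    simp [this]

/-- parametrization of the Borel -/
def Bequiv : Fˣ × F ≃ (Bor : Subgroup (SL2 F)) where
  toFun p := ⟨tt p.1 * uu p.2, by rw [mem_Bor]; simp⟩
  invFun g := (Bdiag g, g.1.1 1 1 * g.1.1 0 1)
  left_inv := by
    rintro ⟨a, x⟩
    ext
    · simp [Bdiag]
    · simp
  right_inv := by
    intro g
    have := det1 g.1
    have h0 := (mem_Bor _).1 g.2
    rw [h0] at this
    apply Subtype.ext
    apply sl_ext
    · simp [Bdiag]
    · simp [Bdiag]; linear_combination g.1.1 0 1 * this
    · simp [h0]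
    · simp [Bdiag]; exact inv_eq_of_mul_eq_one_right (by linear_combination this)

theorem SB_eq (n : SL2 F → ℝ) : SB n = ∑ a : Fˣ, ∑ x : F, n (tt a * uu x) := by
  rw [← Fintype.sum_prod_type' (f := fun a x => n (tt a * uu x))]
  rw [Fintype.sum_equiv Bequiv (fun p : Fˣ × F => n (tt p.1 * uu p.2)) (fun g => n g.1) (fun p => rfl)]
  unfold SB
  rw [← Finset.sum_filter]
  symm
  exact (Finset.sum_subtype (p := fun x => x ∈ (Bor : Subgroup (SL2 F))) _ (by intro x; simp [mem_Bor]) n).symm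

theorem STT_eq (n : SL2 F → ℝ) : STT n = ∑ a : Fˣ, n (tt a) := by
  unfold STT
  rw [← Finset.sum_filter]
  symm
  refine Finset.sum_bij (fun a _ => tt a) ?_ ?_ ?_ ?_
  · simp
  · intro a _ b _ h
    ext
    have := congrArg (fun g : SL2 F => g.1 0 0) h
    simpa using this
  · intro g hg
    simp only [Finset.mem_filter, Finset.mem_univ, true_and] at hg
    have := det1 g
    rw [hg.1] at this
    refine ⟨⟨g.1 0 0, g.1 1 1, by linear_combination this, by linear_combination this⟩, by simp, ?_⟩
    apply sl_ext <;> simp [hg.1, hg.2]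
    exact inv_eq_of_mul_eq_one_right (by linear_combination this)
  · simp

theorem card_SL2 : Fintype.card (SL2 F) = (Fintype.card F + 1) * ((Fintype.card F - 1) * Fintype.card F) := by
  have h0 : ∀ g : SL2 F, (1 : ℝ) = ∑ x : Option F, if ((kap x)⁻¹ * g).1 1 0 = 0 then 1 else 0 := by
    intro g
    rw [Fintype.sum_option]
    have hd := det1 g
    by_cases hc : g.1 1 0 = 0
    · rw [if_pos (by simpa [kap] using hc), Finset.sum_eq_zero]
      · simp
      · intro x _
        rw [if_neg]
        simp [kap, hc]
        intro h; simp [h, hc] at hd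
    · rw [if_neg (by simpa [kap] using hc), Finset.sum_eq_single (g.1 0 0 / g.1 1 0)]
      · rw [if_pos]; simp
        simp [kap]; field_simp; ring
      · intro x _ hx
        rw [if_neg]
        simp [kap]
        intro h
        apply hx
        field_simp; linear_combination h
      · simp
  have h1 : (Fintype.card (SL2 F) : ℝ) = ∑ g : SL2 F, (1 : ℝ) := by simp
  rw [Finset.sum_congr rfl (fun g _ => h0 g), Finset.sum_comm] at h1
  have h2 : ∀ x : Option F, ∑ g : SL2 F, (if ((kap x)⁻¹ * g).1 1 0 = 0 then (1 : ℝ) else 0) = SB (fun _ => 1) :=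
    fun x => Fintype.sum_equiv (Equiv.mulLeft (kap x)⁻¹) _ _ fun g => rfl
  simp_rw [h2, SB_eq] at h1
  simp only [Finset.sum_const, Finset.card_univ, Fintype.card_option, nsmul_eq_mul, mul_one, Fintype.card_units] at h1
  exact_mod_cast h1

end cnt


section num
variable {F : Type} [Field F] [Fintype F] (V : FDRep ℂ (SL2 F))

theorem exists_zeta (hV : CategoryTheory.Simple V) : ∃ ζ : ℂ, (ζ = 1 ∨ ζ = -1) ∧
    ∀ g, V.character (mz * g) = ζ * V.character g := by
  obtain ⟨c, hc⟩ := schur_scalar V hV (V.ρ mz) (fun g => by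
    rw [← map_mul, ← map_mul, mz_comm])
  have h2 : (c * c) • (1 : Module.End ℂ V) = 1 := by
    have := congrArg V.ρ (mz_mul_mz (F := F))
    rw [map_mul, map_one, hc, smul_mul_smul_comm, one_mul] at this
    exact this
  have hch : ∀ g, V.character (mz * g) = c * V.character g := by
    intro g
    unfold FDRep.character
    rw [map_mul, hc, smul_mul_assoc, one_mul, map_smul, smul_eq_mul]
  by_cases h0 : c * c = 1
  · exact ⟨c, mul_self_eq_one_iff.1 h0, hch⟩
  · have h3 : (1 : Module.End ℂ V) = 0 := by
      have : (c * c - 1) • (1 : Module.End ℂ V) = 0 := by rw [sub_smul, h2, one_smul, sub_self]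
      exact (smul_eq_zero.1 this).resolve_left (sub_ne_zero.2 h0)
    have h4 : ∀ g, V.character g = 0 := by
      intro g
      unfold FDRep.character
      rw [← mul_one (V.ρ g), h3, mul_zero, map_zero]
    exact ⟨1, Or.inl rfl, fun g => by rw [h4, h4, mul_zero]⟩

theorem finrank_pos_of_simple (hV : CategoryTheory.Simple V) : 0 < Module.finrank ℂ V := by
  rw [Module.finrank_pos_iff]
  by_contra h
  rw [not_nontrivial_iff_subsingleton] at h
  have h1 := sum_normSq V hV
  have h4 : ∀ g, V.character g = 0 := by
    intro g
    unfold FDRep.character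
    rw [Subsingleton.elim (V.ρ g) 0, map_zero]
  simp only [h4, map_zero, Finset.sum_const_zero] at h1
  exact Fintype.card_ne_zero (α := SL2 F) (by exact_mod_cast h1.symm)

noncomputable def om (a : Fˣ) : ℂ := (Fintype.card F : ℂ)⁻¹ * ∑ x : F, V.character (tt a * uu x)

theorem char_tu (a : Fˣ) (ha : a ^ 2 ≠ 1) (x : F) : V.character (tt a * uu x) = V.character (tt a) := by
  have h1 : (a : F) ^ 2 ≠ 1 := by
    intro h; apply ha; ext; simpa using h
  have h2 : 1 - (a : F) ^ 2 ≠ 0 := sub_ne_zero.2 h1.symm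
  have h0 : (a : F) ≠ 0 := a.ne_zero
  have : tt a * uu x = uu (x * a ^ 2 / (1 - a ^ 2)) * tt a * (uu (x * a ^ 2 / (1 - a ^ 2)))⁻¹ := by
    apply sl_ext <;> simp
    field_simp
    ring
  rw [this, FDRep.char_conj]

theorem om_of_ne (a : Fˣ) (ha : a ^ 2 ≠ 1) : om V a = V.character (tt a) := by
  unfold om
  have hq : (Fintype.card F : ℂ) ≠ 0 := Nat.cast_ne_zero.2 Fintype.card_ne_zero
  simp_rw [char_tu V a ha]
  simp [hq]

theorem om_data : ∃ n : AddChar (Additive Fˣ) ℂ → ℕ, (∀ a, om V a = ∑ ψ, (n ψ : ℂ) * ψ (Additive.ofMul a)) ∧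
    ∑ a, Complex.normSq (om V a) = (Fintype.card F - 1 : ℝ) * ∑ ψ, (n ψ : ℝ) ^ 2 := by
  have hq : (Fintype.card F : ℂ) ≠ 0 := Nat.cast_ne_zero.2 Fintype.card_ne_zero
  have key : ∀ ψ : AddChar (Additive Fˣ) ℂ, ∃ n : ℕ, (Fintype.card (Additive Fˣ) : ℂ)⁻¹ *
      ∑ b : Additive Fˣ, ψ (-b) * om V b.toMul = n := by
    intro ψ
    let l : (Bor : Subgroup (SL2 F)) →* ℂ := ψ.toMonoidHom.comp
      ((MonoidHom.id (Multiplicative (Additive Fˣ)) : Fˣ →* Multiplicative (Additive Fˣ)).comp Bdiag)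
    obtain ⟨n, hn⟩ := mult_nat V (Bor : Subgroup (SL2 F)).subtype l
    refine ⟨n, ?_⟩
    rw [← hn, ← Fintype.sum_equiv Bequiv (fun p : Fˣ × F => ψ (-(Additive.ofMul p.1)) * V.character (tt p.1 * uu p.2)),
      Fintype.sum_prod_type, ← Fintype.card_congr (Bequiv (F := F)), Fintype.card_prod]
    · have : ∀ b : Additive Fˣ, ψ (-b) * om V b.toMul = (Fintype.card F : ℂ)⁻¹ *
          ∑ x, ψ (-b) * V.character (tt b.toMul * uu x) := by
        intro b
        unfold om
        rw [← Finset.mul_sum]; ring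
      simp_rw [this]
      rw [← Finset.mul_sum, ← mul_assoc]
      congr 1
      · have : Fintype.card (Additive Fˣ) = Fintype.card Fˣ := Fintype.card_congr Additive.toMul
        rw [this]
        push_cast
        rw [mul_inv]
      · exact Fintype.sum_equiv Additive.toMul _ _ fun b => rfl
    · rintro ⟨a, x⟩
      have e : l (Bequiv (a, x))⁻¹ = ψ (-(Additive.ofMul a)) := by
        have : Bdiag (Bequiv (a, x))⁻¹ = a⁻¹ := by
          rw [map_inv]; congr 1; ext; simp [Bequiv, Bdiag]
        change ψ (Additive.ofMul (Bdiag (Bequiv (a, x))⁻¹)) = _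
        rw [this]; rfl
      rw [e]; rfl
  choose n hn using key
  have h1 : ∀ a : Additive Fˣ, om V a.toMul = ∑ ψ, (n ψ : ℂ) * ψ a := by
    intro a
    rw [fourier_inv (fun a : Additive Fˣ => om V a.toMul) a]
    simp_rw [hn]
  refine ⟨n, fun a => h1 (Additive.ofMul a), ?_⟩
  have h2 := fourier_parseval (fun ψ => (n ψ : ℂ)) (fun a : Additive Fˣ => om V a.toMul) h1
  have h3 : (Fintype.card (Additive Fˣ) : ℝ) = Fintype.card F - 1 := by
    have : Fintype.card (Additive Fˣ) = Fintype.card Fˣ := Fintype.card_congr Additive.toMul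
    rw [this, Fintype.card_units, Nat.cast_sub Fintype.card_pos]; simp
  rw [h3] at h2
  refine Eq.trans ?_ (h2.trans ?_)
  · exact Fintype.sum_equiv Additive.ofMul _ _ fun b => rfl
  · congr 1
    refine Finset.sum_congr rfl fun ψ _ => ?_
    rw [Complex.normSq_natCast, sq]

/-- splitting sums over the torus -/
theorem sum_units (f : Fˣ → ℝ) : ∑ a, f a = ∑ a ∈ ({1, -1} : Finset Fˣ), f a +
    ∑ a ∈ Finset.univ.filter (fun a : Fˣ => a ^ 2 ≠ 1), f a := by
  rw [← Finset.sum_filter_add_sum_filter_not Finset.univ (fun a : Fˣ => a ^ 2 = 1)]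
  congr 1
  refine Finset.sum_congr ?_ fun _ _ => rfl
  ext a
  have : a ^ 2 = 1 ↔ a = 1 ∨ a = -1 := by
    rw [Units.ext_iff, Units.ext_iff, Units.ext_iff]
    push_cast
    rw [sq]; exact mul_self_eq_one_iff
  simp only [Finset.mem_filter, Finset.mem_univ, true_and, Finset.mem_insert, Finset.mem_singleton, this]

noncomputable def zz (F : Type) [Field F] : ℝ := if ringChar F = 2 then 1 else 2

theorem neg_one_units (h : ringChar F ≠ 2) : (1 : Fˣ) ≠ -1 := by
  intro h1
  have := congrArg Units.val h1
  simp at this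
  exact Ring.neg_one_ne_one_of_char_ne_two h this.symm

theorem sum_pm (f : Fˣ → ℝ) (c : ℝ) (h1 : f 1 = c) (h2 : f (-1) = c) :
    ∑ a ∈ ({1, -1} : Finset Fˣ), f a = zz F * c := by
  unfold zz
  split_ifs with h
  · have : CharP F 2 := by rw [← h]; infer_instance
    have : (-1 : Fˣ) = 1 := by ext; simp [CharTwo.neg_eq]
    rw [this]; simp [h1]
  · rw [Finset.sum_pair (neg_one_units h), h1, h2]; ring

theorem one_ne_mz (h : ringChar F ≠ 2) : (1 : SL2 F) ≠ mz := by
  intro h1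
  have := congrArg (fun g : SL2 F => g.1 0 0) h1
  simp at this
  exact Ring.neg_one_ne_one_of_char_ne_two h this.symm

theorem sum_pm' (f : SL2 F → ℝ) (c : ℝ) (h1 : f 1 = c) (h2 : f mz = c) :
    ∑ a ∈ ({1, mz} : Finset (SL2 F)), f a = zz F * c := by
  unfold zz
  split_ifs with h
  · have : CharP F 2 := by rw [← h]; infer_instance
    have : (mz : SL2 F) = 1 := by apply sl_ext <;> simp [CharTwo.neg_eq]
    rw [this]; simp [h1]
  · rw [Finset.sum_pair (one_ne_mz h), h1, h2]; ring

end num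


section num2
variable {F : Type} [Field F] [Fintype F] (V : FDRep ℂ (SL2 F))

theorem om_one (ℓ : ℕ) (h : ∑ x : F, V.character (uu x) = Fintype.card F * ℓ) : om V 1 = ℓ := by
  have hq : (Fintype.card F : ℂ) ≠ 0 := Nat.cast_ne_zero.2 Fintype.card_ne_zero
  unfold om
  simp_rw [tt_one, one_mul]
  rw [h, inv_mul_cancel_left₀ hq]

theorem om_le (ℓ : ℕ) (h : om V 1 = ℓ) (a : Fˣ) : ‖om V a‖ ≤ ℓ := by
  obtain ⟨n, hn, -⟩ := om_data V
  have h1 := hn 1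
  rw [h] at h1
  simp only [ofMul_one, AddChar.map_zero_eq_one, mul_one] at h1
  have h2 : ℓ = ∑ ψ, n ψ := by exact_mod_cast h1
  rw [hn a, h2]
  refine (norm_sum_le _ _).trans ?_
  push_cast
  refine Finset.sum_le_sum fun ψ _ => ?_
  rw [norm_mul, AddChar.norm_apply, mul_one, Complex.norm_natCast]

noncomputable def NS : ℝ := ∑ g, if ff g = 0 then Complex.normSq (V.character g) else 0

theorem NS_nonneg : 0 ≤ NS V :=
  Finset.sum_nonneg fun g _ => by split_ifs; exacts [Complex.normSq_nonneg _, le_rfl]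

theorem NS_zero (h : NS V ≤ 0) (g : SL2 F) (hg : ff g = 0) : V.character g = 0 := by
  have h0 : NS V = 0 := le_antisymm h (NS_nonneg V)
  unfold NS at h0
  rw [Finset.sum_eq_zero_iff_of_nonneg (fun g _ => by split_ifs; exacts [Complex.normSq_nonneg _, le_rfl])] at h0
  have := h0 g (Finset.mem_univ _)
  rw [if_pos hg] at this
  exact Complex.normSq_eq_zero.1 this

theorem main_ineq (hV : CategoryTheory.Simple V) (ℓ N : ℕ) (hd : Module.finrank ℂ V = ℓ + N)
    (h1 : ∑ x : F, V.character (uu x) = Fintype.card F * ℓ)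
    (h2 : ∑ x : F, Complex.normSq (V.character (uu x)) = Fintype.card F * ((ℓ : ℝ) ^ 2 + N))
    (q : ℝ) (hq : q = Fintype.card F) :
    ∃ τ : ℝ, (q - 1) * ℓ ≤ τ + zz F * (ℓ : ℝ) ^ 2 ∧
      2 * NS V + q * (q - 1) * (zz F * (ℓ + N : ℝ) ^ 2) ≤ q * (q + 1) * (zz F * (ℓ + N : ℝ) ^ 2 + τ)
        - 2 * (q + 1) * (zz F * (q * ((ℓ : ℝ) ^ 2 + N)) + q * τ) + 2 * ((q + 1) * ((q - 1) * q)) := by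
  obtain ⟨ζ, hζ, hmz⟩ := exists_zeta V hV
  have hζn : Complex.normSq ζ = 1 := by rcases hζ with rfl | rfl <;> simp
  have hn : ∀ g, Complex.normSq (V.character (mz * g)) = Complex.normSq (V.character g) := by
    intro g; rw [hmz, map_mul, hζn, one_mul]
  let τ := ∑ a ∈ Finset.univ.filter (fun a : Fˣ => a ^ 2 ≠ 1), Complex.normSq (V.character (tt a))
  have ho1 := om_one V ℓ h1
  have homz : om V (-1) = ζ * ℓ := by
    rw [← ho1]
    unfold om
    simp_rw [tt_neg_one, tt_one, hmz, ← Finset.mul_sum, one_mul]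
    ring
  refine ⟨τ, ?_, ?_⟩
  · obtain ⟨n, hn1, hn2⟩ := om_data V
    rw [sum_units, sum_pm _ ((ℓ : ℝ) ^ 2), Finset.sum_congr rfl
      (g := fun a => Complex.normSq (V.character (tt a)))] at hn2
    · have h3 := hn1 1
      rw [ho1] at h3
      simp only [ofMul_one, AddChar.map_zero_eq_one, mul_one] at h3
      have h4 : ℓ = ∑ ψ, n ψ := by exact_mod_cast h3
      have h5 : (ℓ : ℝ) ≤ ∑ ψ, (n ψ : ℝ) ^ 2 := by
        have : ℓ ≤ ∑ ψ, n ψ ^ 2 := by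
          rw [h4]
          exact Finset.sum_le_sum fun ψ _ => Nat.le_self_pow (by norm_num) _
        exact_mod_cast this
      have h6 : 0 ≤ q - 1 := by
        rw [hq, sub_nonneg]; exact_mod_cast (Fintype.card_pos (α := F))
      rw [← hq] at hn2
      have : τ + zz F * (ℓ : ℝ) ^ 2 = (q - 1) * ∑ ψ, (n ψ : ℝ) ^ 2 := by rw [← hn2]; ring
      rw [this]
      exact mul_le_mul_of_nonneg_left h5 h6
    · intro a ha
      rw [om_of_ne V a (Finset.mem_filter.1 ha).2]
    · rw [ho1, Complex.normSq_natCast, sq]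
    · rw [homz, map_mul, hζn, Complex.normSq_natCast, sq, one_mul]
  · have hc := count_ineq (fun g => Complex.normSq (V.character g)) (fun g k => by
      rw [FDRep.char_conj]) (fun g => Complex.normSq_nonneg _)
    have e1 : Complex.normSq (V.character 1) = (ℓ + N : ℝ) ^ 2 := by
      rw [FDRep.char_one, hd, Complex.normSq_natCast]; push_cast; ring
    have e2 : Complex.normSq (V.character mz) = (ℓ + N : ℝ) ^ 2 := by
      rw [← mul_one mz, hn, e1]
    rw [sum_pm' _ ((ℓ + N : ℝ) ^ 2) e1 e2, STT_eq, SB_eq, sum_units, sum_pm _ ((ℓ + N : ℝ) ^ 2), sum_normSq V hV,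
      sum_units, sum_pm _ (q * ((ℓ : ℝ) ^ 2 + N)), card_SL2, ← hq,
      Finset.sum_congr rfl (g := fun a => q * Complex.normSq (V.character (tt a)))
      (s₁ := Finset.univ.filter (fun a : Fˣ => a ^ 2 ≠ 1)) (f := fun a => ∑ x, Complex.normSq (V.character (tt a * uu x))),
      ← Finset.mul_sum] at hc
    · push_cast [Fintype.card_pos] at hc
      rw [← hq] at hc
      exact hc
    · intro a ha
      simp_rw [char_tu V a (Finset.mem_filter.1 ha).2]
      simp [hq]
    · simp_rw [tt_one, one_mul]; rw [h2, hq]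
    · simp_rw [tt_neg_one, hn]; rw [h2, hq]
    · rw [tt_one, e1]
    · rw [tt_neg_one, e2]

theorem class_data (hV : CategoryTheory.Simple V) : ∃ ℓ N : ℕ, Module.finrank ℂ V = ℓ + N ∧ om V 1 = ℓ ∧
    (∀ a : Fˣ, a ^ 2 ≠ 1 → ‖V.character (tt a)‖ ≤ ℓ) ∧
    ((N = 0 ∧ ℓ = 1) ∨
     (ringChar F ≠ 2 ∧ 2 * N = Fintype.card F - 1 ∧ (ℓ = 0 ∨ (ℓ = 1 ∧ ∀ g, ff g = 0 → V.character g = 0))) ∨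
     (N = Fintype.card F - 1 ∧ ((ℓ = 0 ∧ (ringChar F ≠ 2 →
        NS V ≤ Fintype.card F * (Fintype.card F - 1) * (Fintype.card F - 3))) ∨
        (ℓ = 1 ∧ ∀ x : F, x ≠ 0 → V.character (uu x) = 0) ∨
        (ℓ = 2 ∧ ∀ g, ff g = 0 → V.character g = 0)))) := by
  obtain ⟨ℓ, N, hd, h1, h2, h3, h4, h5⟩ := gg_data V hV
  have hpos := finrank_pos_of_simple V hV
  refine ⟨ℓ, N, hd, om_one V ℓ h1, fun a ha => ?_, ?_⟩
  · rw [← om_of_ne V a ha]; exact om_le V ℓ (om_one V ℓ h1) a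
  obtain ⟨τ, i1, i2⟩ := main_ineq V hV ℓ N hd h1 h2 _ rfl
  have hn := NS_nonneg V
  have hq2 : 2 ≤ Fintype.card F := Fintype.one_lt_card
  have hq2' : (2 : ℝ) ≤ Fintype.card F := by exact_mod_cast hq2
  have hq1 : ((Fintype.card F - 1 : ℕ) : ℝ) = Fintype.card F - 1 := by
    rw [Nat.cast_sub (by omega)]; simp
  have hL : ℓ ≤ 2 ∨ (3 : ℝ) ≤ ℓ := by
    rcases Nat.lt_or_ge ℓ 3 with h | h
    · left; omega
    · right; exact_mod_cast h
  by_cases hc : ringChar F = 2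
  · have hz : zz F = 1 := if_pos hc
    rw [hz] at i1 i2
    -- combined inequality
    have j : 2 * NS V ≤ (Fintype.card F : ℝ) * (2 * (ℓ + N : ℝ) ^ 2 - (Fintype.card F + 1) * ((Fintype.card F - 1) * ℓ - (ℓ : ℝ) ^ 2)
        - 2 * (Fintype.card F + 1) * ((ℓ : ℝ) ^ 2 + N) + 2 * ((Fintype.card F : ℝ) ^ 2 - 1)) := by
      have := mul_le_mul_of_nonneg_left i1 (by positivity : (0 : ℝ) ≤ Fintype.card F * (Fintype.card F + 1))
      nlinarith
    rcases h5 hc with hN | hN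
    · left
      refine ⟨hN, ?_⟩
      have hj : 2 * NS V ≤ (Fintype.card F : ℝ) * ((Fintype.card F - 1) * (-(ℓ : ℝ) ^ 2 + (Fintype.card F + 1) * (2 - ℓ))) := by
        refine j.trans (le_of_eq ?_)
        rw [hN]; push_cast; ring
      by_contra hl
      have : (2 : ℝ) ≤ ℓ := by exact_mod_cast (by omega : 2 ≤ ℓ)
      have h6 : (-(ℓ : ℝ) ^ 2 + (Fintype.card F + 1) * (2 - ℓ)) < 0 := by nlinarith
      have h7 : (Fintype.card F : ℝ) * ((Fintype.card F - 1) * (-(ℓ : ℝ) ^ 2 + (Fintype.card F + 1) * (2 - ℓ))) < 0 :=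
        mul_neg_of_pos_of_neg (by linarith) (mul_neg_of_pos_of_neg (by linarith) h6)
      linarith
    · right; right
      refine ⟨hN, ?_⟩
      have hN' : (N : ℝ) = Fintype.card F - 1 := by rw [hN, hq1]
      have hj : 2 * NS V ≤ (Fintype.card F : ℝ) * ((Fintype.card F - 1) * ((2 - ℓ) * (ℓ + Fintype.card F - 1))) := by
        refine j.trans (le_of_eq ?_)
        rw [hN']; ring
      rcases hL with hL | hL
      · interval_cases ℓ
        · left; exact ⟨rfl, fun h => absurd hc h⟩
        · right; left; exact ⟨rfl, fun x hx => by rw [h3 hN x hx]; simp⟩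
        · right; right; exact ⟨rfl, fun g hg => NS_zero V (by norm_num at hj; linarith) g hg⟩
      · have h6 : ((2 - ℓ) * (ℓ + Fintype.card F - 1) : ℝ) < 0 :=
          mul_neg_of_neg_of_pos (by linarith) (by linarith)
        have h7 := mul_neg_of_pos_of_neg (by linarith : (0:ℝ) < Fintype.card F) (mul_neg_of_pos_of_neg (by linarith : (0:ℝ) < Fintype.card F - 1) h6)
        linarith
  · have hz : zz F = 2 := if_neg hc
    rw [hz] at i1 i2
    have hq3 : 3 ≤ Fintype.card F := by
      have := FiniteField.odd_card_of_char_ne_two hc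
      omega
    have hq3' : (3 : ℝ) ≤ Fintype.card F := by exact_mod_cast hq3
    have j : NS V ≤ (Fintype.card F : ℝ) * (2 * (ℓ + N : ℝ) ^ 2 - (Fintype.card F + 1) * ((Fintype.card F - 1) * ℓ / 2 - (ℓ : ℝ) ^ 2)
        - 2 * (Fintype.card F + 1) * ((ℓ : ℝ) ^ 2 + N) + ((Fintype.card F : ℝ) ^ 2 - 1)) := by
      have := mul_le_mul_of_nonneg_left i1 (by positivity : (0 : ℝ) ≤ Fintype.card F * (Fintype.card F + 1))
      nlinarith
    rcases h4 hc with hN | hN | hN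
    · left
      refine ⟨hN, ?_⟩
      have hj : NS V ≤ (Fintype.card F : ℝ) * ((Fintype.card F - 1) * (-(ℓ : ℝ) ^ 2 + (Fintype.card F + 1) * (1 - ℓ / 2))) := by
        refine j.trans (le_of_eq ?_)
        rw [hN]; push_cast; ring
      by_contra hl
      have : (2 : ℝ) ≤ ℓ := by exact_mod_cast (by omega : 2 ≤ ℓ)
      have h6 : (-(ℓ : ℝ) ^ 2 + (Fintype.card F + 1) * (1 - ℓ / 2)) < 0 := by nlinarith
      have h7 : (Fintype.card F : ℝ) * ((Fintype.card F - 1) * (-(ℓ : ℝ) ^ 2 + (Fintype.card F + 1) * (1 - ℓ / 2))) < 0 :=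
        mul_neg_of_pos_of_neg (by linarith) (mul_neg_of_pos_of_neg (by linarith) h6)
      linarith
    · right; left
      refine ⟨hc, hN, ?_⟩
      have hN' : (N : ℝ) = (Fintype.card F - 1) / 2 := by
        rw [← hq1, ← hN]; push_cast; ring
      have hj : NS V ≤ (Fintype.card F : ℝ) * ((Fintype.card F - 1) * ((1 - ℓ) * (ℓ + (Fintype.card F - 1) / 2))) := by
        refine j.trans (le_of_eq ?_)
        rw [hN']; ring
      rcases Nat.lt_or_ge ℓ 2 with hL | hL
      · interval_cases ℓ
        · left; rfl
        · right; exact ⟨rfl, fun g hg => NS_zero V (by norm_num at hj; linarith) g hg⟩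
      · have hL' : (2 : ℝ) ≤ ℓ := by exact_mod_cast hL
        have h6 : ((1 - ℓ) * (ℓ + (Fintype.card F - 1) / 2) : ℝ) < 0 :=
          mul_neg_of_neg_of_pos (by linarith) (by linarith)
        have h7 := mul_neg_of_pos_of_neg (by linarith : (0:ℝ) < Fintype.card F) (mul_neg_of_pos_of_neg (by linarith : (0:ℝ) < Fintype.card F - 1) h6)
        linarith
    · right; right
      refine ⟨hN, ?_⟩
      have hN' : (N : ℝ) = Fintype.card F - 1 := by rw [hN, hq1]
      have hj : NS V ≤ (Fintype.card F : ℝ) * ((Fintype.card F - 1) * ((2 - ℓ) * (ℓ + (Fintype.card F - 3) / 2))) := by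
        refine j.trans (le_of_eq ?_)
        rw [hN']; ring
      rcases hL with hL | hL
      · interval_cases ℓ
        · left; exact ⟨rfl, fun h => hj.trans (le_of_eq (by push_cast; ring))⟩
        · right; left; exact ⟨rfl, fun x hx => by rw [h3 hN x hx]; simp⟩
        · right; right; exact ⟨rfl, fun g hg => NS_zero V (by norm_num at hj; linarith) g hg⟩
      · have h6 : ((2 - ℓ) * (ℓ + (Fintype.card F - 3) / 2) : ℝ) < 0 :=
          mul_neg_of_neg_of_pos (by linarith) (by linarith)
        have h7 := mul_neg_of_pos_of_neg (by linarith : (0:ℝ) < Fintype.card F) (mul_neg_of_pos_of_neg (by linarith : (0:ℝ) < Fintype.card F - 1) h6)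
        linarith

end num2


theorem sylow_conj {G : Type} [Group G] [Finite G] {p : ℕ} [Fact p.Prime] (P : Sylow p G) (H : Subgroup G)
    (hH : ¬ p ∣ H.index) : ∃ k : G, ∀ x ∈ (P : Subgroup G), k * x * k⁻¹ ∈ H := by
  have h1 : ¬ p ∣ Nat.card (G ⧸ H) := hH
  obtain ⟨a, ha⟩ := P.isPGroup'.nonempty_fixed_point_of_prime_not_dvd_card (α := G ⧸ H) h1
  obtain ⟨g, rfl⟩ := QuotientGroup.mk_surjective a
  refine ⟨g⁻¹, fun x hx => ?_⟩
  have h2 := ha ⟨x, hx⟩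
  have h3 : ((x * g : G) : G ⧸ H) = (g : G ⧸ H) := h2
  have h4 := QuotientGroup.eq.1 h3.symm
  rwa [inv_inv, mul_assoc]

theorem case_triv {G : Type} [Group G] [Fintype G] (p : ℕ) (P : Subgroup G) (V : FDRep ℂ G)
    (h : ¬ p ∣ Module.finrank ℂ V) : SumInducedProperty p P V.character (Module.finrank ℂ V) := by
  apply SI.toProp
  rw [Nat.factorization_eq_zero_of_not_dvd h, pow_zero]
  exact SI.one_of_rep V P.subtype

theorem pow_fact_eq {p d n m : ℕ} [Fact p.Prime] (hd : d ∣ n) (hn : n ≠ 0) (hm : m = p ^ n.factorization p)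
    (hmd : m ∣ d) : p ^ d.factorization p = m := by
  have hp : p.Prime := Fact.out
  have hd0 : d ≠ 0 := by rintro rfl; exact hn (zero_dvd_iff.1 hd)
  have h1 : d.factorization p ≤ n.factorization p := (Nat.factorization_le_iff_dvd hd0 hn).2 hd p
  have h2 : n.factorization p ≤ d.factorization p := by
    rw [hm] at hmd
    exact (hp.pow_dvd_iff_le_factorization hd0).1 hmd
  rw [hm, le_antisymm h1 h2]

theorem case_vanish {G : Type} [Group G] [Fintype G] (p : ℕ) [Fact p.Prime] (P : Sylow p G) (V : FDRep ℂ G)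
    (hd : Module.finrank ℂ V ∣ Fintype.card G) (h : ∀ x ∈ (P : Subgroup G), x ≠ 1 → V.character x = 0) :
    SumInducedProperty p (P : Subgroup G) V.character (Module.finrank ℂ V) := by
  obtain ⟨n, hn⟩ := mult_nat V (P : Subgroup G).subtype 1
  have hP : (Fintype.card (P : Subgroup G) : ℂ) ≠ 0 := Nat.cast_ne_zero.2 Fintype.card_ne_zero
  rw [Finset.sum_eq_single 1, inv_mul_eq_iff_eq_mul₀ hP] at hn
  · simp only [MonoidHom.one_apply, one_mul, map_one, FDRep.char_one] at hn
    have hn' : Module.finrank ℂ V = Fintype.card (P : Subgroup G) * n := by exact_mod_cast hn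
    apply SI.toProp
    rw [pow_fact_eq (m := Fintype.card (P : Subgroup G)) hd Fintype.card_ne_zero ?_ ⟨n, hn'⟩]
    · refine SI.vanish_one (r := n) ?_ ?_
      · rw [OneMemClass.coe_one, FDRep.char_one, hn]; ring
      · intro x hx
        exact h x x.2 (by simpa using hx)
    · rw [← Nat.card_eq_fintype_card, ← Nat.card_eq_fintype_card]
      exact P.card_eq_multiplicity
  · intro b _ hb
    have := h b b.2 (by simpa using hb)
    rw [Subgroup.coe_subtype, this, mul_zero]
  · simp

section podd
variable {F : Type} [Field F] [Fintype F] (V : FDRep ℂ (SL2 F))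

theorem card_Bor : Nat.card (Bor : Subgroup (SL2 F)) = (Fintype.card F - 1) * Fintype.card F := by
  rw [Nat.card_congr (Bequiv (F := F)).symm, Nat.card_eq_fintype_card, Fintype.card_prod, Fintype.card_units]

theorem card_TT : Nat.card (ttHom (F := F)).range = Fintype.card F - 1 := by
  rw [Nat.card_congr (MonoidHom.ofInjective (f := ttHom (F := F)) ?_).symm.toEquiv, Nat.card_eq_fintype_card,
    Fintype.card_units]
  intro a b h
  ext
  exact congrArg (fun g : SL2 F => g.1 0 0) h

theorem card_UU : Nat.card (uuHom (F := F)).range = Fintype.card F := by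
  rw [Nat.card_congr (MonoidHom.ofInjective (f := uuHom (F := F)) ?_).symm.toEquiv, Nat.card_eq_fintype_card,
    Fintype.card_multiplicative]
  intro a b h
  exact congrArg (fun g : SL2 F => g.1 0 1) h

theorem card_SL2' : Nat.card (SL2 F) = (Fintype.card F + 1) * ((Fintype.card F - 1) * Fintype.card F) := by
  rw [Nat.card_eq_fintype_card, card_SL2]

theorem index_TT : (ttHom (F := F)).range.index = (Fintype.card F + 1) * Fintype.card F := by
  have h := (ttHom (F := F)).range.card_mul_index
  rw [card_TT, card_SL2'] at h
  have : 0 < Fintype.card F - 1 := by have := Fintype.one_lt_card (α := F); omega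
  apply Nat.eq_of_mul_eq_mul_left this
  rw [h]; ring

theorem index_UU : (uuHom (F := F)).range.index = (Fintype.card F + 1) * (Fintype.card F - 1) := by
  have h := (uuHom (F := F)).range.card_mul_index
  rw [card_UU, card_SL2'] at h
  apply Nat.eq_of_mul_eq_mul_left (Fintype.card_pos (α := F))
  rw [h]; ring

theorem exists_ff (g : SL2 F) (h : ff g ≠ 0) : ∃ k : SL2 F, k⁻¹ * g * k ∈ (Bor : Subgroup (SL2 F)) := by
  unfold ff at h
  obtain ⟨x, hx⟩ := Finset.card_ne_zero.1 h
  exact ⟨kap x, (fixp_iff g x).1 (Finset.mem_filter.1 hx).2⟩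

theorem pel_eq_one {p : ℕ} [Fact p.Prime] {G : Type} [Group G] [Finite G] (P : Sylow p G) (x : G) (hx : x ∈ (P : Subgroup G))
    (m : ℕ) (hm : ¬ p ∣ m) (h : x ^ m = 1) : x = 1 := by
  have hp : p.Prime := Fact.out
  obtain ⟨k, hk⟩ := P.isPGroup' ⟨x, hx⟩
  have hk' : x ^ p ^ k = 1 := by simpa using congrArg Subtype.val hk
  have h1 := Nat.dvd_gcd (orderOf_dvd_of_pow_eq_one h) (orderOf_dvd_of_pow_eq_one hk')
  have h2 : Nat.gcd m (p ^ k) = 1 := Nat.Coprime.pow_right _ ((Nat.coprime_comm.1 ((Nat.Prime.coprime_iff_not_dvd hp).2 hm)))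
  rw [h2, Nat.dvd_one, orderOf_eq_one_iff] at h1
  exact h1

variable {p : ℕ} [Fact p.Prime] (P : Sylow p (SL2 F))

theorem caseU (hd : Module.finrank ℂ V = Fintype.card F) (hp : p ∣ Fintype.card F)
    (h : ∀ x : F, x ≠ 0 → V.character (uu x) = 0) :
    SumInducedProperty p (P : Subgroup (SL2 F)) V.character (Module.finrank ℂ V) := by
  have hpp : p.Prime := Fact.out
  have hq := Fintype.one_lt_card (α := F)
  apply case_vanish
  · rw [hd, card_SL2, ← mul_assoc]; exact Dvd.intro_left _ rfl
  · intro x hx hx1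
    obtain ⟨k, hk⟩ := sylow_conj P (uuHom (F := F)).range (by
      rw [index_UU, hpp.dvd_mul]
      rintro (h1 | h1)
      · exact hpp.one_lt.ne' (Nat.dvd_one.1 ((Nat.dvd_add_right hp).1 h1))
      · have := (Nat.dvd_add_right h1).1 (by rwa [Nat.sub_add_cancel hq.le] : p ∣ Fintype.card F - 1 + 1)
        exact hpp.one_lt.ne' (Nat.dvd_one.1 this))
    obtain ⟨y, hy⟩ := hk x hx
    rw [← FDRep.char_conj V x k, ← hy]
    refine h y ?_
    rintro h0
    apply hx1
    have : y = 1 := h0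
    rw [this, map_one] at hy
    exact conj_eq_one_iff.1 hy.symm

theorem pdvd1 (hpp : p.Prime) (hp2 : p ≠ 2) (hp : p ∣ Fintype.card F - 1) : ¬ p ∣ (Fintype.card F + 1) * Fintype.card F := by
  have hq := Fintype.one_lt_card (α := F)
  rw [hpp.dvd_mul]
  rintro (h1 | h1)
  · have : Fintype.card F + 1 = Fintype.card F - 1 + 2 := by omega
    rw [this] at h1
    exact hp2 ((Nat.prime_dvd_prime_iff_eq hpp Nat.prime_two).1 ((Nat.dvd_add_right hp).1 h1))
  · have : Fintype.card F = Fintype.card F - 1 + 1 := by omega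
    rw [this] at h1
    exact hpp.one_lt.ne' (Nat.dvd_one.1 ((Nat.dvd_add_right hp).1 h1))

theorem pdvd2 (hpp : p.Prime) (hp2 : p ≠ 2) (hp : p ∣ Fintype.card F + 1) : ¬ p ∣ (Fintype.card F - 1) * Fintype.card F := by
  have hq := Fintype.one_lt_card (α := F)
  rw [hpp.dvd_mul]
  rintro (h1 | h1)
  · have : Fintype.card F + 1 = Fintype.card F - 1 + 2 := by omega
    rw [this] at hp
    exact hp2 ((Nat.prime_dvd_prime_iff_eq hpp Nat.prime_two).1 ((Nat.dvd_add_right h1).1 hp))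
  · exact hpp.one_lt.ne' (Nat.dvd_one.1 ((Nat.dvd_add_right h1).1 hp))

theorem caseT (hd : Module.finrank ℂ V ∣ Fintype.card F - 1) (hp2 : p ≠ 2) (hp : p ∣ Fintype.card F - 1)
    (h : ∀ a : Fˣ, a ^ 2 ≠ 1 → V.character (tt a) = 0) :
    SumInducedProperty p (P : Subgroup (SL2 F)) V.character (Module.finrank ℂ V) := by
  have hpp : p.Prime := Fact.out
  apply case_vanish
  · rw [card_SL2]; exact Dvd.dvd.mul_left (Dvd.dvd.mul_right hd _) _
  · intro x hx hx1
    obtain ⟨k, hk⟩ := sylow_conj P (ttHom (F := F)).range (by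
      rw [index_TT]; exact pdvd1 hpp hp2 hp)
    obtain ⟨a, ha⟩ := hk x hx
    rw [← FDRep.char_conj V x k, ← ha]
    refine h a ?_
    intro h0
    apply hx1
    refine pel_eq_one P x hx 2 ?_ ?_
    · rw [Nat.prime_dvd_prime_iff_eq hpp Nat.prime_two]; exact hp2
    · have : (k * x * k⁻¹) ^ 2 = 1 := by rw [← ha, ← map_pow, h0, map_one]
      rw [conj_pow] at this
      exact conj_eq_one_iff.1 this

theorem caseE (hd : Module.finrank ℂ V ∣ Fintype.card F + 1) (hp2 : p ≠ 2) (hp : p ∣ Fintype.card F + 1)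
    (h : ∀ g, ff g = 0 → V.character g = 0) :
    SumInducedProperty p (P : Subgroup (SL2 F)) V.character (Module.finrank ℂ V) := by
  have hpp : p.Prime := Fact.out
  apply case_vanish
  · rw [card_SL2]; exact Dvd.dvd.mul_right hd _
  · intro x hx hx1
    refine h x ?_
    by_contra hf
    obtain ⟨k, hk⟩ := exists_ff x hf
    apply hx1
    refine pel_eq_one P x hx _ (pdvd2 hpp hp2 hp) ?_
    rw [← card_Bor]
    have : (k⁻¹ * x * k) ^ Nat.card (Bor : Subgroup (SL2 F)) = 1 := by
      have := pow_card_eq_one' (x := (⟨_, hk⟩ : (Bor : Subgroup (SL2 F))))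
      exact congrArg Subtype.val this
    have h2 := conj_pow (a := k⁻¹) (b := x) (i := Nat.card (Bor : Subgroup (SL2 F)))
    rw [inv_inv, this] at h2
    have h3 := h2.symm
    nth_rewrite 2 [← inv_inv k] at h3
    exact conj_eq_one_iff.1 h3

end podd


structure GQ {P : Type} [Group P] (C : Subgroup P) (z : P) : Prop where
  idx : C.index = 2
  cyc : IsCyclic C
  zC : z ∈ C
  z1 : z ≠ 1
  zsq : z * z = 1
  yinv : ∀ y, y ∉ C → ∀ c ∈ C, y * c * y⁻¹ = c⁻¹
  ysq : ∀ y, y ∉ C → y * y = z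
  s4 : ∃ s ∈ C, s * s = z

section gq
variable {P : Type} [Group P] [Fintype P] {C : Subgroup P} {z : P}

theorem cyc_comm (h : IsCyclic C) {a b : P} (ha : a ∈ C) (hb : b ∈ C) : a * b = b * a := by
  have := (IsCyclic.isMulCommutative (α := C)).is_comm.comm ⟨a, ha⟩ ⟨b, hb⟩
  exact congrArg Subtype.val this

theorem GQ.central (h : GQ C z) (x : P) : x * z * x⁻¹ = z := by
  by_cases hx : x ∈ C
  · rw [cyc_comm h.cyc hx h.zC]; group
  · rw [h.yinv x hx z h.zC]; exact inv_eq_of_mul_eq_one_left h.zsq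

theorem GQ.exists_y (h : GQ C z) : ∃ y, y ∉ C := by
  by_contra hh
  push Not at hh
  have : C = ⊤ := by ext x; simp [hh x]
  have h2 := h.idx
  rw [this, Subgroup.index_top] at h2
  omega

theorem GQ.mul_not (h : GQ C z) {a b : P} (ha : a ∉ C) (hb : b ∉ C) : a * b ∈ C :=
  (Subgroup.mul_mem_iff_of_index_two h.idx).2 ⟨fun h => absurd h ha, fun h => absurd h hb⟩

theorem GQ.conj_mem (h : GQ C z) (x a : P) : x * a * x⁻¹ ∈ C ↔ a ∈ C := by
  have := Subgroup.normal_of_index_eq_two h.idx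
  constructor
  · intro h1
    have := this.conj_mem _ h1 x⁻¹
    rwa [show x⁻¹ * (x * a * x⁻¹) * x⁻¹⁻¹ = a by group] at this
  · intro h1; exact this.conj_mem _ h1 x

theorem exists_lin (Q : Subgroup P) (hQ : IsCyclic Q) (hz : z ∈ Q) (z1 : z ≠ 1) (zz : z * z = 1) :
    ∃ l : Q →* ℂ, l ⟨z, hz⟩ = -1 := by
  let _ : CommGroup Q := 
    { (inferInstance : Group Q) with
      mul_comm := fun a b => (IsCyclic.isMulCommutative (α := Q)).is_comm.comm a b }
  have h0 : (Additive.ofMul (⟨z, hz⟩ : Q)) ≠ 0 := by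
    intro h
    apply z1
    have : (⟨z, hz⟩ : Q) = 1 := h
    exact congrArg Subtype.val this
  obtain ⟨ψ, hψ⟩ := AddChar.exists_apply_ne_zero.2 h0
  let l : Q →* ℂ := ⟨⟨fun x => ψ (Additive.ofMul x), by simp⟩, fun x y => by simp [AddChar.map_add_eq_mul]⟩
  refine ⟨l, ?_⟩
  have h1 : l ⟨z, hz⟩ * l ⟨z, hz⟩ = 1 := by
    rw [← map_mul]
    have : (⟨z, hz⟩ : Q) * ⟨z, hz⟩ = 1 := Subtype.ext zz
    rw [this, map_one]
  rcases mul_self_eq_one_iff.1 h1 with h2 | h2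
  · exact absurd h2 hψ
  · exact h2

theorem mem_zp_two (zz : z * z = 1) (x : P) : x ∈ Subgroup.zpowers z ↔ x = 1 ∨ x = z := by
  constructor
  · rintro ⟨k, rfl⟩
    rcases Int.even_or_odd' k with ⟨m, rfl | rfl⟩
    · left; simp only; rw [zpow_mul]; norm_cast; rw [sq, zz, one_zpow]
    · right; simp only; rw [zpow_add, zpow_mul]; norm_cast; rw [sq, zz, one_zpow]; simp
  · rintro (rfl | rfl)
    · exact one_mem _
    · exact Subgroup.mem_zpowers _

theorem GQ.cardP (h : GQ C z) : Fintype.card P = 2 * Fintype.card C := by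
  rw [← card_mul_index' C, h.idx, mul_comm]

theorem GQ.vz (h : GQ C z) (f : P → ℂ) (r : ℕ) (h1 : f 1 = r * Fintype.card C) (ζ : ℂ) (hζ : ζ = 1 ∨ ζ = -1)
    (hz : f z = ζ * f 1) (h0 : ∀ x, x ≠ 1 → x ≠ z → f x = 0) : SI (Fintype.card C) f := by
  have hm : z ∈ Subgroup.zpowers z := Subgroup.mem_zpowers _
  have hidx : (Subgroup.zpowers z).index = Fintype.card C := by
    have h2 := card_mul_index' (Subgroup.zpowers z)
    rw [← Nat.card_eq_fintype_card, Nat.card_zpowers, orderOf_eq_prime (by rw [sq]; exact h.zsq) h.z1, h.cardP] at h2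
    omega
  obtain ⟨l, hl⟩ : ∃ l : Subgroup.zpowers z →* ℂ, l ⟨z, hm⟩ = ζ := by
    rcases hζ with rfl | rfl
    · exact ⟨1, rfl⟩
    · exact exists_lin _ inferInstance hm h.z1 h.zsq
  refine ((SI.lin _ l hidx).nsmul r).congr fun x => ?_
  by_cases hx1 : x = 1
  · subst hx1
    rw [h1, inducedChar_const _ _ 1 (one_mem _) (by simp), hidx]
    have : (⟨1, one_mem _⟩ : Subgroup.zpowers z) = 1 := rfl
    rw [this, map_one, mul_one]
  by_cases hxz : x = z
  · subst hxz
    rw [hz, h1, inducedChar_const _ _ x hm h.central, hidx, hl]; ring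
  · rw [h0 x hx1 hxz]
    unfold inducedChar
    rw [Finset.sum_eq_zero, mul_zero, mul_zero]
    intro y _
    rw [dif_neg]
    rw [mem_zp_two h.zsq]
    rintro (h2 | h2)
    · exact hx1 (conj_eq_one_iff.1 h2)
    · apply hxz
      have h3 := h.central y⁻¹
      rw [← h2] at h3
      rw [← h2, ← h3]; group

theorem GQ.half (h : GQ C z) (f : P → ℂ) (r : ℕ) (h1 : 2 * f 1 = r * Fintype.card C)
    (hz : f z = - f 1) (h0 : ∀ x, x ≠ 1 → x ≠ z → f x = 0) : SI (Fintype.card C / 2) f := by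
  obtain ⟨s, hsC, hs⟩ := h.s4
  obtain ⟨w, hw⟩ := h.exists_y
  have hsm : s ∈ Subgroup.zpowers s := Subgroup.mem_zpowers _
  have hm : z ∈ Subgroup.zpowers s := hs ▸ mul_mem hsm hsm
  have hle : Subgroup.zpowers s ≤ C := by rw [Subgroup.zpowers_le]; exact hsC
  have ho : orderOf s = 2 ^ (1 + 1) := by
    apply orderOf_eq_prime_pow
    · rw [pow_one, sq, hs]; exact h.z1
    · rw [pow_succ, pow_mul, pow_one, sq s, hs, sq, h.zsq]
  have hidx2 : 4 * (Subgroup.zpowers s).index = 2 * Fintype.card C := by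
    have h2 := card_mul_index' (Subgroup.zpowers s)
    rw [← Nat.card_eq_fintype_card, Nat.card_zpowers, ho, h.cardP] at h2
    omega
  have hidx : (Subgroup.zpowers s).index = Fintype.card C / 2 := by omega
  obtain ⟨l, hl⟩ := exists_lin _ inferInstance hm h.z1 h.zsq
  have hu : ∀ u ∈ Subgroup.zpowers s, u ≠ 1 → u ≠ z → u * u = z := by
    rintro u ⟨k, rfl⟩ hu1 huz
    simp only at *
    rw [← zpow_add, ← two_mul, zpow_mul]
    norm_cast
    rw [sq, hs]
    rcases Int.even_or_odd' k with ⟨m, rfl | rfl⟩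
    · exfalso
      have : s ^ (2 * m) ∈ Subgroup.zpowers z := by
        rw [zpow_mul]; norm_cast; rw [sq, hs]; exact Subgroup.zpow_mem _ (Subgroup.mem_zpowers _) _
      rcases (mem_zp_two h.zsq _).1 this with h2 | h2
      · exact hu1 h2
      · exact huz h2
    · rw [zpow_add, zpow_mul]; norm_cast; rw [sq, h.zsq, one_zpow]; simp
  refine ((SI.lin _ l hidx).nsmul r).congr fun x => ?_
  have hcard : (2 : ℂ) * (Subgroup.zpowers s).index = Fintype.card C := by
    have : 2 * (Subgroup.zpowers s).index = Fintype.card C := by omega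
    exact_mod_cast this
  have hf1 : f 1 = r * (Subgroup.zpowers s).index := by
    rw [← hcard] at h1; linear_combination h1 / 2
  by_cases hx1 : x = 1
  · subst hx1
    rw [hf1, inducedChar_const _ _ 1 (one_mem _) (by simp)]
    have : (⟨1, one_mem _⟩ : Subgroup.zpowers s) = 1 := rfl
    rw [this, map_one, mul_one]
  by_cases hxz : x = z
  · subst hxz
    rw [hz, hf1, inducedChar_const _ _ x hm h.central, hl]; ring
  · rw [h0 x hx1 hxz]
    unfold inducedChar
    set g : P → ℂ := fun y => if h : y * x * y⁻¹ ∈ Subgroup.zpowers s then l ⟨y * x * y⁻¹, h⟩ else 0 with hg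
    have e1 : ∑ y, g (w * y) = ∑ y, g y := Fintype.sum_equiv (Equiv.mulLeft w) _ _ fun y => rfl
    have e2 : ∀ y, g (w * y) = - g y := by
      intro y
      simp only [hg]
      by_cases hy : y * x * y⁻¹ ∈ Subgroup.zpowers s
      · have hi : w * y * x * (w * y)⁻¹ = (y * x * y⁻¹)⁻¹ := by
          rw [← h.yinv w hw _ (hle hy)]; group
        have hy' : w * y * x * (w * y)⁻¹ ∈ Subgroup.zpowers s := by rw [hi]; exact inv_mem hy
        rw [dif_pos hy, dif_pos hy']
        have huu := hu _ hy (fun h2 => hx1 (conj_eq_one_iff.1 h2)) (fun h2 => hxz (by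
          have h3 := h.central y⁻¹
          rw [← h2] at h3
          rw [← h2, ← h3]; group))
        have a1 : l ⟨_, hy⟩ * l ⟨_, hy⟩ = -1 := by
          rw [← map_mul, ← hl]; congr 1; exact Subtype.ext huu
        have a2 : l ⟨_, hy⟩ * l ⟨_, hy'⟩ = 1 := by
          rw [← map_mul, ← map_one l]; congr 1; apply Subtype.ext
          change y * x * y⁻¹ * (w * y * x * (w * y)⁻¹) = 1
          rw [hi, mul_inv_cancel]
        have a3 : l ⟨_, hy⟩ ≠ 0 := by intro h0; rw [h0] at a1; norm_num at a1
        apply mul_left_cancel₀ a3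
        linear_combination a2 + a1
      · rw [dif_neg hy, dif_neg, neg_zero]
        intro hy'
        apply hy
        have hwi : w⁻¹ ∉ C := fun h => hw (by simpa using inv_mem h)
        have := h.yinv _ hwi _ (hle hy')
        rw [show w⁻¹ * (w * y * x * (w * y)⁻¹) * w⁻¹⁻¹ = y * x * y⁻¹ by group] at this
        rw [this]; exact inv_mem hy'
    simp_rw [e2, Finset.sum_neg_distrib] at e1
    have : ∑ y, g y = 0 := by linear_combination -e1 / 2
    rw [this]; simp

end gq


section lemD
variable {P : Type} [Group P] [Fintype P] {C : Subgroup P} {z : P}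

theorem SI.lin2 (l η : P →* ℂ) (hη : ∀ x, η x = 1 ∨ η x = -1) (hne : ∃ x, η x = -1) :
    SI 2 (fun x => l x * (1 + η x)) := by
  obtain ⟨x0, hx0⟩ := hne
  obtain ⟨Q, hQ⟩ : ∃ Q : Subgroup P, ∀ x, x ∈ Q ↔ η x = 1 := ⟨η.ker, fun x => MonoidHom.mem_ker⟩
  have hidx : Q.index = 2 := by
    rw [Subgroup.index_eq_two_iff]
    refine ⟨x0, fun b => ?_⟩
    rw [hQ, hQ, map_mul, hx0]
    rcases hη b with h | h <;> rw [h] <;> norm_num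
  refine (SI.lin Q (l.comp Q.subtype) hidx).congr fun x => ?_
  unfold inducedChar
  have hc : (Fintype.card Q : ℂ) ≠ 0 := Nat.cast_ne_zero.2 Fintype.card_ne_zero
  have hcc : (Fintype.card P : ℂ) = Fintype.card Q * 2 := by
    rw [← card_mul_index' Q, hidx]; push_cast; ring
  have key : ∀ y : P, (if h : y * x * y⁻¹ ∈ Q then (l.comp Q.subtype) ⟨y * x * y⁻¹, h⟩ else 0) =
      l x * (1 + η x) / 2 := by
    intro y
    have e1 : ∀ m : P →* ℂ, m (y * x * y⁻¹) = m x := by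
      intro m
      rw [map_mul, map_mul, mul_right_comm, ← map_mul, mul_inv_cancel, map_one, one_mul]
    split_ifs with h
    · have := (hQ _).1 h
      rw [e1] at this
      change l (y * x * y⁻¹) = _
      rw [e1, this]; ring
    · rw [hQ, e1] at h
      rcases hη x with h2 | h2
      · exact absurd h2 h
      · rw [h2]; ring
  simp_rw [key]
  rw [Finset.sum_const, Finset.card_univ, nsmul_eq_mul, hcc]
  field_simp

/-- extension of a quadratic character of `C` -/
noncomputable def GQ.hat (h : GQ C z) (m : P → ℂ) (h1 : m 1 = 1) (hm : ∀ a ∈ C, ∀ b ∈ C, m (a * b) = m a * m b)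
    (hs : ∀ a ∈ C, m a * m a = 1) (hz : m z = 1) (e : ℂ) (he : e * e = 1) (y : P) (hy : y ∉ C) : P →* ℂ where
  toFun x := if x ∈ C then m x else e * m (x * y⁻¹)
  map_one' := by rw [if_pos (one_mem _), h1]
  map_mul' a b := by
    have hyi : y⁻¹ ∉ C := fun h => hy (by simpa using inv_mem h)
    have minv : ∀ a ∈ C, m a⁻¹ = m a := by
      intro a ha
      have h2 := hm a ha a⁻¹ (inv_mem ha)
      rw [mul_inv_cancel, h1] at h2
      linear_combination (-(m a⁻¹)) * hs a ha - m a * h2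
    by_cases ha : a ∈ C
    · by_cases hb : b ∈ C
      · rw [if_pos ha, if_pos hb, if_pos (mul_mem ha hb), hm a ha b hb]
      · have hab : a * b ∉ C := fun h2 => hb ((Subgroup.mul_mem_cancel_left C ha).1 h2)
        rw [if_pos ha, if_neg hb, if_neg hab, mul_assoc a, hm a ha _ (h.mul_not hb hyi)]
        ring
    · by_cases hb : b ∈ C
      · have hab : a * b ∉ C := fun h2 => ha ((Subgroup.mul_mem_cancel_right C hb).1 h2)
        rw [if_neg ha, if_pos hb, if_neg hab]
        have : a * b * y⁻¹ = (a * y⁻¹) * (y * b * y⁻¹) := by group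
        rw [this, h.yinv y hy b hb, hm _ (h.mul_not ha hyi) _ (inv_mem hb), minv b hb]
        ring
      · have hab : a * b ∈ C := h.mul_not ha hb
        rw [if_neg ha, if_neg hb, if_pos hab]
        have : a * b = (a * y⁻¹) * ((y * (b * y⁻¹) * y⁻¹) * (y * y)) := by group
        rw [this, h.yinv y hy _ (h.mul_not hb hyi), h.ysq y hy, hm _ (h.mul_not ha hyi) _
          (mul_mem (inv_mem (h.mul_not hb hyi)) h.zC), hm _ (inv_mem (h.mul_not hb hyi)) _ h.zC,
          minv _ (h.mul_not hb hyi), hz]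
        linear_combination (-(m (a * y⁻¹) * m (b * y⁻¹))) * he

theorem GQ.sum_split (h : GQ C z) (a b : ℂ) :
    ∑ y : P, (if y ∈ C then a else b) = Fintype.card C * (a + b) := by
  have h1 : (Finset.univ.filter (fun y : P => y ∈ C)).card = Fintype.card C := by
    rw [Fintype.card_subtype]
  have h2 := Finset.card_filter_add_card_filter_not (s := (Finset.univ : Finset P)) (fun y : P => y ∈ C)
  rw [h1, Finset.card_univ, h.cardP] at h2
  rw [Finset.sum_ite, Finset.sum_const, Finset.sum_const, h1,
    show (Finset.univ.filter (fun y : P => ¬ y ∈ C)).card = Fintype.card C by omega]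
  simp; ring

theorem GQ.indC (h : GQ C z) (l : C →* ℂ) :
    SI 2 (fun x => if hx : x ∈ C then l ⟨x, hx⟩ + l ⟨x, hx⟩⁻¹ else 0) := by
  refine (SI.lin C l h.idx).congr fun x => ?_
  have hc : (Fintype.card C : ℂ) ≠ 0 := Nat.cast_ne_zero.2 Fintype.card_ne_zero
  unfold inducedChar
  split_ifs with hx
  · have key : ∀ y : P, (if h : y * x * y⁻¹ ∈ C then l ⟨y * x * y⁻¹, h⟩ else 0) =
        if y ∈ C then l ⟨x, hx⟩ else l ⟨x, hx⟩⁻¹ := by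
      intro y
      rw [dif_pos ((h.conj_mem y x).2 hx)]
      split_ifs with hy
      · congr 2
        rw [cyc_comm h.cyc hy hx]; group
      · congr 1
        exact Subtype.ext (h.yinv y hy x hx)
    simp_rw [key]
    rw [h.sum_split, inv_mul_cancel_left₀ hc]
  · rw [Finset.sum_eq_zero, mul_zero]
    intro y _
    rw [dif_neg]
    rwa [h.conj_mem]

/-- character theory of cyclic subgroups -/
theorem cyc_data {G : Type} [Group G] (V : FDRep ℂ G) (φ : C →* G) (hC : IsCyclic C) (heven : 2 ∣ Fintype.card C)
    (hinv : ∀ x, V.character (φ x⁻¹) = V.character (φ x)) :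
    ∃ (ι : Type) (_ : Fintype ι) (θ : ι → (C →* ℂ)) (n : ι → ℕ) (σ : ι → ι) (i0 i1 : ι),
      (∀ i, σ (σ i) = i) ∧ (∀ i x, θ (σ i) x = θ i x⁻¹) ∧ (∀ i, n (σ i) = n i) ∧ (∀ i, σ i = i ↔ i = i0 ∨ i = i1) ∧
      i0 ≠ i1 ∧ θ i0 = 1 ∧ (∃ x, θ i1 x = -1) ∧ 
      (∀ x, V.character (φ x) = ∑ i, (n i : ℂ) * θ i x) ∧
      (∀ i, (Fintype.card C : ℂ)⁻¹ * ∑ x, θ i x⁻¹ * V.character (φ x) = n i) ∧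
      (∑ x, Complex.normSq (V.character (φ x)) = Fintype.card C * ∑ i, (n i : ℝ) ^ 2) := by
  let _ : CommGroup C := 
    { (inferInstance : Group C) with
      mul_comm := fun a b => (IsCyclic.isMulCommutative (α := C)).is_comm.comm a b }
  obtain ⟨n, h1, h2, h3⟩ := fa_char (A := Additive C) V φ
  let θ : AddChar (Additive C) ℂ → (C →* ℂ) := fun ψ =>
    ⟨⟨fun x => ψ (Additive.ofMul x), by simp⟩, fun x y => by simp [AddChar.map_add_eq_mul]⟩
  have hθ : ∀ ψ x, θ ψ x = ψ (Additive.ofMul x) := fun _ _ => rfl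
  have hinj : ∀ ψ ψ', (∀ x, θ ψ x = θ ψ' x) → ψ = ψ' := by
    intro ψ ψ' h; ext x; exact h x.toMul
  have hfin : Fintype.card (Additive C) = Fintype.card C := Fintype.card_congr Additive.toMul
  obtain ⟨g, hg⟩ := hC.exists_generator
  have hgen : ∀ ψ ψ', θ ψ g = θ ψ' g → ψ = ψ' := by
    intro ψ ψ' h
    apply hinj
    intro x
    obtain ⟨k, rfl⟩ := hg x
    have hu : ∀ ψ, θ ψ (g ^ k) = (θ ψ g) ^ k := fun ψ => map_zpow' (θ ψ) (fun y => by
      apply eq_inv_of_mul_eq_one_left; rw [← map_mul, inv_mul_cancel, map_one]) g k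
    simp only [hu, h]
  obtain ⟨μ, hμ⟩ : ∃ μ : AddChar (Additive C) ℂ, addOrderOf μ = 2 := by
    have : Fact (Nat.Prime 2) := ⟨Nat.prime_two⟩
    apply exists_prime_addOrderOf_dvd_card
    rw [AddChar.card_eq, hfin]; exact heven
  have hμ0 : μ ≠ 0 := by rintro rfl; simp at hμ
  have hμ2 : μ + μ = 0 := by rw [← two_nsmul, ← hμ]; exact addOrderOf_nsmul_eq_zero μ
  have hsq : ∀ ψ : AddChar (Additive C) ℂ, ψ + ψ = 0 → θ ψ g = 1 ∨ θ ψ g = -1 := by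
    intro ψ h
    apply mul_self_eq_one_iff.1
    have := congrArg (fun χ : AddChar (Additive C) ℂ => χ (Additive.ofMul g)) h
    rw [hθ]
    simpa [AddChar.add_apply] using this
  have h0g : θ 0 g = 1 := by rw [hθ]; simp
  have hμg : θ μ g = -1 := by
    rcases hsq μ hμ2 with h | h
    · exact absurd (hgen μ 0 (h.trans h0g.symm)) hμ0
    · exact h
  refine ⟨AddChar (Additive C) ℂ, inferInstance, θ, n, fun ψ => -ψ, 0, μ, fun i => neg_neg i, ?_, ?_, ?_, hμ0.symm, ?_, ?_, ?_, ?_, ?_⟩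
  · intro ψ x
    rw [hθ, hθ, AddChar.neg_apply]; rfl
  · intro ψ
    rw [← Nat.cast_inj (R := ℂ), ← h1, ← h1]
    congr 1
    refine Fintype.sum_equiv (Equiv.neg _) _ _ fun b => ?_
    rw [AddChar.neg_apply]
    congr 1
    exact (hinv b.toMul).symm
  · intro ψ
    constructor
    · intro h
      have h4 : ψ + ψ = 0 := by nth_rewrite 1 [← h]; exact neg_add_cancel ψ
      rcases hsq ψ h4 with h5 | h5
      · left; exact hgen _ _ (h5.trans h0g.symm)
      · right; exact hgen _ _ (h5.trans hμg.symm)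
    · rintro (rfl | rfl)
      · simp
      · exact neg_eq_of_add_eq_zero_left hμ2
  · ext x; rw [hθ]; simp
  · exact ⟨g, hμg⟩
  · intro x
    exact h2 (Additive.ofMul x)
  · intro ψ
    rw [← h1, hfin]
    congr 1
    exact Fintype.sum_equiv Additive.ofMul _ _ fun x => rfl
  · rw [hfin] at h3
    rw [← h3]
    exact Fintype.sum_equiv Additive.ofMul _ _ fun x => rfl

end lemD


theorem invol_sum {ι : Type} [Fintype ι] (σ : ι → ι) (hσ : ∀ i, σ (σ i) = i) (i0 i1 : ι) (hne : i0 ≠ i1)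
    (hfix : ∀ i, σ i = i ↔ i = i0 ∨ i = i1) {R : Type} [AddCommMonoid R] :
    ∃ S : Finset ι, ∀ F : ι → R, ∑ i, F i = ∑ i ∈ S, (F i + F (σ i)) + (F i0 + F i1) := by
  let e := Fintype.equivFin ι
  refine ⟨Finset.univ.filter (fun i => e i < e (σ i)), fun F => ?_⟩
  have h1 : ∀ i, F i = ((if e i < e (σ i) then F i else 0) + (if e (σ i) < e i then F i else 0)) +
      (if σ i = i then F i else 0) := by
    intro i
    rcases lt_trichotomy (e i) (e (σ i)) with h | h | h
    · have h3 : σ i ≠ i := fun h2 => by rw [h2] at h; exact lt_irrefl _ h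
      simp [h, h.le, h3, not_lt_of_gt h]
    · have h3 : σ i = i := (e.injective h).symm
      simp [h3]
    · have h3 : σ i ≠ i := fun h2 => by rw [h2] at h; exact lt_irrefl _ h
      simp [h, h.le, h3, not_lt_of_gt h]
  rw [Finset.sum_congr rfl (fun i _ => h1 i), Finset.sum_add_distrib, Finset.sum_add_distrib,
    Finset.sum_add_distrib]
  congr 1
  · congr 1
    · rw [Finset.sum_filter]
    · rw [Finset.sum_filter]
      refine Fintype.sum_equiv ⟨σ, σ, hσ, hσ⟩ _ _ fun i => ?_
      simp only [Equiv.coe_fn_mk, hσ]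
  · rw [← Finset.sum_filter]
    have : Finset.univ.filter (fun i => σ i = i) = {i0, i1} := by
      ext i; simp [hfix]
    rw [this, Finset.sum_pair hne]

section lemD
variable {P : Type} [Group P] [Fintype P] {C : Subgroup P} {z : P}

theorem lemD (h : GQ C z) {G : Type} [Group G] (V : FDRep ℂ G) (φ : P →* G) (heven : 2 ∣ Module.finrank ℂ V)
    (c : ℂ) (hc : ∀ y, y ∉ C → V.character (φ y) = c) (ζ : ℂ) (hζ : ζ = 1 ∨ ζ = -1)
    (hz : ∀ x, V.character (φ (z * x)) = ζ * V.character (φ x)) (hc2 : ‖c‖ ≤ 2)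
    (hb : ζ = 1 → ∀ θ : C →* ℂ, (∀ x, θ x * θ x = 1) → ∑ x : C, θ x⁻¹ * V.character (φ x) ≠ 0) :
    SI 2 (fun x => V.character (φ x)) := by
  obtain ⟨y, hy⟩ := h.exists_y
  have hyi : y⁻¹ ∉ C := fun h => hy (by simpa using inv_mem h)
  have hcard : (Fintype.card C : ℂ) ≠ 0 := Nat.cast_ne_zero.2 Fintype.card_ne_zero
  have heC : 2 ∣ Fintype.card C := by
    have : orderOf (⟨z, h.zC⟩ : C) = 2 := by
      apply orderOf_eq_prime
      · ext; simp [pow_two, h.zsq]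
      · intro h2; exact h.z1 (congrArg Subtype.val h2)
    rw [← this]; exact orderOf_dvd_card
  obtain ⟨ι, _, θ, n, σ, i0, i1, hσ, hθσ, hnσ, hfix, hne, hθ0, ⟨x1, hx1⟩, hexp, hmult, -⟩ :=
    cyc_data V (φ.comp C.subtype) h.cyc heC (fun x => by
      have : φ.comp C.subtype x⁻¹ = φ y * φ.comp C.subtype x * (φ y)⁻¹ := by
        simp only [MonoidHom.comp_apply, Subgroup.coe_subtype, Subgroup.coe_inv]
        rw [← h.yinv y hy x x.2]; simp
      rw [this, FDRep.char_conj])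
  obtain ⟨S, hS⟩ := invol_sum (R := ℂ) σ hσ i0 i1 hne hfix
  have hfC : ∀ x : C, V.character (φ x) = ∑ i ∈ S, (n i : ℂ) * (θ i x + θ i x⁻¹) + ((n i0 : ℂ) + n i1 * θ i1 x) := by
    intro x
    have := hexp x
    rw [hS] at this
    refine this.trans ?_
    rw [hθ0]
    simp only [hnσ, hθσ, mul_add, MonoidHom.one_apply, mul_one]
  have hpart : SI 2 (fun x => ∑ i ∈ S, (n i : ℂ) * (if hx : x ∈ C then θ i ⟨x, hx⟩ + θ i ⟨x, hx⟩⁻¹ else 0)) :=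
    SI.sum S _ fun i _ => (h.indC (θ i)).nsmul (n i)
  have hμsq : ∀ x, θ i1 x * θ i1 x = 1 := by
    intro x
    have h1 := hθσ i1 x
    rw [(hfix i1).2 (Or.inr rfl)] at h1
    nth_rewrite 2 [h1]
    rw [← map_mul, mul_inv_cancel, map_one]
  have hμinv : ∀ x, θ i1 x⁻¹ = θ i1 x := by
    intro x
    have h1 := hθσ i1 x
    rw [(hfix i1).2 (Or.inr rfl)] at h1
    exact h1.symm
  have hμz : θ i1 ⟨z, h.zC⟩ = 1 := by
    obtain ⟨s, hs, hss⟩ := h.s4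
    have : (⟨z, h.zC⟩ : C) = ⟨s, hs⟩ * ⟨s, hs⟩ := Subtype.ext hss.symm
    rw [this, map_mul, hμsq]
  have hsum0 : ∀ i, ∑ x : C, θ i x⁻¹ * V.character (φ x) = Fintype.card C * n i := by
    intro i
    rw [← hmult i, mul_inv_cancel_left₀ hcard]; rfl
  rcases hζ with rfl | rfl
  · -- ζ = 1
    have hn0 : n i0 ≠ 0 := by
      intro h0
      apply hb rfl (θ i0) (by intro x; rw [hθ0]; simp)
      rw [hsum0, h0]; simp
    have hn1 : n i1 ≠ 0 := by
      intro h0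
      apply hb rfl (θ i1) hμsq
      rw [hsum0, h0]; simp
    let m : P → ℂ := fun x => if hx : x ∈ C then θ i1 ⟨x, hx⟩ else 0
    have mC : ∀ x (hx : x ∈ C), m x = θ i1 ⟨x, hx⟩ := fun x hx => dif_pos hx
    have m1 : m 1 = 1 := by rw [mC 1 (one_mem _)]; exact map_one _
    have mm : ∀ a ∈ C, ∀ b ∈ C, m (a * b) = m a * m b := by
      intro a ha b hb
      rw [mC a ha, mC b hb, mC _ (mul_mem ha hb), ← map_mul]; rfl
    have ms : ∀ a ∈ C, m a * m a = 1 := fun a ha => by rw [mC a ha, hμsq]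
    have mz : m z = 1 := by rw [mC z h.zC, hμz]
    let ε := h.hat (fun _ => 1) rfl (by simp) (by simp) rfl (-1) (by norm_num) y hy
    let M := h.hat m m1 mm ms mz 1 (by norm_num) y hy
    let N := h.hat m m1 mm ms mz (-1) (by norm_num) y hy
    have εC : ∀ x, x ∈ C → ε x = 1 := fun x hx => if_pos hx
    have εN : ∀ x, x ∉ C → ε x = -1 := fun x hx => (if_neg hx).trans (by simp)
    have MC : ∀ x (hx : x ∈ C), M x = θ i1 ⟨x, hx⟩ := fun x hx => (if_pos hx).trans (mC x hx)
    have NC : ∀ x (hx : x ∈ C), N x = θ i1 ⟨x, hx⟩ := fun x hx => (if_pos hx).trans (mC x hx)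
    have NN : ∀ x, x ∉ C → N x = - M x := fun x hx => by
      have h1 : N x = -1 * m (x * y⁻¹) := if_neg hx
      have h2 : M x = 1 * m (x * y⁻¹) := if_neg hx
      rw [h1, h2]; ring
    have Msq : ∀ x, M x = 1 ∨ M x = -1 := by
      intro x
      apply mul_self_eq_one_iff.1
      by_cases hx : x ∈ C
      · rw [MC x hx, hμsq]
      · have h2 : M x = 1 * m (x * y⁻¹) := if_neg hx
        rw [h2, one_mul, ms _ (h.mul_not hx hyi)]
    have Nsq : ∀ x, N x = 1 ∨ N x = -1 := by
      intro x
      by_cases hx : x ∈ C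
      · rw [NC x hx, ← MC x hx]; exact Msq x
      · rw [NN x hx]
        rcases Msq x with h1 | h1 <;> rw [h1] <;> simp
    have Esq : ∀ x, ε x = 1 ∨ ε x = -1 := by
      intro x
      by_cases hx : x ∈ C
      · exact Or.inl (εC x hx)
      · exact Or.inr (εN x hx)
    have L1 := SI.lin2 1 ε Esq ⟨y, εN y hy⟩
    have L2 := SI.lin2 M ε Esq ⟨y, εN y hy⟩
    have Mx1 : M x1 = -1 := by rw [MC x1 x1.2]; exact hx1
    have Nx1 : N x1 = -1 := by rw [NC x1 x1.2]; exact hx1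
    -- multiplicities
    obtain ⟨a, ha⟩ := mult_nat V φ 1
    obtain ⟨b, hb'⟩ := mult_nat V φ M
    have hcP : (Fintype.card P : ℂ) = 2 * Fintype.card C := by rw [h.cardP]; push_cast; ring
    have hcPne : (Fintype.card P : ℂ) ≠ 0 := Nat.cast_ne_zero.2 Fintype.card_ne_zero
    have hMC : ∑ x : C, θ i1 x = 0 := by
      apply sum_hom_units_eq_zero
      intro h2; rw [h2] at hx1; norm_num at hx1
    have hMP : ∑ x : P, M x⁻¹ = 0 := by
      rw [Fintype.sum_equiv (Equiv.inv P) (fun x : P => M x⁻¹) (fun x => M x) (fun x => rfl)]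
      apply sum_hom_units_eq_zero
      intro h2; rw [h2] at Mx1; norm_num at Mx1
    have hEP : ∑ x : P, (1 : P →* ℂ) x⁻¹ = Fintype.card P := by simp
    have split : ∀ l : P →* ℂ, ∑ x : P, l x⁻¹ * V.character (φ x) = 
        ∑ x : C, l x⁻¹ * V.character (φ x) + c * (∑ x : P, l x⁻¹ - ∑ x : C, l x⁻¹) := by
      intro l
      rw [← Fintype.sum_subtype_add_sum_subtype (fun x => x ∈ C) (fun x : P => l x⁻¹ * V.character (φ x)),
        ← Fintype.sum_subtype_add_sum_subtype (fun x => x ∈ C) (fun x : P => l x⁻¹)]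
      congr 1
      rw [show (∑ i : {x // x ∈ C}, l (i:P)⁻¹) = ∑ x : C, l x⁻¹ from rfl, add_sub_cancel_left, Finset.mul_sum]
      refine Finset.sum_congr rfl fun x _ => ?_
      rw [hc x x.2]; ring
    have e1 : (n i0 : ℂ) + c = 2 * a := by
      rw [split, hEP] at ha
      have h5 := hsum0 i0
      rw [hθ0] at h5
      simp only [MonoidHom.one_apply, one_mul] at ha h5
      rw [h5] at ha
      rw [← ha, hcP]
      simp
      field_simp
      ring
    have e2 : (n i1 : ℂ) = 2 * b := by
      rw [split, hMP] at hb'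
      have h5 := hsum0 i1
      have h6 : ∀ x : C, M (x : P)⁻¹ = θ i1 x⁻¹ := fun x => MC _ (inv_mem x.2)
      simp only [h6] at hb'
      simp only [hμinv] at hb' h5
      rw [h5, hMC] at hb'
      rw [← hb', hcP]
      field_simp
      ring
    have e2' : n i1 = 2 * b := by exact_mod_cast e2
    have hd : Module.finrank ℂ V = 2 * (∑ i ∈ S, n i) + n i0 + n i1 := by
      have h5 := hfC 1
      rw [show φ ((1 : C) : P) = 1 from map_one φ, FDRep.char_one] at h5
      simp only [map_one, inv_one, mul_one] at h5
      have h6 : (Module.finrank ℂ V : ℂ) = ((2 * (∑ i ∈ S, n i) + n i0 + n i1 : ℕ) : ℂ) := by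
        rw [h5]; push_cast
        rw [Finset.mul_sum, add_assoc]
        congr 1
        refine Finset.sum_congr rfl fun i _ => by ring
      exact_mod_cast h6
    obtain ⟨b0, hb0⟩ : ∃ b0, n i0 = 2 * b0 := by
      have : 2 ∣ n i0 := by omega
      exact this
    obtain ⟨j, hj⟩ : ∃ j : ℤ, j = (a : ℤ) - b0 := ⟨_, rfl⟩
    have hcj : c = 2 * (j : ℂ) := by
      rw [hb0] at e1; rw [hj]; push_cast at e1 ⊢; linear_combination e1
    have hj1 : |j| ≤ 1 := by
      have h7 : ‖c‖ = 2 * ((|j| : ℤ) : ℝ) := by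
        rw [hcj, norm_mul, Complex.norm_intCast]; simp
      rw [h7] at hc2
      have : ((|j| : ℤ) : ℝ) ≤ 1 := by linarith
      exact_mod_cast this
    obtain ⟨B0, rfl⟩ : ∃ B0, b0 = B0 + 1 := ⟨b0 - 1, by omega⟩
    obtain ⟨B, rfl⟩ : ∃ B, b = B + 1 := ⟨b - 1, by omega⟩
    have hval : ∀ g : P → ℂ, (∀ x (hx : x ∈ C), g x = 2 * (B0 + 1) + 2 * (B + 1) * θ i1 ⟨x, hx⟩) →
        (∀ x, x ∉ C → g x = c) → SI 2 g → SI 2 (fun x => V.character (φ x)) := by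
      intro g g1 g2 hg
      refine (hpart.add hg).congr fun x => ?_
      by_cases hx : x ∈ C
      · simp only [dif_pos hx]
        rw [g1 x hx]
        have := hfC ⟨x, hx⟩
        rw [this, hb0, e2']
        push_cast
        rfl
      · simp only [dif_neg hx]
        rw [hc x hx, g2 x hx]; simp
    have : j = 0 ∨ j = 1 ∨ j = -1 := by
      rw [abs_le] at hj1; omega
    rcases this with rfl | rfl | rfl
    · refine hval _ ?_ ?_ ((L1.nsmul (B0 + 1)).add (L2.nsmul (B + 1)))
      · intro x hx
        simp only [εC x hx, MC x hx, MonoidHom.one_apply]; push_cast; ring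
      · intro x hx
        simp only [εN x hx, hcj]; simp
    · refine hval _ ?_ ?_ (((L1.nsmul B0).add (L2.nsmul B)).add
        ((SI.lin2 1 M Msq ⟨x1, Mx1⟩).add (SI.lin2 1 N Nsq ⟨x1, Nx1⟩)))
      · intro x hx
        simp only [εC x hx, MC x hx, NC x hx, MonoidHom.one_apply]; push_cast; ring
      · intro x hx
        simp only [εN x hx, hcj, NN x hx, MonoidHom.one_apply]; push_cast; ring
    · refine hval _ ?_ ?_ (((L1.nsmul B0).add (L2.nsmul B)).add
        ((SI.lin2 ε M Msq ⟨x1, Mx1⟩).add (SI.lin2 ε N Nsq ⟨x1, Nx1⟩)))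
      · intro x hx
        simp only [εC x hx, MC x hx, NC x hx, MonoidHom.one_apply]; push_cast; ring
      · intro x hx
        simp only [εN x hx, hcj, NN x hx, MonoidHom.one_apply]; push_cast; ring
  · -- ζ = -1
    have hn : ∀ i, θ i ⟨z, h.zC⟩ = 1 → n i = 0 := by
      intro i hi
      have h1 := hsum0 i
      have h2 : ∑ x : C, θ i x⁻¹ * V.character (φ x) = - ∑ x : C, θ i x⁻¹ * V.character (φ x) := by
        rw [← Finset.sum_neg_distrib]
        refine Fintype.sum_equiv (Equiv.mulLeft ⟨z, h.zC⟩) _ _ fun x => ?_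
        simp only [Equiv.coe_mulLeft, Subgroup.coe_mul, hz, mul_inv_rev, map_mul (θ i)]
        have : θ i (⟨z, h.zC⟩ : C)⁻¹ = 1 := by
          have h3 : θ i ((⟨z, h.zC⟩ : C)⁻¹ * ⟨z, h.zC⟩) = 1 := by simp
          rw [map_mul, hi, mul_one] at h3; exact h3
        rw [this]; ring
      have h3 : (Fintype.card C : ℂ) * n i = 0 := by rw [h1] at h2; linear_combination h2 / 2
      simpa [hcard] using h3
    have h0 := hn i0 (by rw [hθ0]; rfl)
    have h1 := hn i1 hμz
    have hc0 : c = 0 := by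
      have hzy : z * y ∉ C := fun h2 => hy ((Subgroup.mul_mem_cancel_left C h.zC).1 h2)
      have := hz y
      rw [hc _ hzy, hc _ hy] at this
      linear_combination this / 2
    refine hpart.congr fun x => ?_
    by_cases hx : x ∈ C
    · simp only [dif_pos hx]
      have := hfC ⟨x, hx⟩
      rw [this, h0, h1]
      push_cast; ring
    · simp only [dif_neg hx]
      rw [hc x hx, hc0]; simp

end lemD


section lemS
variable {G : Type} [Group G] [Fintype G]

def dihH (T0 : Subgroup G) (x : G) (hxx : x * x ∈ T0) (hinv : ∀ t ∈ T0, x * t * x⁻¹ = t⁻¹) : Subgroup G where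
  carrier := {g | g ∈ T0 ∨ x * g ∈ T0}
  one_mem' := Or.inl (one_mem _)
  mul_mem' := by
    have h1 : ∀ t ∈ T0, x⁻¹ * t * x = t⁻¹ := by
      intro t ht
      have := hinv _ (inv_mem ht)
      rw [inv_inv] at this
      calc x⁻¹ * t * x = x⁻¹ * (x * t⁻¹ * x⁻¹) * x := by rw [this]
        _ = t⁻¹ := by group
    rintro a b (ha | ha) (hb | hb)
    · exact Or.inl (mul_mem ha hb)
    · right
      have : x * (a * b) = (x * a * x⁻¹) * (x * b) := by group
      rw [this, hinv a ha]; exact mul_mem (inv_mem ha) hb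
    · right
      rw [← mul_assoc]; exact mul_mem ha hb
    · left
      have : a * b = (x⁻¹ * (x * a) * x) * (x * x)⁻¹ * (x * b) := by group
      rw [this, h1 _ ha]
      exact mul_mem (mul_mem (inv_mem ha) (inv_mem hxx)) hb
  inv_mem' := by
    rintro a (ha | ha)
    · exact Or.inl (inv_mem ha)
    · right
      have : x * a⁻¹ = (x * (x * a)⁻¹ * x⁻¹) * (x * x) := by group
      rw [this, hinv _ (inv_mem ha)]
      exact mul_mem (by simpa using ha) hxx

theorem lemS (P : Sylow 2 G) (T0 : Subgroup G) (hcyc : IsCyclic T0) (ze x : G) (hz : ze ∈ T0) (hz1 : ze ≠ 1)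
    (hzz : ze * ze = 1) (hx : x ∉ T0) (hxx : x * x = ze) (hinv : ∀ t ∈ T0, x * t * x⁻¹ = t⁻¹)
    (hze : ∀ g, ze * g = g * ze) (r : ℕ) (hG : Nat.card G = 2 * Nat.card T0 * r) (hr : ¬ 2 ∣ r) (h8 : 8 ∣ Nat.card G) :
    ∃ (k : G) (C : Subgroup (P : Subgroup G)) (z : (P : Subgroup G)), (z : G) = ze ∧ GQ C z ∧
      (∀ y : (P : Subgroup G), y ∈ C ↔ k * y * k⁻¹ ∈ T0) ∧
      2 * Nat.card C = 2 ^ (Nat.card G).factorization 2 ∧ Nat.card C ∣ Nat.card T0 := by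
  let H := dihH T0 x (hxx ▸ hz) hinv
  have hH : ∀ g, g ∈ H ↔ g ∈ T0 ∨ x * g ∈ T0 := fun g => Iff.rfl
  have hcomm : ∀ a ∈ T0, ∀ b ∈ T0, a * b = b * a := fun a ha b hb => cyc_comm hcyc ha hb
  have hinv' : ∀ t ∈ T0, x⁻¹ * t * x = t⁻¹ := by
    intro t ht
    have := hinv _ (inv_mem ht)
    rw [inv_inv] at this
    calc x⁻¹ * t * x = x⁻¹ * (x * t⁻¹ * x⁻¹) * x := by rw [this]
      _ = t⁻¹ := by group
  have hle : T0 ≤ H := fun t ht => Or.inl ht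
  have hxH : x ∈ H := Or.inr (hxx ▸ hz)
  have hrel : T0.relIndex H = 2 := by
    rw [Subgroup.relIndex_eq_two_iff]
    refine ⟨x, hxH, fun b hb => ?_⟩
    by_cases h : b ∈ T0
    · right
      refine ⟨h, fun h2 => hx ((Subgroup.mul_mem_cancel_left T0 h).1 h2)⟩
    · left
      refine ⟨?_, h⟩
      have h2 := ((hH b).1 hb).resolve_left h
      have : b * x = x⁻¹ * (x * b) * x := by group
      rw [this, hinv' _ h2]; exact inv_mem h2
  have hidx : H.index = r := by
    have h1 := Subgroup.relIndex_mul_index hle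
    have h2 := Subgroup.card_mul_index T0
    have h3 : 0 < Nat.card T0 := Nat.card_pos
    rw [hrel] at h1
    rw [← h1, hG] at h2
    apply Nat.eq_of_mul_eq_mul_left (show 0 < Nat.card T0 * 2 by omega)
    linarith
  obtain ⟨k, hk⟩ := sylow_conj P H (by rw [hidx]; exact hr)
  let C : Subgroup (P : Subgroup G) := (T0.comap (MulAut.conj k).toMonoidHom).subgroupOf (P : Subgroup G)
  have hC : ∀ y : (P : Subgroup G), y ∈ C ↔ k * y * k⁻¹ ∈ T0 := fun y => Iff.rfl
  have hinj : Function.Injective (fun c : C => (⟨k * c * k⁻¹, (hC c).1 c.2⟩ : T0)) := by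
    intro a b hab
    have := congrArg Subtype.val hab
    simp only [mul_left_inj, mul_right_inj] at this
    exact Subtype.ext (Subtype.ext this)
  let f : C →* T0 := ⟨⟨fun c => ⟨k * c * k⁻¹, (hC c).1 c.2⟩, by ext; simp⟩, fun a b => by ext; simp⟩
  have hPcard : Nat.card (P : Subgroup G) = 2 ^ (Nat.card G).factorization 2 := P.card_eq_multiplicity
  have hdvd : Nat.card C ∣ Nat.card T0 := Subgroup.card_dvd_of_injective f hinj
  have hGne : Nat.card G ≠ 0 := Nat.card_pos.ne'
  obtain ⟨y, hy⟩ : ∃ y, y ∉ C := by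
    by_contra! hall
    have h1 : C = ⊤ := by ext; simp [hall]
    have h2 : Nat.card C = Nat.card (P : Subgroup G) := by rw [h1]; exact Subgroup.card_top
    rw [h2, hPcard] at hdvd
    have h3 : 2 ^ ((Nat.card G).factorization 2 + 1) ∣ Nat.card G := by
      obtain ⟨m, hm⟩ := hdvd
      refine ⟨m * r, ?_⟩
      rw [pow_succ]
      conv_lhs => rw [hG, hm]
      ring
    rw [Nat.Prime.pow_dvd_iff_le_factorization Nat.prime_two hGne] at h3
    omega
  have hnot : ∀ u ∈ H, u ∉ T0 → ∃ t ∈ T0, u = x⁻¹ * t := by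
    intro u hu hu2
    exact ⟨x * u, ((hH u).1 hu).resolve_left hu2, by group⟩
  have hmul : ∀ u ∈ H, u ∉ T0 → ∀ v ∈ H, v ∉ T0 → u * v ∈ T0 := by
    intro u hu hu2 v hv hv2
    obtain ⟨t, ht, rfl⟩ := hnot u hu hu2
    obtain ⟨s, hs, rfl⟩ := hnot v hv hv2
    have : x⁻¹ * t * (x⁻¹ * s) = (x⁻¹ * t * x) * (x * x)⁻¹ * s := by group
    rw [this, hinv' t ht, hxx]
    exact mul_mem (mul_mem (inv_mem ht) (inv_mem hz)) hs
  have hsq : ∀ u ∈ H, u ∉ T0 → u * u = ze := by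
    intro u hu hu2
    obtain ⟨t, ht, rfl⟩ := hnot u hu hu2
    have : x⁻¹ * t * (x⁻¹ * t) = (x⁻¹ * t * x) * (x * x)⁻¹ * t := by group
    rw [this, hinv' t ht, hxx, inv_eq_of_mul_eq_one_right hzz, mul_assoc, hze]; group
  have hcj : ∀ u ∈ H, u ∉ T0 → ∀ c ∈ T0, u * c * u⁻¹ = c⁻¹ := by
    intro u hu hu2 c hc
    obtain ⟨t, ht, rfl⟩ := hnot u hu hu2
    have : x⁻¹ * t * c * (x⁻¹ * t)⁻¹ = x⁻¹ * (t * c * t⁻¹) * x := by group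
    rw [this, hcomm t ht c hc, mul_inv_cancel_right, hinv' c hc]
  have hsqP : ∀ y : (P : Subgroup G), y ∉ C → (y : G) * y = ze := by
    intro y hy
    have := hsq _ (hk y y.2) (fun h => hy ((hC y).2 h))
    have h2 : (y : G) * y = k⁻¹ * (k * y * k⁻¹ * (k * y * k⁻¹)) * k := by group
    rw [h2, this, mul_assoc, hze]; group
  have hzP : ze ∈ (P : Subgroup G) := by
    rw [← hsqP y hy]; exact mul_mem y.2 y.2
  have hidx2 : C.index = 2 := by
    rw [Subgroup.index_eq_two_iff]
    refine ⟨y, fun b => ?_⟩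
    by_cases h : b ∈ C
    · right
      refine ⟨h, fun h2 => hy ((Subgroup.mul_mem_cancel_left C h).1 h2)⟩
    · left
      refine ⟨?_, h⟩
      rw [hC]
      have : k * (b * y : (P : Subgroup G)) * k⁻¹ = (k * b * k⁻¹) * (k * y * k⁻¹) := by
        rw [Subgroup.coe_mul]; group
      rw [this]
      exact hmul _ (hk b b.2) (fun h3 => h ((hC b).2 h3)) _ (hk y y.2) (fun h3 => hy ((hC y).2 h3))
  have hcycC : IsCyclic C := isCyclic_of_injective f hinj
  have hcardC : 2 * Nat.card C = 2 ^ (Nat.card G).factorization 2 := by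
    have := Subgroup.card_mul_index C
    rw [hidx2, hPcard] at this; rw [← this]; ring
  have hzC : (⟨ze, hzP⟩ : (P : Subgroup G)) ∈ C := by
    rw [hC]
    have : k * ze * k⁻¹ = ze := by rw [← hze]; group
    rw [this]; exact hz
  refine ⟨k, C, ⟨ze, hzP⟩, rfl, ⟨hidx2, hcycC, hzC, ?_, ?_, ?_, ?_, ?_⟩, hC, hcardC, hdvd⟩
  · intro h; exact hz1 (congrArg Subtype.val h)
  · ext; exact hzz
  · intro y hy c hc
    have h1 := hcj _ (hk y y.2) (fun h3 => hy ((hC y).2 h3)) _ ((hC c).1 hc)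
    apply Subtype.ext
    simp only [Subgroup.coe_mul, Subgroup.coe_inv]
    calc (y : G) * c * (y : G)⁻¹ = k⁻¹ * (k * y * k⁻¹ * (k * c * k⁻¹) * (k * y * k⁻¹)⁻¹) * k := by group
      _ = (c : G)⁻¹ := by rw [h1]; group
  · intro y hy; exact Subtype.ext (hsqP y hy)
  · have h4 : 4 ∣ Nat.card C := by
      have h8' : 2 ^ 3 ∣ Nat.card G := h8
      rw [Nat.Prime.pow_dvd_iff_le_factorization Nat.prime_two hGne] at h8'
      have : 2 ^ 3 ∣ 2 ^ (Nat.card G).factorization 2 := pow_dvd_pow 2 h8'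
      rw [← hcardC] at this
      omega
    obtain ⟨m, hm⟩ := h4
    obtain ⟨g, hg⟩ := hcycC.exists_generator
    obtain ⟨j, hj⟩ := Subgroup.mem_zpowers_iff.1 (hg ⟨⟨ze, hzP⟩, hzC⟩)
    have hord : orderOf g = 4 * m := by rw [← hm]; exact orderOf_eq_card_of_forall_mem_zpowers hg
    have h1 : g ^ (2 * j) = 1 := by
      rw [two_mul, zpow_add, hj]; ext; exact hzz
    rw [← orderOf_dvd_iff_zpow_eq_one, hord] at h1
    obtain ⟨i, hi⟩ := h1
    refine ⟨(g ^ ((m : ℤ) * i) : C), SetLike.coe_mem _, ?_⟩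
    rw [← Subgroup.coe_mul, ← zpow_add, show (m : ℤ) * i + m * i = j by push_cast at hi; linarith, hj]

end lemS


section wrap
variable {G : Type} [Group G] [Fintype G]

theorem cardC_eq {a e r : ℕ} (he : e ≠ 0) (hr : ¬ 2 ∣ r) (h : 2 * a = 2 ^ (2 * e * r).factorization 2) :
    a = 2 ^ e.factorization 2 := by
  have hr0 : r ≠ 0 := by rintro rfl; simp at hr
  rw [Nat.factorization_mul (by omega) hr0, Nat.factorization_mul (by norm_num) he] at h
  simp only [Finsupp.add_apply, Nat.factorization_eq_zero_of_not_dvd hr, 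
    Nat.Prime.factorization_self Nat.prime_two, add_zero] at h
  rw [pow_add] at h
  omega

variable (P : Sylow 2 G) {C : Subgroup (P : Subgroup G)} {z : (P : Subgroup G)} (V : FDRep ℂ G)

theorem vcase (h : GQ C z) (e : ℕ) (he : e ≠ 0) (hC : Nat.card C = 2 ^ e.factorization 2)
    (hd : Module.finrank ℂ V = e ∨ 2 * Module.finrank ℂ V = e) (ζ : ℂ) (hζ : ζ = 1 ∨ ζ = -1)
    (hz : V.character z = ζ * V.character 1)
    (h0 : ∀ x : (P : Subgroup G), x ≠ 1 → x ≠ z → V.character x = 0) :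
    SumInducedProperty 2 (P : Subgroup G) V.character (Module.finrank ℂ V) := by
  have hC' : Fintype.card C = 2 ^ e.factorization 2 := by rw [← hC, Nat.card_eq_fintype_card]
  have hdvd : 2 ^ e.factorization 2 ∣ e := Nat.ordProj_dvd e 2
  obtain ⟨r, hr⟩ := hdvd
  apply SI.toProp
  rcases hd with hd | hd
  · rw [hd, ← hC']
    refine h.vz _ r ?_ ζ hζ ?_ h0
    · rw [OneMemClass.coe_one, FDRep.char_one, hd, hC']; exact_mod_cast (hr.trans (mul_comm _ _))
    · rw [hz]; rfl
  · have hf : e.factorization 2 = 1 + (Module.finrank ℂ V).factorization 2 := by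
      rw [← hd, Nat.factorization_mul (by norm_num) (by omega)]
      simp [Nat.Prime.factorization_self Nat.prime_two]
    have h2 : 2 ^ (Module.finrank ℂ V).factorization 2 = Fintype.card C / 2 := by
      rw [hC', hf, pow_add, pow_one, Nat.mul_div_cancel_left _ (by norm_num)]
    rw [h2]
    refine h.half _ r ?_ ?_ h0
    · rw [OneMemClass.coe_one, FDRep.char_one, hC']
      have := hd.trans (hr.trans (mul_comm _ _))
      exact_mod_cast this
    · rcases hζ with rfl | rfl
      · exfalso
        obtain ⟨n, hn⟩ := mult_nat V (P : Subgroup G).subtype 1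
        have hP : (Fintype.card (P : Subgroup G) : ℂ) ≠ 0 := Nat.cast_ne_zero.2 Fintype.card_ne_zero
        rw [← Finset.sum_subset (Finset.subset_univ {1, z}), Finset.sum_pair h.z1.symm,
          inv_mul_eq_iff_eq_mul₀ hP, h.cardP] at hn
        · simp only [MonoidHom.one_apply, one_mul, map_one, Subgroup.coe_subtype, hz, FDRep.char_one] at hn
          have hn' : Module.finrank ℂ V + Module.finrank ℂ V = 2 * Fintype.card C * n := by exact_mod_cast hn
          have h5 : Module.finrank ℂ V = Fintype.card C * n := by linarith
          have h6 : 2 ^ e.factorization 2 ∣ Module.finrank ℂ V := ⟨n, by rw [h5, hC']⟩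
          rw [Nat.Prime.pow_dvd_iff_le_factorization Nat.prime_two (by omega)] at h6
          omega
        · intro x _ hx
          simp only [Finset.mem_insert, Finset.mem_singleton, not_or] at hx
          rw [Subgroup.coe_subtype, h0 x hx.1 hx.2, mul_zero]
      · rw [hz, OneMemClass.coe_one]; ring

theorem Dcase (h : GQ C z) (hd : Module.finrank ℂ V % 4 = 2) (ζ : ℂ) (hζ : ζ = 1 ∨ ζ = -1)
    (hz : ∀ g, V.character (z * g) = ζ * V.character g)
    (c : ℂ) (hc : ∀ y : (P : Subgroup G), y ∉ C → V.character y = c) (hc2 : ‖c‖ ≤ 2)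
    (R : ℝ) (hR : ∑ x : C, (if (x : (P : Subgroup G)) = 1 ∨ (x : (P : Subgroup G)) = z then 0 else
      Complex.normSq (V.character x)) ≤ R) (hCR : (Nat.card C : ℝ) * R < 4 * (Module.finrank ℂ V : ℝ) ^ 2) :
    SumInducedProperty 2 (P : Subgroup G) V.character (Module.finrank ℂ V) := by
  apply SI.toProp
  have hv : (Module.finrank ℂ V).factorization 2 = 1 := by
    obtain ⟨k, hk⟩ : ∃ k, Module.finrank ℂ V = 2 * (2 * k + 1) := ⟨Module.finrank ℂ V / 4, by omega⟩
    rw [hk, Nat.factorization_mul (by norm_num) (by omega)]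
    simp [Nat.Prime.factorization_self Nat.prime_two, Nat.factorization_eq_zero_of_not_dvd]
  rw [hv, pow_one]
  refine lemD h V (P : Subgroup G).subtype (by omega) c hc ζ hζ (fun x => ?_) hc2 ?_
  · simp [hz]
  rintro rfl θ hθ hsum
  have hθz : θ ⟨z, h.zC⟩ = 1 := by
    obtain ⟨s, hs, hss⟩ := h.s4
    have : (⟨z, h.zC⟩ : C) = ⟨s, hs⟩ * ⟨s, hs⟩ := Subtype.ext hss.symm
    rw [this, map_mul, hθ]
  have hθn : ∀ x, ‖θ x‖ = 1 := by
    intro x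
    rcases mul_self_eq_one_iff.1 (hθ x) with h1 | h1 <;> rw [h1] <;> simp
  have hz1 : V.character z = V.character 1 := by have := hz 1; simpa using this
  have hzinv : (⟨z, h.zC⟩ : C)⁻¹ = ⟨z, h.zC⟩ := by
    apply inv_eq_of_mul_eq_one_left; exact Subtype.ext h.zsq
  have hne : (1 : C) ≠ ⟨z, h.zC⟩ := fun h2 => h.z1 (congrArg Subtype.val h2).symm
  let F : C → ℂ := fun x => if (x : (P : Subgroup G)) = 1 ∨ (x : (P : Subgroup G)) = z then 0 else
      θ x⁻¹ * V.character x
  have hspl : ∑ x : C, θ x⁻¹ * V.character ((P : Subgroup G).subtype x) = ∑ x : C, F x + 2 * Module.finrank ℂ V := by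
    have h3 : ∀ x : C, θ x⁻¹ * V.character ((P : Subgroup G).subtype x) = F x + 
        (if x ∈ ({1, ⟨z, h.zC⟩} : Finset C) then (Module.finrank ℂ V : ℂ) else 0) := by
      intro x
      simp only [F, Finset.mem_insert, Finset.mem_singleton]
      by_cases h4 : x = 1
      · subst h4; simp
      · by_cases h5 : x = ⟨z, h.zC⟩
        · subst h5
          simp [hzinv, hθz, hz1]
        · have h6 : (x : (P : Subgroup G)) ≠ 1 := fun h7 => h4 (Subtype.ext h7)
          have h7 : (x : (P : Subgroup G)) ≠ z := fun h7 => h5 (Subtype.ext h7)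
          simp only [h4, h5, h6, h7, or_self, if_false, add_zero, Subgroup.coe_subtype]
    rw [Finset.sum_congr rfl (fun x _ => h3 x), Finset.sum_add_distrib, ← Finset.sum_filter,
      Finset.filter_mem_eq_inter, Finset.univ_inter, Finset.sum_pair hne]
    ring
  rw [hspl] at hsum
  have h8 : ‖∑ x : C, F x‖ = 2 * Module.finrank ℂ V := by
    rw [eq_neg_of_add_eq_zero_left hsum, norm_neg]; simp
  have h9 : (2 * (Module.finrank ℂ V : ℝ)) ^ 2 ≤ Fintype.card C * ∑ x : C, ‖F x‖ ^ 2 := by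
    rw [← h8]
    calc ‖∑ x : C, F x‖ ^ 2 ≤ (∑ x : C, ‖F x‖) ^ 2 := by gcongr; exact norm_sum_le _ _
      _ ≤ _ := by
        have := sq_sum_le_card_mul_sum_sq (s := (Finset.univ : Finset C)) (f := fun x => ‖F x‖)
        rwa [Finset.card_univ] at this
  have h10 : ∑ x : C, ‖F x‖ ^ 2 ≤ R := by
    refine le_trans (le_of_eq (Finset.sum_congr rfl fun x _ => ?_)) hR
    simp only [F]
    split_ifs
    · simp
    · rw [norm_mul, hθn, one_mul, Complex.normSq_eq_norm_sq]
  rw [Nat.card_eq_fintype_card] at hCR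
  have h11 : (Fintype.card C : ℝ) * ∑ x : C, ‖F x‖ ^ 2 ≤ Fintype.card C * R := by gcongr
  nlinarith

end wrap


section tr
variable {F : Type} [Field F]

def JJ : SL2 F := sl 0 (-1) 1 0 (by ring)

@[simp] theorem JJ00 : (JJ : SL2 F).1 0 0 = 0 := rfl
@[simp] theorem JJ01 : (JJ : SL2 F).1 0 1 = -1 := rfl
@[simp] theorem JJ10 : (JJ : SL2 F).1 1 0 = 1 := rfl
@[simp] theorem JJ11 : (JJ : SL2 F).1 1 1 = 0 := rfl

theorem tr_conj (g k : SL2 F) : (k * g * k⁻¹).1 0 0 + (k * g * k⁻¹).1 1 1 = g.1 0 0 + g.1 1 1 := by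
  simp only [mul00, mul01, mul10, mul11, inv00, inv01, inv10, inv11]
  linear_combination (g.1 0 0 + g.1 1 1) * det1 k

theorem tr_conj' (g k : SL2 F) : (k⁻¹ * g * k).1 0 0 + (k⁻¹ * g * k).1 1 1 = g.1 0 0 + g.1 1 1 := by
  have := tr_conj g k⁻¹
  rwa [inv_inv] at this

theorem tr_sq (y : SL2 F) (h : y * y = mz) : y.1 0 0 + y.1 1 1 = 0 := by
  have h00 := congrArg (fun g : SL2 F => g.1 0 0) h
  have h01 := congrArg (fun g : SL2 F => g.1 0 1) h
  have h10 := congrArg (fun g : SL2 F => g.1 1 0) h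
  have h11 := congrArg (fun g : SL2 F => g.1 1 1) h
  simp only [mul00, mul01, mul10, mul11, mz00, mz01, mz10, mz11] at h00 h01 h10 h11
  have hd := det1 y
  have ha : (y.1 0 0 + y.1 1 1) * y.1 0 0 = 0 := by linear_combination h00 + hd
  have hb : (y.1 0 0 + y.1 1 1) * y.1 0 1 = 0 := by linear_combination h01
  linear_combination (-(y.1 0 0 + y.1 1 1)) * hd + y.1 1 1 * ha - y.1 1 0 * hb

theorem ff_sq (g : SL2 F) [Fintype F] (h : ff g ≠ 0) : ∃ w : F, (g.1 0 0 + g.1 1 1) ^ 2 - 4 = w ^ 2 := by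
  obtain ⟨k, hk⟩ := exists_ff g h
  rw [mem_Bor] at hk
  have h1 := tr_conj' g k
  have h2 := det1 (k⁻¹ * g * k)
  refine ⟨(k⁻¹ * g * k).1 0 0 - (k⁻¹ * g * k).1 1 1, ?_⟩
  rw [← h1]
  linear_combination 4 * h2 + 4 * (k⁻¹ * g * k).1 0 1 * hk

variable [Fintype F]

theorem sum_two_sq (h2 : ringChar F ≠ 2) (x : F) : ∃ a b : F, a ^ 2 + b ^ 2 = x := by
  obtain ⟨a, b, hab⟩ := FiniteField.exists_root_sum_quadratic (R := F) (f := Polynomial.X ^ 2)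
    (g := Polynomial.X ^ 2 - Polynomial.C x) (by simp) (Polynomial.degree_X_pow_sub_C (by norm_num) _)
    (FiniteField.odd_card_of_char_ne_two h2)
  refine ⟨a, b, ?_⟩
  simp at hab
  linear_combination hab

theorem two_ne (h2 : ringChar F ≠ 2) : (2 : F) ≠ 0 := Ring.two_ne_zero h2

theorem tr0_conj (h2 : ringChar F ≠ 2) (g : SL2 F) (h : g.1 0 0 + g.1 1 1 = 0) : ∃ k : SL2 F, g = k * JJ * k⁻¹ := by
  have hd := det1 g
  have h2' := two_ne h2
  obtain ⟨a, b, c, e⟩ : ∃ a b c, g.1 0 0 = a ∧ g.1 0 1 = b ∧ g.1 1 0 = c := ⟨_, _, _, rfl, rfl, rfl⟩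
  obtain ⟨e1, e2, e3⟩ := e
  have e4 : g.1 1 1 = -a := by rw [e1] at h; linear_combination h
  rw [e1, e2, e3, e4] at hd
  obtain ⟨u, v, huv⟩ : ∃ u v : F, u * (c * u - a * v) - (a * u + b * v) * v = 1 := by
    by_cases hc : c = 0
    · have ha : a ≠ 0 := by rintro rfl; rw [hc] at hd; simp at hd
      refine ⟨-(1 + b) / (2 * a), 1, ?_⟩
      rw [hc]; field_simp; ring
    · obtain ⟨s, t, hst⟩ := sum_two_sq h2 c
      refine ⟨(s + a * t) / c, t, ?_⟩
      field_simp
      linear_combination hst + t ^ 2 * hd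
  refine ⟨sl u (a * u + b * v) v (c * u - a * v) huv, ?_⟩
  rw [eq_mul_inv_iff_mul_eq]
  apply sl_ext <;> simp only [mul00, mul01, mul10, mul11, sl00, sl01, sl10, sl11, JJ00, JJ01, JJ10, JJ11, e1, e2, e3, e4]
  · ring
  · linear_combination (-u) * hd
  · ring
  · linear_combination (-v) * hd

theorem char_tr0 (V : FDRep ℂ (SL2 F)) (h2 : ringChar F ≠ 2) (g : SL2 F) (h : g.1 0 0 + g.1 1 1 = 0) :
    V.character g = V.character JJ := by
  obtain ⟨k, rfl⟩ := tr0_conj h2 g h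
  rw [FDRep.char_conj]

theorem units_sq (a : Fˣ) (h : a ^ 2 = 1) : a = 1 ∨ a = -1 := by
  have h1 := congrArg Units.val h
  simp only [Units.val_pow_eq_pow_val, Units.val_one, sq_eq_one_iff] at h1
  rcases h1 with h1 | h1
  · left; exact Units.ext h1
  · right; exact Units.ext (by simpa using h1)

theorem odd_arith1 {q : ℕ} (h : q % 4 = 1) (hq : 1 < q) : ∃ r, (q + 1) * ((q - 1) * q) = 2 * (q - 1) * r ∧ ¬ 2 ∣ r ∧
    8 ∣ (q + 1) * ((q - 1) * q) := by
  obtain ⟨m, rfl⟩ : ∃ m, q = 4 * m + 1 := ⟨q / 4, by omega⟩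
  refine ⟨(2 * m + 1) * (4 * m + 1), ?_, ?_, ?_⟩
  · simp; ring
  · rw [Nat.Prime.dvd_mul Nat.prime_two]; omega
  · simp only [Nat.add_sub_cancel]
    exact ⟨(2 * m + 1) * (m * (4 * m + 1)), by ring⟩

theorem odd_arith3 {q : ℕ} (h : q % 4 = 3) : ∃ r, (q + 1) * ((q - 1) * q) = 2 * (q + 1) * r ∧ ¬ 2 ∣ r ∧
    8 ∣ (q + 1) * ((q - 1) * q) := by
  obtain ⟨m, rfl⟩ : ∃ m, q = 4 * m + 3 := ⟨q / 4, by omega⟩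
  refine ⟨(2 * m + 1) * (4 * m + 3), ?_, ?_, ?_⟩
  · rw [show 4 * m + 3 - 1 = 2 * (2 * m + 1) by omega]; ring
  · rw [Nat.Prime.dvd_mul Nat.prime_two]; omega
  · rw [show 4 * m + 3 - 1 = 2 * (2 * m + 1) by omega]
    exact ⟨(m + 1) * ((2 * m + 1) * (4 * m + 3)), by ring⟩

variable (V : FDRep ℂ (SL2 F)) (P : Sylow 2 (SL2 F))

theorem setup1 (h2 : ringChar F ≠ 2) (hq : Fintype.card F % 4 = 1) :
    ∃ (C : Subgroup (P : Subgroup (SL2 F))) (z : (P : Subgroup (SL2 F))), (z : SL2 F) = mz ∧ GQ C z ∧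
      Nat.card C = 2 ^ (Fintype.card F - 1).factorization 2 ∧ Nat.card C ∣ Fintype.card F - 1 ∧
      (∀ y : (P : Subgroup (SL2 F)), y ∉ C → V.character y = V.character JJ) ∧
      (∃ a : Fˣ, a ^ 2 ≠ 1 ∧ V.character JJ = V.character (tt a)) ∧
      (∀ y : (P : Subgroup (SL2 F)), y ≠ 1 → y ≠ z → ∃ a : Fˣ, a ^ 2 ≠ 1 ∧ V.character y = V.character (tt a)) := by
  have hq1 := Fintype.one_lt_card (α := F)
  obtain ⟨r, hr1, hr2, hr3⟩ := odd_arith1 hq hq1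
  have h2' := two_ne h2
  have hcyc : IsCyclic (ttHom (F := F)).range :=
    isCyclic_of_surjective (ttHom (F := F)).rangeRestrict (ttHom (F := F)).rangeRestrict_surjective
  have hmem : ∀ t : SL2 F, t ∈ (ttHom (F := F)).range ↔ ∃ a, tt a = t := fun t => Iff.rfl
  obtain ⟨k, C, z, hz, h, hC, hcard, hdvd⟩ := lemS P (ttHom (F := F)).range hcyc mz JJ
    ((hmem _).2 ⟨-1, tt_neg_one⟩) (one_ne_mz h2).symm mz_mul_mz (by
      rintro ⟨a, ha⟩
      have := congrArg (fun g : SL2 F => g.1 1 0) ha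
      change (tt a).1 1 0 = _ at this
      simp at this) (by apply sl_ext <;> simp) (by
      rintro t ⟨a, rfl⟩
      change JJ * tt a * JJ⁻¹ = (tt a)⁻¹
      apply sl_ext <;> simp) mz_comm r (by rw [card_SL2', card_TT, hr1]) hr2 (by rw [card_SL2']; exact hr3)
  rw [card_SL2', hr1] at hcard
  have hcard := cardC_eq (by omega) hr2 hcard
  rw [card_TT] at hdvd
  obtain ⟨i, hi⟩ : IsSquare (-1 : F) := FiniteField.isSquare_neg_one_iff.2 (by omega)
  have hi0 : i ≠ 0 := by rintro rfl; simp at hi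
  have hii : i⁻¹ = -i := by
    rw [inv_eq_iff_eq_inv, eq_comm, inv_eq_of_mul_eq_one_right]; linear_combination hi
  have hJ : ∃ a : Fˣ, a ^ 2 ≠ 1 ∧ V.character JJ = V.character (tt a) := by
    refine ⟨Units.mk0 i hi0, ?_, ?_⟩
    · intro h
      have := congrArg Units.val h
      simp only [Units.val_pow_eq_pow_val, Units.val_one, Units.val_mk0] at this
      apply h2'
      linear_combination (-1) * hi - this
    · rw [char_tr0 V h2 (tt _)]
      simp [hii]
  have hoff : ∀ y : (P : Subgroup (SL2 F)), y ∉ C → V.character y = V.character JJ := by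
    intro y hy
    apply char_tr0 V h2
    apply tr_sq
    rw [← hz, ← h.ysq y hy]; rfl
  refine ⟨C, z, hz, h, hcard, hdvd, hoff, hJ, ?_⟩
  intro y hy1 hyz
  by_cases hy : y ∈ C
  · obtain ⟨a, ha⟩ := (hC y).1 hy
    refine ⟨a, ?_, ?_⟩
    · intro h1
      have h5 : (y : SL2 F) = k⁻¹ * tt a * k := by
        change tt a = _ at ha
        rw [ha]; group
      rcases units_sq a h1 with rfl | rfl
      · apply hy1
        apply Subtype.ext
        rw [h5, tt_one]; simp
      · apply hyz
        apply Subtype.ext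
        rw [h5, tt_neg_one, hz, mul_assoc, mz_comm]; group
    · change tt a = _ at ha
      rw [ha, FDRep.char_conj]
  · rw [hoff y hy]; exact hJ

end tr


section c1
variable {F : Type} [Field F] [Fintype F] (V : FDRep ℂ (SL2 F)) (P : Sylow 2 (SL2 F))

theorem case1 (hV : CategoryTheory.Simple V) (h2 : ringChar F ≠ 2) (hq : Fintype.card F % 4 = 1) :
    SumInducedProperty 2 (P : Subgroup (SL2 F)) V.character (Module.finrank ℂ V) := by
  obtain ⟨ℓ, N, hd, -, hT, hcase⟩ := class_data V hV
  obtain ⟨ζ, hζ, hzg⟩ := exists_zeta V hV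
  obtain ⟨C, z, hz, h, hcard, hdvd, hoff, ⟨a, ha, haJ⟩, hall⟩ := setup1 V P h2 hq
  have hq1 := Fintype.one_lt_card (α := F)
  have hz1 : V.character z = ζ * V.character 1 := by rw [hz]; simpa using hzg 1
  have hbd : ∀ y : (P : Subgroup (SL2 F)), y ≠ 1 → y ≠ z → ‖V.character y‖ ≤ ℓ := by
    intro y h1 h2
    obtain ⟨a, ha, h3⟩ := hall y h1 h2
    rw [h3]; exact hT a ha
  have hvan : ℓ = 0 → (Module.finrank ℂ V = Fintype.card F - 1 ∨ 2 * Module.finrank ℂ V = Fintype.card F - 1) →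
      SumInducedProperty 2 (P : Subgroup (SL2 F)) V.character (Module.finrank ℂ V) := by
    rintro rfl h5
    refine vcase P V h (Fintype.card F - 1) (by omega) hcard h5 ζ hζ hz1 ?_
    intro x h6 h7
    have := hbd x h6 h7
    simpa using this
  rcases hcase with ⟨hN, hl⟩ | ⟨-, hN, hl | ⟨hl, -⟩⟩ | ⟨hN, ⟨hl, -⟩ | ⟨hl, -⟩ | ⟨hl, -⟩⟩
  · apply case_triv; omega
  · apply hvan hl; right; omega
  · apply case_triv; omega
  · apply hvan hl; left; omega
  · apply case_triv; omega
  · have hdq : Module.finrank ℂ V = Fintype.card F + 1 := by omega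
    have hCle : Nat.card C ≤ Fintype.card F - 1 := Nat.le_of_dvd (by omega) hdvd
    refine Dcase P V h (by omega) ζ hζ (by intro g; rw [hz]; exact hzg g) _ hoff ?_ (4 * Nat.card C) ?_ ?_
    · rw [haJ]; have := hT a ha; rw [hl] at this; simpa using this
    · calc _ ≤ ∑ x : C, (4 : ℝ) := by
            refine Finset.sum_le_sum fun x _ => ?_
            split_ifs with h6
            · norm_num
            · push Not at h6
              have := hbd x h6.1 h6.2
              rw [hl] at this
              rw [Complex.normSq_eq_norm_sq]
              have h7 := norm_nonneg (V.character ((x : (P : Subgroup (SL2 F))) : SL2 F))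
              push_cast at this
              nlinarith
        _ = _ := by rw [Finset.sum_const, Finset.card_univ, Nat.card_eq_fintype_card, nsmul_eq_mul]; ring
    · rw [hdq]
      have h8 : (Nat.card C : ℝ) < Fintype.card F + 1 := by
        have : Nat.card C < Fintype.card F + 1 := by omega
        exact_mod_cast this
      have h9 : (0 : ℝ) ≤ Nat.card C := by positivity
      push_cast
      nlinarith

end c1

section tp
variable {F : Type} [Field F]

def Tp : Subgroup (SL2 F) where
  carrier := {g | g.1 0 0 = g.1 1 1 ∧ g.1 0 1 = - g.1 1 0}
  one_mem' := by simp
  mul_mem' := by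
    rintro a b ⟨h1, h2⟩ ⟨h3, h4⟩
    refine ⟨?_, ?_⟩
    · simp only [mul00, mul11, h1, h2, h3, h4]; ring
    · simp only [mul01, mul10, h1, h2, h3, h4]; ring
  inv_mem' := by
    rintro a ⟨h1, h2⟩
    refine ⟨?_, ?_⟩
    · simp only [inv00, inv11, h1]
    · simp only [inv01, inv10, h2]

theorem mem_Tp (g : SL2 F) : g ∈ (Tp : Subgroup (SL2 F)) ↔ g.1 0 0 = g.1 1 1 ∧ g.1 0 1 = - g.1 1 0 := Iff.rfl

theorem Tp_det {g : SL2 F} (h : g ∈ (Tp : Subgroup (SL2 F))) : g.1 0 0 ^ 2 + g.1 0 1 ^ 2 = 1 := by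
  have := det1 g
  obtain ⟨h1, h2⟩ := h
  linear_combination this + g.1 0 0 * h1 + g.1 0 1 * h2

variable [Fintype F]

theorem Tp_cyclic (hns : ∀ w : F, w ^ 2 ≠ -1) : IsCyclic (Tp : Subgroup (SL2 F)) := by
  obtain ⟨i, hi⟩ := IsAlgClosed.exists_pow_nat_eq (-1 : AlgebraicClosure F) (n := 2) (by norm_num)
  let am := algebraMap F (AlgebraicClosure F)
  let f : (Tp : Subgroup (SL2 F)) →* AlgebraicClosure F :=
    { toFun := fun g => am (g.1.1 0 0) + am (g.1.1 0 1) * i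
      map_one' := by simp
      map_mul' := by
        rintro ⟨a, h1, h2⟩ ⟨b, h3, h4⟩
        simp only [Subgroup.coe_mul, MulMemClass.mk_mul_mk, mul00, mul01, map_add, map_mul]
        have e1 : a.1 1 0 = - a.1 0 1 := by rw [h2, neg_neg]
        have e2 : b.1 1 0 = - b.1 0 1 := by rw [h4, neg_neg]
        rw [e2, ← h3, map_neg]
        linear_combination (-(am (a.1 0 1)) * am (b.1 0 1)) * hi }
  refine isCyclic_of_injective_ringHom f ?_
  rintro ⟨a, h1, h2⟩ ⟨b, h3, h4⟩ hab
  change am (a.1 0 0) + am (a.1 0 1) * i = am (b.1 0 0) + am (b.1 0 1) * i at hab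
  have hb : a.1 0 1 = b.1 0 1 := by
    by_contra hne
    have hne' : a.1 0 1 - b.1 0 1 ≠ 0 := sub_ne_zero.2 hne
    apply hns ((b.1 0 0 - a.1 0 0) / (a.1 0 1 - b.1 0 1))
    apply am.injective
    have hne2 : am (a.1 0 1 - b.1 0 1) ≠ 0 := (map_ne_zero am).2 hne'
    rw [map_pow, map_div₀, map_neg, map_one, ← hi]
    congr 1
    rw [div_eq_iff hne2, map_sub, map_sub]
    linear_combination (-1) * hab
  have ha : a.1 0 0 = b.1 0 0 := by
    rw [hb] at hab
    exact am.injective (add_right_cancel hab)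
  apply Subtype.ext
  apply sl_ext
  · exact ha
  · exact hb
  · linear_combination h2 - h4 - hb
  · rw [← h1, ← h3, ha]

theorem Tp_card (h2 : ringChar F ≠ 2) (hns : ∀ w : F, w ^ 2 ≠ -1) :
    Nat.card (Tp : Subgroup (SL2 F)) = Fintype.card F + 1 := by
  have h2' := two_ne h2
  have hne : ∀ t : F, 1 + t ^ 2 ≠ 0 := fun t h => hns t (by linear_combination h)
  let f : Option F → (Tp : Subgroup (SL2 F)) := fun o => match o with
    | none => ⟨mz, by simp [mem_Tp]⟩
    | some t => ⟨sl ((1 - t ^ 2) / (1 + t ^ 2)) (2 * t / (1 + t ^ 2)) (-(2 * t / (1 + t ^ 2))) ((1 - t ^ 2) / (1 + t ^ 2)) (by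
        have := hne t; field_simp; ring), by simp [mem_Tp]⟩
  have hf1 : ∀ t, 1 + (f (some t)).1.1 0 0 = 2 / (1 + t ^ 2) := by
    intro t
    have := hne t
    change 1 + (1 - t ^ 2) / (1 + t ^ 2) = _
    field_simp; ring
  have hf2 : ∀ t, (f (some t)).1.1 0 1 = 2 * t / (1 + t ^ 2) := fun t => rfl
  have hf3 : 1 + (f none).1.1 0 0 = 0 := by change 1 + (-1 : F) = 0; ring
  have hbij : Function.Bijective f := by
    constructor
    · intro o o' h
      cases o with
      | none =>
        cases o' with
        | none => rfl
        | some t =>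
          exfalso
          have h3 := hf1 t
          rw [← h, hf3] at h3
          have := hne t
          field_simp at h3
          exact h2' (by linear_combination (-1) * h3)
      | some t =>
        cases o' with
        | none =>
          exfalso
          have h3 := hf1 t
          rw [h, hf3] at h3
          have := hne t
          field_simp at h3
          exact h2' (by linear_combination (-1) * h3)
        | some s =>
          have h3 := hf1 t
          have h4 := hf2 t
          rw [h, hf1 s] at h3
          rw [h, hf2 s] at h4
          have e1 := hne t
          have e2 := hne s
          have h5 : 2 / (1 + s ^ 2) * s = 2 / (1 + s ^ 2) * t := by
            rw [h3]
            nth_rewrite 1 [← h3]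
            linear_combination h4
          have h6 : 2 / (1 + s ^ 2) ≠ 0 := div_ne_zero h2' e2
          rw [mul_left_cancel₀ h6 h5]
    · rintro ⟨g, hg⟩
      have hdet := Tp_det hg
      obtain ⟨g1, g2⟩ := hg
      by_cases ha : 1 + g.1 0 0 = 0
      · refine ⟨none, Subtype.ext ?_⟩
        have hb : g.1 0 1 = 0 := by
          have : g.1 0 1 ^ 2 = 0 := by linear_combination hdet + (1 - g.1 0 0) * ha
          simpa using this
        have ha' : g.1 0 0 = -1 := by linear_combination ha
        change mz = g
        apply sl_ext
        · simp [ha']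
        · simp [hb]
        · have : g.1 1 0 = 0 := by linear_combination g2 - hb
          simp [this]
        · simp [← g1, ha']
      · refine ⟨some (g.1 0 1 / (1 + g.1 0 0)), Subtype.ext ?_⟩
        have h5 := hne (g.1 0 1 / (1 + g.1 0 0))
        have h6 : 1 + (g.1 0 1 / (1 + g.1 0 0)) ^ 2 = 2 / (1 + g.1 0 0) := by
          field_simp; linear_combination hdet
        have e1 : (1 - (g.1 0 1 / (1 + g.1 0 0)) ^ 2) / (1 + (g.1 0 1 / (1 + g.1 0 0)) ^ 2) = g.1 0 0 := by
          rw [h6]; field_simp; linear_combination (-1) * hdet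
        have e2 : 2 * (g.1 0 1 / (1 + g.1 0 0)) / (1 + (g.1 0 1 / (1 + g.1 0 0)) ^ 2) = g.1 0 1 := by
          rw [h6]; field_simp
        apply sl_ext
        · exact e1
        · exact e2
        · refine (congrArg Neg.neg e2).trans ?_
          change - g.1 0 1 = g.1 1 0
          linear_combination (-1) * g2
        · exact e1.trans g1
  rw [← Nat.card_congr (Equiv.ofBijective f hbij), Nat.card_eq_fintype_card, Fintype.card_option]

end tp


section c3
variable {F : Type} [Field F] [Fintype F]

theorem Tp_b {g : SL2 F} (hg : g ∈ (Tp : Subgroup (SL2 F))) (h1 : g ≠ 1) (hz : g ≠ mz) : g.1 0 1 ≠ 0 := by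
  intro hb
  have hdet := Tp_det hg
  obtain ⟨g1, g2⟩ := hg
  have hc : g.1 1 0 = 0 := by linear_combination g2 - hb
  rw [hb] at hdet
  have : g.1 0 0 ^ 2 = 1 := by linear_combination hdet
  rcases sq_eq_one_iff.1 this with h | h
  · apply h1
    apply sl_ext
    · simp [h]
    · simp [hb]
    · simp [hc]
    · simp [← g1, h]
  · apply hz
    apply sl_ext
    · simp [h]
    · simp [hb]
    · simp [hc]
    · simp [← g1, h]

theorem ff_Tp (h2 : ringChar F ≠ 2) (hns : ∀ w : F, w ^ 2 ≠ -1) {g : SL2 F} (k : SL2 F)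
    (hg : k * g * k⁻¹ ∈ (Tp : Subgroup (SL2 F))) (h1 : k * g * k⁻¹ ≠ 1)
    (hz : k * g * k⁻¹ ≠ mz) : ff g = 0 := by
  by_contra hf
  have h2' := two_ne h2
  obtain ⟨w, hw⟩ := ff_sq g hf
  rw [← tr_conj g k] at hw
  have hb := Tp_b hg h1 hz
  have hdet := Tp_det hg
  obtain ⟨g1, g2⟩ := hg
  apply hns (w / (2 * (k * g * k⁻¹).1 0 1))
  rw [← g1] at hw
  field_simp
  linear_combination (-1) * hw + 4 * hdet

theorem Tp_conj (h2 : ringChar F ≠ 2) (x : SL2 F) (hx1 : x.1 1 1 = - x.1 0 0) (hx2 : x.1 1 0 = x.1 0 1)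
    {t t' m : SL2 F} (ht : t ∈ (Tp : Subgroup (SL2 F))) (h1 : t ≠ 1) (hz : t ≠ mz) (ht' : t' ∈ (Tp : Subgroup (SL2 F)))
    (hm : m * t * m⁻¹ = t') : m ∈ (Tp : Subgroup (SL2 F)) ∨ x * m ∈ (Tp : Subgroup (SL2 F)) := by
  have h2' := two_ne h2
  have htr := tr_conj t m
  rw [hm] at htr
  have hb := Tp_b ht h1 hz
  have hd1 := Tp_det ht
  have hd2 := Tp_det ht'
  obtain ⟨g1, g2⟩ := ht
  obtain ⟨g3, g4⟩ := ht'
  have ha : t'.1 0 0 = t.1 0 0 := by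
    apply mul_left_cancel₀ h2'
    linear_combination htr + g3 - g1
  rw [mul_inv_eq_iff_eq_mul] at hm
  have e00 := congrArg (fun g : SL2 F => g.1 0 0) hm
  have e01 := congrArg (fun g : SL2 F => g.1 0 1) hm
  simp only [mul00, mul01, mul10, mul11] at e00 e01
  have hc : t.1 1 0 = - t.1 0 1 := by rw [g2, neg_neg]
  rw [hc, ha] at e00
  rw [← g1, ha] at e01
  have hbb : t'.1 0 1 = t.1 0 1 ∨ t'.1 0 1 = - t.1 0 1 := by
    apply sq_eq_sq_iff_eq_or_eq_neg.1
    rw [ha] at hd2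
    linear_combination hd2 - hd1
  rcases hbb with h | h
  · left
    rw [h] at e00 e01
    constructor
    · apply mul_left_cancel₀ hb; linear_combination e01
    · apply mul_left_cancel₀ hb; linear_combination (-1) * e00
  · right
    rw [h] at e00 e01
    have q1 : m.1 1 1 = - m.1 0 0 := by apply mul_left_cancel₀ hb; linear_combination e01
    have q2 : m.1 1 0 = m.1 0 1 := by apply mul_left_cancel₀ hb; linear_combination (1) * e00
    constructor
    · simp only [mul00, mul11, hx1, hx2, q1, q2]; ring
    · simp only [mul01, mul10, hx1, hx2, q1, q2]; ring

theorem card_shift (T : Subgroup (SL2 F)) (u : SL2 F) :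
    (Finset.univ.filter (fun k : SL2 F => u * k ∈ T)).card = Nat.card T := by
  rw [Nat.card_eq_fintype_card, Fintype.card_subtype]
  refine Finset.card_equiv (Equiv.mulLeft u) fun k => ?_
  simp

theorem Tp_sum (V : FDRep ℂ (SL2 F)) (h2 : ringChar F ≠ 2) (hns : ∀ w : F, w ^ 2 ≠ -1)
    (hNS : NS V ≤ Fintype.card F * (Fintype.card F - 1) * (Fintype.card F - 3)) :
    ∑ t : (Tp : Subgroup (SL2 F)), (if (t : SL2 F) = 1 ∨ (t : SL2 F) = mz then 0 else Complex.normSq (V.character t))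
      ≤ 2 * ((Fintype.card F : ℝ) - 3) := by
  obtain ⟨α, β, hab⟩ := sum_two_sq h2 (-1 : F)
  let x : SL2 F := sl α β β (-α) (by linear_combination (-1) * hab)
  let w : SL2 F → ℝ := fun g => if g ∈ (Tp : Subgroup (SL2 F)) ∧ g ≠ 1 ∧ g ≠ mz then 1 else 0
  let n : SL2 F → ℝ := fun g => Complex.normSq (V.character g)
  have hw1 : ∀ g, w g ≠ 0 → g ∈ (Tp : Subgroup (SL2 F)) ∧ g ≠ 1 ∧ g ≠ mz := by
    intro g hg; by_contra h; exact hg (if_neg h)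
  have hw0 : ∀ g, 0 ≤ w g := fun g => by simp only [w]; split_ifs <;> norm_num
  have hn0 : ∀ g, 0 ≤ n g := fun g => Complex.normSq_nonneg _
  have hS : ∑ t : (Tp : Subgroup (SL2 F)), (if (t : SL2 F) = 1 ∨ (t : SL2 F) = mz then 0 else Complex.normSq (V.character t))
      = ∑ g, w g * n g := by
    rw [← Finset.sum_subtype (Finset.univ.filter (fun g => g ∈ (Tp : Subgroup (SL2 F)))) (by simp)
      (fun t : SL2 F => if t = 1 ∨ t = mz then 0 else Complex.normSq (V.character t)), Finset.sum_filter]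
    refine Finset.sum_congr rfl fun g _ => ?_
    simp only [w, n]
    by_cases hg : g ∈ (Tp : Subgroup (SL2 F))
    · by_cases h1 : g = 1
      · simp [hg, h1]
      · by_cases h2 : g = mz
        · simp [hg, h2]
        · simp [hg, h1, h2]
    · simp [hg]
  rw [hS]
  have hk : ∀ k : SL2 F, ∑ g, w g * n g = ∑ g, w (k⁻¹ * g * k) * n g := by
    intro k
    refine (Fintype.sum_equiv (MulAut.conj k).toEquiv _ _ fun g => ?_)
    have e1 : (MulAut.conj k).toEquiv g = k * g * k⁻¹ := rfl
    have e2 : k⁻¹ * (k * g * k⁻¹) * k = g := by group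
    rw [e1, e2]
    simp only [n, FDRep.char_conj]
  have hcnt : ∀ g, (∑ k, w (k⁻¹ * g * k)) * n g ≤ 2 * (Fintype.card F + 1) * (if ff g = 0 then n g else 0) := by
    intro g
    by_cases hex : ∃ k, w (k⁻¹ * g * k) ≠ 0
    · obtain ⟨k0, hk0⟩ := hex
      obtain ⟨m1, m2, m3⟩ := hw1 _ hk0
      have hff : ff g = 0 := by
        apply ff_Tp h2 hns k0⁻¹ <;> rwa [inv_inv]
      rw [if_pos hff]
      refine mul_le_mul_of_nonneg_right ?_ (hn0 g)
      have hle : ∀ k, w (k⁻¹ * g * k) ≤ (if k0⁻¹ * k ∈ (Tp : Subgroup (SL2 F)) then 1 else 0) +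
          (if x * k0⁻¹ * k ∈ (Tp : Subgroup (SL2 F)) then 1 else 0) := by
        intro k
        by_cases hwk : w (k⁻¹ * g * k) = 0
        · rw [hwk]; positivity
        · obtain ⟨l1, l2, l3⟩ := hw1 _ hwk
          have := Tp_conj h2 x rfl rfl (m := k0⁻¹ * k) l1 l2 l3 m1 (by group)
          rw [← mul_assoc] at this
          have hw' : w (k⁻¹ * g * k) ≤ 1 := by simp only [w]; split_ifs <;> norm_num
          refine hw'.trans ?_
          rcases this with h | h
          · rw [if_pos h]
            have : (0 : ℝ) ≤ (if x * k0⁻¹ * k ∈ (Tp : Subgroup (SL2 F)) then 1 else 0) := by positivity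
            linarith
          · rw [if_pos h]
            have : (0 : ℝ) ≤ (if k0⁻¹ * k ∈ (Tp : Subgroup (SL2 F)) then 1 else 0) := by positivity
            linarith
      refine (Finset.sum_le_sum fun k _ => hle k).trans (le_of_eq ?_)
      rw [Finset.sum_add_distrib, Finset.sum_boole, Finset.sum_boole, card_shift, card_shift, Tp_card h2 hns]
      push_cast; ring
    · push Not at hex
      rw [Finset.sum_eq_zero (fun k _ => hex k), zero_mul]
      have : 0 ≤ (if ff g = 0 then n g else 0) := by split_ifs; exacts [hn0 g, le_rfl]
      positivity
  have hmain : (Fintype.card (SL2 F) : ℝ) * ∑ g, w g * n g ≤ 2 * (Fintype.card F + 1) * NS V := by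
    calc (Fintype.card (SL2 F) : ℝ) * ∑ g, w g * n g = ∑ k : SL2 F, ∑ g, w g * n g := by
          rw [Finset.sum_const, Finset.card_univ, nsmul_eq_mul]
      _ = ∑ k : SL2 F, ∑ g, w (k⁻¹ * g * k) * n g := Finset.sum_congr rfl fun k _ => hk k
      _ = ∑ g, (∑ k, w (k⁻¹ * g * k)) * n g := by
          rw [Finset.sum_comm]; exact Finset.sum_congr rfl fun g _ => by rw [Finset.sum_mul]
      _ ≤ ∑ g, 2 * (Fintype.card F + 1) * (if ff g = 0 then n g else 0) := Finset.sum_le_sum fun g _ => hcnt g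
      _ = _ := by rw [← Finset.mul_sum]; rfl
  have hq1 := Fintype.one_lt_card (α := F)
  rw [card_SL2] at hmain
  push_cast [Nat.cast_sub hq1.le] at hmain
  have hq1' : (1 : ℝ) < Fintype.card F := by exact_mod_cast hq1
  have hpos : (0 : ℝ) < (Fintype.card F + 1) * ((Fintype.card F - 1) * Fintype.card F) := by
    have : (0 : ℝ) < Fintype.card F - 1 := by linarith
    positivity
  refine le_of_mul_le_mul_left ?_ hpos
  refine hmain.trans ?_
  have : 2 * ((Fintype.card F : ℝ) + 1) * NS V ≤ 2 * ((Fintype.card F : ℝ) + 1) * (Fintype.card F * (Fintype.card F - 1) * (Fintype.card F - 3)) := by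
    gcongr
  refine this.trans (le_of_eq (by ring))

theorem c_le (V : FDRep ℂ (SL2 F)) (h2 : ringChar F ≠ 2) (hns : ∀ w : F, w ^ 2 ≠ -1)
    (hd : Module.finrank ℂ V = Fintype.card F - 1) (hz : V.character mz = V.character 1)
    (hS : ∑ t : (Tp : Subgroup (SL2 F)), (if (t : SL2 F) = 1 ∨ (t : SL2 F) = mz then 0 else Complex.normSq (V.character t))
      ≤ 2 * ((Fintype.card F : ℝ) - 3)) : ‖V.character JJ‖ ≤ 2 := by
  have hcyc := Tp_cyclic (F := F) hns
  obtain ⟨T, hT⟩ : ∃ T : Subgroup (SL2 F), T = Tp := ⟨_, rfl⟩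
  rw [← hT] at hcyc
  let _ : CommGroup T := 
    { (inferInstance : Group T) with
      mul_comm := fun a b => (IsCyclic.isMulCommutative (α := T)).is_comm.comm a b }
  have hcard : Fintype.card (Additive T) = Fintype.card F + 1 := by
    rw [Fintype.card_congr Additive.toMul, ← Nat.card_eq_fintype_card, hT, Tp_card h2 hns]
  obtain ⟨n, h1, h3, -⟩ := fa_char (A := Additive T) V T.subtype
  have hzT : mz ∈ T := by rw [hT]; simp [mem_Tp]
  have hJT : JJ ∈ T := by rw [hT]; simp [mem_Tp]
  let zA : Additive T := Additive.ofMul ⟨mz, hzT⟩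
  let jA : Additive T := Additive.ofMul ⟨JJ, hJT⟩
  have hzA : zA + zA = 0 := by
    change Additive.ofMul ((⟨mz, hzT⟩ : T) * ⟨mz, hzT⟩) = Additive.ofMul 1
    congr 1
    exact Subtype.ext mz_mul_mz
  have hz0 : zA ≠ 0 := by
    intro h
    have : (⟨mz, hzT⟩ : T) = 1 := Additive.ofMul.injective h
    exact (one_ne_mz h2).symm (congrArg Subtype.val this)
  let f : Additive T → ℂ := fun a => V.character (T.subtype a.toMul)
  let D : Additive T → ℂ := fun a => Fintype.card (Additive T) * ((if a = 0 then 1 else 0) + (if a = zA then 1 else 0)) - f a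
  let δ : AddChar (Additive T) ℂ → ℂ := fun ψ => 1 + ψ zA - n ψ
  have hD : ∀ a, D a = ∑ ψ, δ ψ * ψ a := by
    intro a
    have h4 : f a = ∑ ψ, (n ψ : ℂ) * ψ a := h3 a
    have h5 : ∑ ψ : AddChar (Additive T) ℂ, ψ a = if a = 0 then (Fintype.card (Additive T) : ℂ) else 0 := 
      AddChar.sum_apply_eq_ite a
    have h6 : ∑ ψ : AddChar (Additive T) ℂ, ψ (zA + a) = if zA + a = 0 then (Fintype.card (Additive T) : ℂ) else 0 := 
      AddChar.sum_apply_eq_ite _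
    have h7 : zA + a = 0 ↔ a = zA := by
      constructor
      · intro h; rw [← hzA] at h; exact add_left_cancel h
      · rintro rfl; exact hzA
    simp only [h7] at h6
    simp only [δ, sub_mul, add_mul, one_mul, Finset.sum_sub_distrib, Finset.sum_add_distrib, ← AddChar.map_add_eq_mul]
    rw [← h4, h5, h6]
    simp only [D, mul_add, mul_ite, mul_one, mul_zero]
  have hpar := fourier_parseval δ D hD
  have hq1 := Fintype.one_lt_card (α := F)
  have hd' : V.character 1 = Fintype.card F - 1 := by
    rw [FDRep.char_one, hd, Nat.cast_sub hq1.le]; simp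
  have hf0 : f 0 = Fintype.card F - 1 := by rw [← hd']; rfl
  have hfz : f zA = Fintype.card F - 1 := by rw [← hd', ← hz]; rfl
  have hLHS : ∑ a, Complex.normSq (D a) ≤ 2 * (Fintype.card F + 1 : ℝ) := by
    have e1 : ∀ a, Complex.normSq (D a) = (if a ∈ ({0, zA} : Finset (Additive T)) then 4 else 0) +
       (if ((a.toMul : T) : SL2 F) = 1 ∨ ((a.toMul : T) : SL2 F) = mz then 0 else Complex.normSq (V.character (a.toMul : T))) := by
      intro a
      by_cases ha : a = 0
      · subst ha
        have hD0 : D 0 = 2 := by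
          change (Fintype.card (Additive T) : ℂ) * ((if (0 : Additive T) = 0 then 1 else 0) + (if (0 : Additive T) = zA then 1 else 0)) - f 0 = 2
          rw [hf0, hcard, if_pos rfl, if_neg hz0.symm]; push_cast; ring
        rw [hD0]
        simp; norm_num
      · by_cases ha' : a = zA
        · subst ha'
          have hD0 : D zA = 2 := by
            change (Fintype.card (Additive T) : ℂ) * ((if zA = 0 then 1 else 0) + (if zA = zA then 1 else 0)) - f zA = 2
            rw [hfz, hcard, if_pos rfl, if_neg hz0]; push_cast; ring
          rw [hD0]
          have e2 : ((zA.toMul : T) : SL2 F) = mz := rfl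
          simp [e2]; norm_num
        · have h8 : ((a.toMul : T) : SL2 F) ≠ 1 := fun h => ha (Additive.toMul.injective (Subtype.ext h))
          have h9 : ((a.toMul : T) : SL2 F) ≠ mz := fun h => ha' (Additive.toMul.injective (Subtype.ext h))
          simp [D, ha, ha', h8, h9, f]
    rw [Finset.sum_congr rfl (fun a _ => e1 a), Finset.sum_add_distrib, ← Finset.sum_filter,
      Finset.filter_mem_eq_inter, Finset.univ_inter, Finset.sum_pair hz0.symm]
    have e3 : ∑ a : Additive T, (if ((a.toMul : T) : SL2 F) = 1 ∨ ((a.toMul : T) : SL2 F) = mz then 0 else Complex.normSq (V.character (a.toMul : T))) ≤ 2 * ((Fintype.card F : ℝ) - 3) := by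
      subst hT
      refine le_trans (le_of_eq ?_) hS
      exact Fintype.sum_equiv Additive.toMul _ _ fun _ => rfl
    linarith
  rw [hpar, hcard] at hLHS
  have hδ : ∑ ψ, Complex.normSq (δ ψ) ≤ 2 := by
    have : (0 : ℝ) < Fintype.card F + 1 := by positivity
    push_cast at hLHS
    nlinarith
  have hint : ∀ ψ, ‖δ ψ‖ ≤ Complex.normSq (δ ψ) := by
    intro ψ
    obtain ⟨k, hk⟩ : ∃ k : ℤ, δ ψ = k := by
      have h8 : ψ zA * ψ zA = 1 := by rw [← AddChar.map_add_eq_mul, hzA, AddChar.map_zero_eq_one]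
      rcases mul_self_eq_one_iff.1 h8 with h9 | h9
      · exact ⟨2 - n ψ, by simp only [δ, h9]; push_cast; ring⟩
      · exact ⟨- n ψ, by simp only [δ, h9]; push_cast; ring⟩
    rw [hk, Complex.normSq_eq_norm_sq, Complex.norm_intCast]
    have : |k| ≤ |k| ^ 2 := by
      rcases eq_or_ne k 0 with rfl | h
      · simp
      · have := Int.one_le_abs h; nlinarith
    exact_mod_cast this
  have hψ : ∀ (ψ : AddChar (Additive T) ℂ) a, ‖ψ a‖ = 1 := fun ψ a => AddChar.norm_apply ψ a
  have hJ : D jA = - V.character JJ := by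
    have j0 : jA ≠ 0 := by
      intro h
      have h8 : (⟨JJ, hJT⟩ : T) = 1 := Additive.ofMul.injective h
      have h9 := congrArg (fun g : T => g.1.1 1 0) h8
      simp at h9
    have jz : jA ≠ zA := by
      intro h
      have h8 : (⟨JJ, hJT⟩ : T) = ⟨mz, hzT⟩ := Additive.ofMul.injective h
      have h9 := congrArg (fun g : T => g.1.1 1 0) h8
      simp at h9
    simp only [D, if_neg j0, if_neg jz, add_zero, mul_zero, zero_sub]
    rfl
  rw [← norm_neg, ← hJ, hD]
  calc ‖∑ ψ, δ ψ * ψ jA‖ ≤ ∑ ψ, ‖δ ψ * ψ jA‖ := norm_sum_le _ _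
    _ = ∑ ψ, ‖δ ψ‖ := Finset.sum_congr rfl fun ψ _ => by rw [norm_mul, hψ, mul_one]
    _ ≤ ∑ ψ, Complex.normSq (δ ψ) := Finset.sum_le_sum fun ψ _ => hint ψ
    _ ≤ 2 := hδ

end c3


section c3b
variable {F : Type} [Field F] [Fintype F] (V : FDRep ℂ (SL2 F)) (P : Sylow 2 (SL2 F))

theorem setup3 (h2 : ringChar F ≠ 2) (hns : ∀ w : F, w ^ 2 ≠ -1) (hq : Fintype.card F % 4 = 3) :
    ∃ (C : Subgroup (P : Subgroup (SL2 F))) (z : (P : Subgroup (SL2 F))), (z : SL2 F) = mz ∧ GQ C z ∧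
      Nat.card C = 2 ^ (Fintype.card F + 1).factorization 2 ∧ Nat.card C ∣ Fintype.card F + 1 ∧
      (∀ y : (P : Subgroup (SL2 F)), y ∉ C → V.character y = V.character JJ) ∧
      (∀ y : (P : Subgroup (SL2 F)), y ≠ 1 → y ≠ z → ff (y : SL2 F) = 0) ∧
      (∑ x : C, (if (x : (P : Subgroup (SL2 F))) = 1 ∨ (x : (P : Subgroup (SL2 F))) = z then 0 else
      Complex.normSq (V.character x)) ≤ ∑ t : (Tp : Subgroup (SL2 F)), (if (t : SL2 F) = 1 ∨ (t : SL2 F) = mz then 0 else Complex.normSq (V.character t))) := by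
  obtain ⟨r, hr1, hr2, hr3⟩ := odd_arith3 hq
  have h2' := two_ne h2
  obtain ⟨α, β, hab⟩ := sum_two_sq h2 (-1 : F)
  let x : SL2 F := sl α β β (-α) (by linear_combination (-1) * hab)
  have x00 : x.1 0 0 = α := rfl
  have x01 : x.1 0 1 = β := rfl
  have x10 : x.1 1 0 = β := rfl
  have x11 : x.1 1 1 = -α := rfl
  obtain ⟨k, C, z, hz, h, hC, hcard, hdvd⟩ := lemS P Tp (Tp_cyclic hns) mz x
    (by simp [mem_Tp]) (one_ne_mz h2).symm mz_mul_mz (by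
      rintro ⟨h3, h4⟩
      rw [x00, x11] at h3
      rw [x01, x10] at h4
      have h5 : α = 0 := by
        apply mul_left_cancel₀ h2'; linear_combination h3
      have h6 : β = 0 := by
        apply mul_left_cancel₀ h2'; linear_combination h4
      rw [h5, h6] at hab
      simp at hab) (by
      apply sl_ext <;> simp only [mul00, mul01, mul10, mul11, x00, x01, x10, x11, mz00, mz01, mz10, mz11]
      · linear_combination hab
      · ring
      · ring
      · linear_combination hab) (by
      intro t ht
      have hdet := Tp_det ht
      obtain ⟨h3, h4⟩ := ht
      rw [mul_inv_eq_iff_eq_mul]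
      have h5 : t.1 1 0 = - t.1 0 1 := by rw [h4, neg_neg]
      apply sl_ext <;> simp only [mul00, mul01, mul10, mul11, x00, x01, x10, x11, inv00, inv01, inv10, inv11, ← h3, h5] <;> ring) mz_comm r (by rw [card_SL2', Tp_card h2 hns, hr1]) hr2 (by rw [card_SL2']; exact hr3)
  rw [card_SL2', hr1] at hcard
  have hcard := cardC_eq (by omega) hr2 hcard
  rw [Tp_card h2 hns] at hdvd
  have htr : ∀ y : (P : Subgroup (SL2 F)), y ∉ C → (y : SL2 F).1 0 0 + (y : SL2 F).1 1 1 = 0 := by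
    intro y hy
    apply tr_sq
    rw [← hz, ← h.ysq y hy]; rfl
  have hc1 : ∀ (k y : SL2 F), k * y * k⁻¹ = 1 → y = 1 := by
    intro k y h
    exact conj_eq_one_iff.1 h
  have hcz : ∀ (k y : SL2 F), k * y * k⁻¹ = mz → y = mz := by
    intro k y h
    have : y = k⁻¹ * (k * y * k⁻¹) * k := by group
    rw [this, h, mul_assoc, mz_comm]; group
  refine ⟨C, z, hz, h, hcard, hdvd, fun y hy => char_tr0 V h2 _ (htr y hy), ?_, ?_⟩
  · intro y hy1 hyz
    by_cases hy : y ∈ C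
    · refine ff_Tp h2 hns k ((hC y).1 hy) (fun h3 => hy1 (Subtype.ext (hc1 _ _ h3))) (fun h3 => hyz (Subtype.ext ?_))
      rw [hz]; exact hcz _ _ h3
    · obtain ⟨m, hm⟩ := tr0_conj h2 _ (htr y hy)
      have h3 : m⁻¹ * (y : SL2 F) * m⁻¹⁻¹ = JJ := by rw [hm]; group
      refine ff_Tp h2 hns m⁻¹ ?_ ?_ ?_
      · rw [h3]; simp [mem_Tp]
      · rw [h3]; intro h8
        have h9 := congrArg (fun g : SL2 F => g.1 1 0) h8
        simp at h9
      · rw [h3]; intro h8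
        have h9 := congrArg (fun g : SL2 F => g.1 1 0) h8
        simp at h9
  · let e : C → (Tp : Subgroup (SL2 F)) := fun y => ⟨k * ((y : (P : Subgroup (SL2 F))) : SL2 F) * k⁻¹, (hC y).1 y.2⟩
    have he : Function.Injective e := by
      intro y y' hy
      have h3 := congrArg Subtype.val hy
      simp only [e] at h3
      exact Subtype.ext (Subtype.ext (mul_left_cancel (mul_right_cancel h3)))
    let φ : ↥(Tp : Subgroup (SL2 F)) → ℝ := fun t => if (t : SL2 F) = 1 ∨ (t : SL2 F) = mz then 0 else Complex.normSq (V.character t)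
    have hφ : ∀ t, 0 ≤ φ t := by
      intro t; simp only [φ]; split_ifs; exacts [le_rfl, Complex.normSq_nonneg _]
    change _ ≤ ∑ t, φ t
    calc _ = ∑ y : C, φ (e y) := by
          refine Finset.sum_congr rfl fun y _ => ?_
          simp only [φ, e, FDRep.char_conj]
          refine if_congr (or_congr ?_ ?_) rfl rfl
          · constructor
            · intro h3; rw [h3]; simp
            · intro h3; exact Subtype.ext (hc1 _ _ h3)
          · constructor
            · intro h3; rw [h3, hz, ← mz_comm]; group
            · intro h3; apply Subtype.ext; rw [hz]; exact hcz _ _ h3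
      _ = ∑ t ∈ Finset.univ.image e, φ t := by
          rw [Finset.sum_image (fun a _ b _ hh => he hh)]
      _ ≤ _ := Finset.sum_le_sum_of_subset_of_nonneg (Finset.subset_univ _) fun t _ _ => hφ t

theorem case3 (hV : CategoryTheory.Simple V) (h2 : ringChar F ≠ 2) (hq : Fintype.card F % 4 = 3) :
    SumInducedProperty 2 (P : Subgroup (SL2 F)) V.character (Module.finrank ℂ V) := by
  have hns : ∀ w : F, w ^ 2 ≠ -1 := by
    intro w hw
    have : IsSquare (-1 : F) := ⟨w, by rw [← hw, sq]⟩
    exact FiniteField.isSquare_neg_one_iff.1 this hq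
  obtain ⟨ℓ, N, hd, -, hT, hcase⟩ := class_data V hV
  obtain ⟨ζ, hζ, hzg⟩ := exists_zeta V hV
  obtain ⟨C, z, hz, h, hcard, hdvd, hoff, hall, hsum⟩ := setup3 V P h2 hns hq
  have hz1 : V.character z = ζ * V.character 1 := by rw [hz]; simpa using hzg 1
  have hvan : (∀ g, ff g = 0 → V.character g = 0) → (Module.finrank ℂ V = Fintype.card F + 1 ∨ 2 * Module.finrank ℂ V = Fintype.card F + 1) →
      SumInducedProperty 2 (P : Subgroup (SL2 F)) V.character (Module.finrank ℂ V) := by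
    intro h4 h5
    exact vcase P V h (Fintype.card F + 1) (by omega) hcard h5 ζ hζ hz1 fun x h6 h7 => h4 _ (hall x h6 h7)
  rcases hcase with ⟨hN, hl⟩ | ⟨-, hN, hl | ⟨hl, hv⟩⟩ | ⟨hN, ⟨hl, hNS⟩ | ⟨hl, -⟩ | ⟨hl, hv⟩⟩
  · apply case_triv; omega
  · apply case_triv; omega
  · apply hvan hv; right; omega
  · have hdq : Module.finrank ℂ V = Fintype.card F - 1 := by omega
    have hS := Tp_sum V h2 hns (hNS h2)
    have hCle : Nat.card C ≤ Fintype.card F + 1 := Nat.le_of_dvd (by omega) hdvd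
    refine Dcase P V h (by omega) ζ hζ (by intro g; rw [hz]; exact hzg g) (V.character JJ) hoff ?_ (2 * ((Fintype.card F : ℝ) - 3)) ?_ ?_
    · rcases hζ with rfl | rfl
      · exact c_le V h2 hns hdq (by simpa using hzg 1) hS
      · have h3 := hzg JJ
        rw [char_tr0 V h2 (mz * JJ) (by simp)] at h3
        have h4 : V.character JJ = 0 := by linear_combination h3 / 2
        rw [h4]; simp
    · have hh := le_trans hsum hS
      refine le_trans (le_of_eq ?_) hh
      congr!
    · rw [hdq, Nat.cast_sub (by omega)]
      have h8 : (Nat.card C : ℝ) ≤ Fintype.card F + 1 := by exact_mod_cast hCle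
      have h9 : (3 : ℝ) ≤ Fintype.card F := by
        have : 3 ≤ Fintype.card F := by omega
        exact_mod_cast this
      push_cast
      have h10 : (Nat.card C : ℝ) * (2 * ((Fintype.card F : ℝ) - 3)) ≤ (Fintype.card F + 1) * (2 * ((Fintype.card F : ℝ) - 3)) :=
        mul_le_mul_of_nonneg_right h8 (by linarith)
      nlinarith
  · apply case_triv; omega
  · apply hvan hv; left; omega

end c3b


theorem strong_form_for_SL2
    (q : ℕ) (hq : IsPrimePow q)
    (F : Type) [Field F] [Fintype F] (hF : Fintype.card F = q)
    (p : ℕ) [Fact p.Prime]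
    (P : Sylow p (Matrix.SpecialLinearGroup (Fin 2) F)) :
    ∀ (V : FDRep ℂ (Matrix.SpecialLinearGroup (Fin 2) F)), CategoryTheory.Simple V →
      SumInducedProperty p (P : Subgroup (Matrix.SpecialLinearGroup (Fin 2) F))
        V.character (Module.finrank ℂ V) := by
  intro V hV
  by_cases hpd : p ∣ Module.finrank ℂ V
  swap
  · exact case_triv p _ V hpd
  have hpp : p.Prime := Fact.out
  have hq1 := Fintype.one_lt_card (α := F)
  by_cases hp2 : p = 2
  · subst hp2
    by_cases h2 : ringChar F = 2
    · have hev : Fintype.card F % 2 = 0 := FiniteField.even_card_of_char_two h2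
      obtain ⟨ℓ, N, hd, -, hT, hcase⟩ := class_data V hV
      rcases hcase with ⟨hN, hl⟩ | ⟨h, -⟩ | ⟨hN, ⟨hl, -⟩ | ⟨hl, hv⟩ | ⟨hl, -⟩⟩
      · omega
      · exact absurd h2 h
      · omega
      · exact caseU V P (by omega) (by omega) hv
      · omega
    · have hodd : Fintype.card F % 2 = 1 := FiniteField.odd_card_of_char_ne_two h2
      have : Fintype.card F % 4 = 1 ∨ Fintype.card F % 4 = 3 := by omega
      rcases this with h | h
      · exact case1 V P hV h2 h
      · exact case3 V P hV h2 h
  · obtain ⟨ℓ, N, hd, -, hT, hcase⟩ := class_data V hV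
    have hTv : ℓ = 0 → ∀ a : Fˣ, a ^ 2 ≠ 1 → V.character (tt a) = 0 := by
      rintro rfl a ha
      simpa using hT a ha
    rcases hcase with ⟨hN, hl⟩ | ⟨-, hN, hl | ⟨hl, hv⟩⟩ | ⟨hN, ⟨hl, -⟩ | ⟨hl, hv⟩ | ⟨hl, hv⟩⟩
    · have : Module.finrank ℂ V = 1 := by omega
      rw [this] at hpd
      exact absurd (Nat.dvd_one.1 hpd) hpp.ne_one
    · have h3 : Module.finrank ℂ V ∣ Fintype.card F - 1 := ⟨2, by omega⟩
      exact caseT V P h3 hp2 (hpd.trans h3) (hTv hl)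
    · have h3 : Module.finrank ℂ V ∣ Fintype.card F + 1 := ⟨2, by omega⟩
      exact caseE V P h3 hp2 (hpd.trans h3) hv
    · have h3 : Module.finrank ℂ V ∣ Fintype.card F - 1 := ⟨1, by omega⟩
      exact caseT V P h3 hp2 (hpd.trans h3) (hTv hl)
    · have h3 : Module.finrank ℂ V = Fintype.card F := by omega
      exact caseU V P h3 (h3 ▸ hpd) hv
    · have h3 : Module.finrank ℂ V ∣ Fintype.card F + 1 := ⟨1, by omega⟩
      exact caseE V P h3 hp2 (hpd.trans h3) hv
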